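/- For every λ ∈ [0, λ*(Ω,p)) the problem (P)_λ admits exactly one classical solution (α, ψ): there exists a classical solution, and any two classical solutions of (P)_λ coincide. -/

import Mathlib

/-! Write `G` for the solution operator of `-Δu = h` in `Ω`, `u = 0` off `Ω`. Extending by zero,
classical solutions of `(P)_λ` correspond to solutions of the fixed point problem
`u = G([α + λu]₊^p)`, `∫_Ω [α + λu]₊^p = 1` in the Banach space of bounded continuous functions
(`FixP`, `FixP.solP`, `exists_fixP`), and this problem is followed in `λ`, starting from `λ = 0`,
where it has exactly one solution.

*The Green operator.* Almost-minimisers of the Dirichlet energy among test functions converge in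
`L²` to a weak solution (`exists_weakSol`), which avoids Sobolev spaces. Two radial kernels
`η`, `ζ` with `∂ₜ η_t = Δ(t ζ_t)` give the mean value identity
`u = η_t * u + ∫₀ᵗ s (ζ_s * h) ds` for distributional solutions; together with barriers built on
exterior balls it yields a Lipschitz representative (`exists_dirichlet`), interior `C²` regularity
for Lipschitz data (`DS.classical`) and uniqueness (`dirichlet_unique`). Hence `G` exists and is
compact (`exists_green`, `IsGreen.compact`).

*Compactness.* If `0 ≤ h ≤ K` has mass at most one, then `G h ≤ C K^θ` as soon as `N(1-θ) < 2`
(`IsGreen.bound`). Subcriticality of `p` lets one choose `θ` with also `pθ < 1`, so that solutions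
are bounded uniformly for `λ` in a bounded interval, and form a compact set (`fixP_compact`).

*Stability.* The inequality expressing `σ₁ > 0` extends from test functions to the range of `G`
(`IsGreen.stab`).

*The case `p > 1`.* The nonlinearity is `C¹`, and stability makes the linearization injective
(`lin_injective`), hence invertible because it is the identity minus a compact operator. The
implicit function theorem gives a local branch through every solution (`FixP.branch`); by
compactness the number of solutions, one at `λ = 0`, remains one (`continuation`).

*The case `p = 1`.* Now `[t]₊` is not differentiable, but the weight `ρ_λ^{1/q}` is identically `1`
and `σ₁ > 0` is a spectral gap `μ > λ` for functions modulo constants. It makes the Picard map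
`f ↦ [α + λ G f]₊`, with `α` fixed by the mass constraint, an `L²` contraction
(`picard_contraction`). This gives uniqueness, and existence for all `λ' < μ`; the set of
parameters with a solution is thus open to the right and closed.
-/

open MeasureTheory Set Filter

noncomputable section

abbrev Euc (N : ℕ) := EuclideanSpace ℝ (Fin N)

/-- The Laplacian as the sum of second partial derivatives. -/
def lap {N : ℕ} (f : Euc N → ℝ) (x : Euc N) : ℝ :=
  ∑ i : Fin N,
    fderiv ℝ (fun y => fderiv ℝ f y (EuclideanSpace.single i 1)) x (EuclideanSpace.single i 1)

/-- A bounded domain of class `C³`, described by a `C³` defining function. -/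
def IsC3Domain {N : ℕ} (Ω : Set (Euc N)) : Prop :=
  IsOpen Ω ∧ IsConnected Ω ∧ Bornology.IsBounded Ω ∧
    ∃ F : Euc N → ℝ, ContDiff ℝ 3 F ∧ Ω = {x | F x < 0} ∧
      ∀ x ∈ frontier Ω, fderiv ℝ F x ≠ 0

/-- `ρ_λ = [α+λψ]₊^p`. -/
def rho {N : ℕ} (p lam α : ℝ) (ψ : Euc N → ℝ) (x : Euc N) : ℝ :=
  (max (α + lam * ψ x) 0) ^ p

/-- `ρ_λ^{1/q} = [α+λψ]₊^{p-1}`. -/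
def rhoq {N : ℕ} (p lam α : ℝ) (ψ : Euc N → ℝ) (x : Euc N) : ℝ :=
  (max (α + lam * ψ x) 0) ^ (p - 1)

/-- `(α, ψ)` is a classical solution of the constrained problem `(P)_λ` on `Ω`. -/
def SolP {N : ℕ} (Ω : Set (Euc N)) (p lam α : ℝ) (ψ : Euc N → ℝ) : Prop :=
  ContinuousOn ψ (closure Ω) ∧ ContDiffOn ℝ 2 ψ Ω ∧
    (∀ x ∈ frontier Ω, ψ x = 0) ∧
    (∀ x ∈ Ω, -lap ψ x = rho p lam α ψ x) ∧
    ∫ x in Ω, rho p lam α ψ x = 1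

/-- The weighted average `⟨φ⟩_λ`. -/
def avgl {N : ℕ} (Ω : Set (Euc N)) (p lam α : ℝ) (ψ φ : Euc N → ℝ) : ℝ :=
  (∫ x in Ω, rhoq p lam α ψ x * φ x) / ∫ x in Ω, rhoq p lam α ψ x

/-- `[φ]_λ = φ - ⟨φ⟩_λ`. -/
def brk {N : ℕ} (Ω : Set (Euc N)) (p lam α : ℝ) (ψ φ : Euc N → ℝ) (x : Euc N) : ℝ :=
  φ x - avgl Ω p lam α ψ φ

/-- `φ ∈ C_c^∞(Ω)`. -/
def TestFun {N : ℕ} (Ω : Set (Euc N)) (φ : Euc N → ℝ) : Prop :=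
  ContDiff ℝ (⊤ : ℕ∞) φ ∧ HasCompactSupport φ ∧ tsupport φ ⊆ Ω

/-- `∫_Ω ρ_λ^{1/q} [φ]_λ²`. -/
def wdenom {N : ℕ} (Ω : Set (Euc N)) (p lam α : ℝ) (ψ φ : Euc N → ℝ) : ℝ :=
  ∫ x in Ω, rhoq p lam α ψ x * brk Ω p lam α ψ φ x ^ 2

/-- The Rayleigh-type quotient for the linearized problem. -/
def rayleigh {N : ℕ} (Ω : Set (Euc N)) (p lam α : ℝ) (ψ φ : Euc N → ℝ) : ℝ :=
  ((∫ x in Ω, ‖fderiv ℝ φ x‖ ^ 2) - lam * p * wdenom Ω p lam α ψ φ) / wdenom Ω p lam α ψ φ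

/-- The weighted first eigenvalue `σ₁(α,ψ)`. -/
def sigma1 {N : ℕ} (Ω : Set (Euc N)) (p lam α : ℝ) (ψ : Euc N → ℝ) : ℝ :=
  sInf {s | ∃ φ : Euc N → ℝ, TestFun Ω φ ∧ 0 < wdenom Ω p lam α ψ φ ∧
    s = rayleigh Ω p lam α ψ φ}

/-- The stability threshold `λ*(Ω,p)`. -/
def lamStar {N : ℕ} (Ω : Set (Euc N)) (p : ℝ) : ℝ :=
  sSup {lb : ℝ | 0 < lb ∧ ∀ lam α ψ, 0 ≤ lam → lam < lb → SolP Ω p lam α ψ →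
    0 < sigma1 Ω p lam α ψ}

/-- The positivity threshold `λ₊(Ω,p)`. -/
def lamPlusD {N : ℕ} (Ω : Set (Euc N)) (p : ℝ) : ℝ :=
  sSup {d : ℝ | 0 < d ∧ ∀ lam α ψ, 0 ≤ lam → lam < d → SolP Ω p lam α ψ → 0 < α}

/-- The Sobolev-type constant `Λ(Ω,t)`. -/
def LambdaC {N : ℕ} (Ω : Set (Euc N)) (t : ℝ) : ℝ :=
  sInf {s : ℝ | ∃ w : Euc N → ℝ, TestFun Ω w ∧ w ≠ 0 ∧
    s = (∫ x in Ω, ‖fderiv ℝ w x‖ ^ 2) / (∫ x in Ω, |w x| ^ t) ^ (2 / t)}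

open Topology
open scoped BoundedContinuousFunction

/-! ### Radial functions, the Laplacian and integration by parts -/

lemma hasFDerivAt_sqdist {N : ℕ} (x z : Euc N) :
    HasFDerivAt (fun y : Euc N => ‖y - x‖ ^ 2) (2 • innerSL ℝ (z - x)) z := by
  have h : HasFDerivAt (fun y : Euc N => y - x) (ContinuousLinearMap.id ℝ (Euc N)) z :=
    (hasFDerivAt_id z).sub_const x
  exact h.norm_sq

lemma inner_single_one {N : ℕ} (v : Euc N) (i : Fin N) :
    inner ℝ v (EuclideanSpace.single i (1 : ℝ)) = v i := by
  rw [EuclideanSpace.inner_single_right]; simp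

lemma hasFDerivAt_radial {N : ℕ} {f f1 : ℝ → ℝ} (hf : ∀ s, HasDerivAt f (f1 s) s) (x z : Euc N) :
    HasFDerivAt (fun y : Euc N => f (‖y - x‖ ^ 2))
      (f1 (‖z - x‖ ^ 2) • (2 • innerSL ℝ (z - x))) z :=
  (hf _).comp_hasFDerivAt z (hasFDerivAt_sqdist x z)

lemma fderiv_radial {N : ℕ} {f f1 : ℝ → ℝ} (hf : ∀ s, HasDerivAt f (f1 s) s) (x z : Euc N)
    (i : Fin N) :
    fderiv ℝ (fun y : Euc N => f (‖y - x‖ ^ 2)) z (EuclideanSpace.single i 1) =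
      f1 (‖z - x‖ ^ 2) * (2 * (z - x) i) := by
  rw [(hasFDerivAt_radial hf x z).fderiv]
  simp only [smul_apply, innerSL_apply_apply, inner_single_one, smul_eq_mul,
    nsmul_eq_mul]
  norm_num

lemma hasFDerivAt_coord {N : ℕ} (x z : Euc N) (i : Fin N) :
    HasFDerivAt (fun y : Euc N => (y - x) i) (EuclideanSpace.proj (𝕜 := ℝ) i) z := by
  have h := ((EuclideanSpace.proj (𝕜 := ℝ) i : Euc N →L[ℝ] ℝ).hasFDerivAt (x := z)).sub_const (x i)
  exact h

/-- The Laplacian of a radial function `f(|y - x|²)`. -/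
lemma lap_radial {N : ℕ} {f f1 f2 : ℝ → ℝ} (hf : ∀ s, HasDerivAt f (f1 s) s)
    (hf1 : ∀ s, HasDerivAt f1 (f2 s) s) (x z : Euc N) :
    lap (fun y : Euc N => f (‖y - x‖ ^ 2)) z =
      4 * ‖z - x‖ ^ 2 * f2 (‖z - x‖ ^ 2) + 2 * N * f1 (‖z - x‖ ^ 2) := by
  have key : ∀ i : Fin N, fderiv ℝ (fun y => fderiv ℝ (fun y : Euc N => f (‖y - x‖ ^ 2)) y
      (EuclideanSpace.single i 1)) z (EuclideanSpace.single i 1) =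
      4 * f2 (‖z - x‖ ^ 2) * ((z - x) i) ^ 2 + 2 * f1 (‖z - x‖ ^ 2) := by
    intro i
    have e : (fun y => fderiv ℝ (fun y : Euc N => f (‖y - x‖ ^ 2)) y
      (EuclideanSpace.single i 1)) = fun y => f1 (‖y - x‖ ^ 2) * (2 * (y - x) i) := by
      funext y; exact fderiv_radial hf x y i
    rw [e]
    have h := (hasFDerivAt_radial hf1 x z).fun_mul ((hasFDerivAt_coord x z i).const_mul 2)
    rw [h.fderiv]
    simp only [add_apply, smul_apply, innerSL_apply_apply,
      inner_single_one, smul_eq_mul, nsmul_eq_mul]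
    simp
    ring
  unfold lap
  rw [Finset.sum_congr rfl (fun i _ => key i), Finset.sum_add_distrib, ← Finset.mul_sum,
    EuclideanSpace.norm_sq_eq]
  simp
  ring

/-- A function continuous on `U` times a continuous function compactly supported in `U`. -/
lemma continuous_mul_of_tsupport {N : ℕ} {U : Set (Euc N)} (hU : IsOpen U) {f g : Euc N → ℝ}
    (hf : ContinuousOn f U) (hg : Continuous g) (hgs : tsupport g ⊆ U) :
    Continuous (fun x => f x * g x) := by
  rw [continuous_iff_continuousAt]
  intro x
  by_cases hx : x ∈ U
  · exact (hf.continuousAt (hU.mem_nhds hx)).mul hg.continuousAt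
  · have h0 : (fun x => f x * g x) =ᶠ[𝓝 x] fun _ => 0 := by
      filter_upwards [(isClosed_tsupport g).isOpen_compl.mem_nhds (fun h => hx (hgs h))] with y hy
      rw [image_eq_zero_of_notMem_tsupport hy, mul_zero]
    exact continuousAt_const.congr h0.symm

lemma integrable_mul_of_tsupport {N : ℕ} {U : Set (Euc N)} (hU : IsOpen U) {f g : Euc N → ℝ}
    (hf : ContinuousOn f U) (hg : Continuous g) (hgc : HasCompactSupport g)
    (hgs : tsupport g ⊆ U) : Integrable (fun x => f x * g x) :=
  (continuous_mul_of_tsupport hU hf hg hgs).integrable_of_hasCompactSupport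
    (hgc.mul_left (f := f))

lemma tsupport_fderiv_apply_subset' {N : ℕ} (g : Euc N → ℝ) (v : Euc N) :
    tsupport (fun x => fderiv ℝ g x v) ⊆ tsupport g := tsupport_fderiv_apply_subset ℝ v

/-- Integration by parts, one factor being `C¹` only near the support of the other. -/
lemma ibp_open {N : ℕ} {U : Set (Euc N)} (hU : IsOpen U) {f g : Euc N → ℝ}
    (hf : ContDiffOn ℝ 1 f U) (hg : ContDiff ℝ 1 g) (hgc : HasCompactSupport g)
    (hgs : tsupport g ⊆ U) (v : Euc N) :
    ∫ x, f x * fderiv ℝ g x v = - ∫ x, fderiv ℝ f x v * g x := by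
  have hg' : Continuous (fun x => fderiv ℝ g x v) :=
    (hg.continuous_fderiv one_ne_zero).clm_apply continuous_const
  have hf' : ContinuousOn (fun x => fderiv ℝ f x v) U :=
    (hf.continuousOn_fderiv_of_isOpen hU le_rfl).clm_apply continuousOn_const
  have := integral_bilinear_hasLineDerivAt_right_eq_neg_left_of_integrable
    (μ := (volume : Measure (Euc N))) (f := f) (f' := fun x => fderiv ℝ f x v)
    (g := g) (g' := fun x => fderiv ℝ g x v) (v := v) (B := ContinuousLinearMap.mul ℝ ℝ)
    (integrable_mul_of_tsupport hU hf' hg.continuous hgc hgs)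
    (integrable_mul_of_tsupport hU hf.continuousOn hg' (hgc.fderiv_apply ℝ v)
      ((tsupport_fderiv_apply_subset' g v).trans hgs))
    (integrable_mul_of_tsupport hU hf.continuousOn hg.continuous hgc hgs)
    (fun x hx => (((hf.differentiableOn one_ne_zero).differentiableAt
      (hU.mem_nhds (hgs hx))).hasFDerivAt.hasLineDerivAt v))
    (fun x _ => ((hg.differentiable one_ne_zero x).hasFDerivAt.hasLineDerivAt v))
  simpa using this

lemma tsupport_partial2_subset {N : ℕ} (φ : Euc N → ℝ) (v : Euc N) :
    tsupport (fun z => fderiv ℝ (fun y => fderiv ℝ φ y v) z v) ⊆ tsupport φ :=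
  (tsupport_fderiv_apply_subset' _ v).trans (tsupport_fderiv_apply_subset' _ v)

lemma contDiff_partial {N : ℕ} {φ : Euc N → ℝ} {n : ℕ∞} (hφ : ContDiff ℝ (n + 1) φ) (v : Euc N) :
    ContDiff ℝ n (fun y => fderiv ℝ φ y v) :=
  (hφ.fderiv_right le_rfl).clm_apply contDiff_const

lemma contDiffOn_partial {N : ℕ} {U : Set (Euc N)} (hU : IsOpen U) {φ : Euc N → ℝ}
    (hφ : ContDiffOn ℝ 2 φ U) (v : Euc N) :
    ContDiffOn ℝ 1 (fun y => fderiv ℝ φ y v) U :=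
  (hφ.fderiv_of_isOpen hU (by norm_num)).clm_apply contDiffOn_const

lemma continuous_lap {N : ℕ} {φ : Euc N → ℝ} (hφ : ContDiff ℝ 2 φ) : Continuous (lap φ) := by
  unfold lap
  refine continuous_finsetSum _ fun i _ => ?_
  have h1 : ContDiff ℝ 1 (fun y => fderiv ℝ φ y (EuclideanSpace.single i 1)) :=
    (hφ.fderiv_right (by norm_num)).clm_apply contDiff_const
  exact (h1.continuous_fderiv one_ne_zero).clm_apply continuous_const

lemma continuousOn_lap {N : ℕ} {U : Set (Euc N)} (hU : IsOpen U) {φ : Euc N → ℝ}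
    (hφ : ContDiffOn ℝ 2 φ U) : ContinuousOn (lap φ) U := by
  unfold lap
  refine continuousOn_finsetSum _ fun i _ => ?_
  exact ((contDiffOn_partial hU hφ _).continuousOn_fderiv_of_isOpen hU le_rfl).clm_apply
    continuousOn_const

lemma tsupport_lap_subset {N : ℕ} (φ : Euc N → ℝ) : tsupport (lap φ) ⊆ tsupport φ := by
  refine closure_minimal ?_ (isClosed_tsupport _)
  intro x hx
  by_contra h
  apply hx
  unfold lap
  refine Finset.sum_eq_zero fun i _ => ?_
  exact image_eq_zero_of_notMem_tsupport (f := fun z => fderiv ℝ (fun y => fderiv ℝ φ y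
    (EuclideanSpace.single i 1)) z (EuclideanSpace.single i 1))
    fun hi => h (tsupport_partial2_subset φ _ hi)

/-- Green's second identity with one factor compactly supported in `U`. -/
lemma green_open {N : ℕ} {U : Set (Euc N)} (hU : IsOpen U) {f φ : Euc N → ℝ}
    (hf : ContDiffOn ℝ 2 f U) (hφ : ContDiff ℝ 2 φ) (hφc : HasCompactSupport φ)
    (hφs : tsupport φ ⊆ U) :
    ∫ x, f x * lap φ x = ∫ x, lap f x * φ x := by
  unfold lap
  simp_rw [Finset.mul_sum, Finset.sum_mul]
  have hf1 : ContDiffOn ℝ 1 f U := hf.of_le (by norm_num)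
  have hp : ∀ v, ContDiff ℝ 1 (fun y => fderiv ℝ φ y v) := fun v =>
    (hφ.fderiv_right (by norm_num)).clm_apply contDiff_const
  rw [integral_finsetSum, integral_finsetSum]
  · refine Finset.sum_congr rfl fun i _ => ?_
    set v : Euc N := EuclideanSpace.single i 1
    rw [ibp_open hU hf1 (hp v) (hφc.fderiv_apply ℝ v)
      ((tsupport_fderiv_apply_subset' φ v).trans hφs) v,
      ibp_open hU (contDiffOn_partial hU hf v) (hφ.of_le (by norm_num)) hφc hφs v, neg_neg]
  · intro i _
    exact integrable_mul_of_tsupport hU ((contDiffOn_partial hU hf _).continuousOn_fderiv_of_isOpen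
      hU le_rfl |>.clm_apply continuousOn_const) hφ.continuous hφc hφs
  · intro i _
    exact integrable_mul_of_tsupport hU hf.continuousOn
      (((hp _).continuous_fderiv one_ne_zero).clm_apply continuous_const)
      ((hφc.fderiv_apply ℝ _).fderiv_apply ℝ _) ((tsupport_partial2_subset φ _).trans hφs)

/-! ### The mollifier and the averaging operators -/

/-- A smooth non-increasing profile equal to `1` on `(-∞,0]` and to `0` on `[1,∞)`. -/
def prof0 (s : ℝ) : ℝ := Real.smoothTransition (1 - s)

lemma prof0_contDiff : ContDiff ℝ (⊤ : ℕ∞) prof0 :=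
  Real.smoothTransition.contDiff.comp (contDiff_const.sub contDiff_id)

lemma prof0_antitone : Antitone prof0 := fun _ _ h =>
  Real.smoothTransition.monotone (by linarith)

lemma prof0_zero {s : ℝ} (h : 1 ≤ s) : prof0 s = 0 :=
  Real.smoothTransition.zero_of_nonpos (by linarith)

/-- The radial mollifier before normalisation. -/
def eta0 {N : ℕ} (y : Euc N) : ℝ := -2 * deriv prof0 (‖y‖ ^ 2)

/-- The mass of `eta0`. -/
def etaMass (N : ℕ) : ℝ := ∫ y : Euc N, eta0 y

/-- The normalised profile. -/
def prof (N : ℕ) (s : ℝ) : ℝ := (etaMass N)⁻¹ * prof0 s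

/-- The radial mollifier `η`, with `∇ζ(y) = -η(y) y` for `ζ = zet`. -/
def eta {N : ℕ} (y : Euc N) : ℝ := -2 * deriv (prof N) (‖y‖ ^ 2)

/-- The radial kernel `ζ(y) = prof(|y|²)`. -/
def zet {N : ℕ} (y : Euc N) : ℝ := prof N (‖y‖ ^ 2)

lemma deriv_prof0_nonpos (s : ℝ) : deriv prof0 s ≤ 0 := prof0_antitone.deriv_nonpos

lemma deriv_prof0_zero {s : ℝ} (h : 1 < s) : deriv prof0 s = 0 := by
  have : prof0 =ᶠ[𝓝 s] fun _ => 0 := by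
    filter_upwards [lt_mem_nhds h] with y hy using prof0_zero hy.le
  rw [this.deriv_eq]; simp

lemma deriv_prof0_contDiff : ContDiff ℝ (⊤ : ℕ∞) (deriv prof0) := by
  have h : ContDiff ℝ ((⊤ : ℕ∞) + 1) prof0 := by simpa using prof0_contDiff
  exact (contDiff_succ_iff_deriv.1 h).2.2

lemma eta0_contDiff {N : ℕ} : ContDiff ℝ (⊤ : ℕ∞) (eta0 : Euc N → ℝ) :=
  contDiff_const.mul (deriv_prof0_contDiff.comp (contDiff_norm_sq ℝ))

lemma hasCompactSupport_of_ball {N : ℕ} {f : Euc N → ℝ} (h : ∀ y, 1 < ‖y‖ → f y = 0) :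
    HasCompactSupport f := by
  refine HasCompactSupport.intro (isCompact_closedBall (0 : Euc N) 1) fun x hx => h x ?_
  simpa using hx

lemma eta0_supp {N : ℕ} {y : Euc N} (h : 1 < ‖y‖) : eta0 y = 0 := by
  unfold eta0; rw [deriv_prof0_zero (by nlinarith)]; simp

lemma eta0_nonneg {N : ℕ} (y : Euc N) : 0 ≤ eta0 y := by
  unfold eta0; linarith [deriv_prof0_nonpos (‖y‖ ^ 2)]

lemma exists_eta0_ne {N : ℕ} [NeZero N] : ∃ y : Euc N, y ≠ 0 ∧ eta0 y ≠ 0 := by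
  obtain ⟨s, hs, hd⟩ : ∃ s ∈ Ioo (0 : ℝ) 1, deriv prof0 s = (prof0 1 - prof0 0) / (1 - 0) :=
    exists_deriv_eq_slope prof0 one_pos prof0_contDiff.continuous.continuousOn
      (prof0_contDiff.differentiable (by simp)).differentiableOn
  have h0 : prof0 0 = 1 := by simp [prof0]
  rw [prof0_zero le_rfl, h0] at hd
  let y : Euc N := EuclideanSpace.single 0 (Real.sqrt s)
  have hy : ‖y‖ ^ 2 = s := by
    simp only [y, PiLp.norm_single, Real.norm_eq_abs, sq_abs]
    exact Real.sq_sqrt hs.1.le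
  refine ⟨y, fun h => ?_, ?_⟩
  · rw [h] at hy; simp at hy; linarith [hs.1]
  · unfold eta0; rw [hy, hd]; norm_num

lemma etaMass_pos {N : ℕ} [NeZero N] : 0 < etaMass N := by
  obtain ⟨y, -, hy⟩ := exists_eta0_ne (N := N)
  exact eta0_contDiff.continuous.integral_pos_of_hasCompactSupport_nonneg_nonzero
    (hasCompactSupport_of_ball fun y hy => eta0_supp hy) eta0_nonneg hy

lemma prof_contDiff {N : ℕ} : ContDiff ℝ (⊤ : ℕ∞) (prof N) := contDiff_const.mul prof0_contDiff

lemma deriv_prof {N : ℕ} (s : ℝ) : deriv (prof N) s = (etaMass N)⁻¹ * deriv prof0 s := by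
  unfold prof
  rw [deriv_const_mul _ (prof0_contDiff.differentiable (by simp) s)]

lemma eta_eq {N : ℕ} (y : Euc N) : eta y = (etaMass N)⁻¹ * eta0 y := by
  unfold eta eta0; rw [deriv_prof]; ring

lemma eta_contDiff {N : ℕ} : ContDiff ℝ (⊤ : ℕ∞) (eta : Euc N → ℝ) := by
  have : (eta : Euc N → ℝ) = fun y => (etaMass N)⁻¹ * eta0 y := funext eta_eq
  rw [this]; exact contDiff_const.mul eta0_contDiff

lemma zet_contDiff {N : ℕ} : ContDiff ℝ (⊤ : ℕ∞) (zet : Euc N → ℝ) :=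
  prof_contDiff.comp (contDiff_norm_sq ℝ)

lemma eta_supp {N : ℕ} {y : Euc N} (h : 1 < ‖y‖) : eta y = 0 := by rw [eta_eq, eta0_supp h]; simp

lemma zet_supp {N : ℕ} {y : Euc N} (h : 1 < ‖y‖) : zet y = 0 := by
  unfold zet prof; rw [prof0_zero (by nlinarith)]; simp

lemma eta_hcs {N : ℕ} : HasCompactSupport (eta : Euc N → ℝ) :=
  hasCompactSupport_of_ball fun _ h => eta_supp h

lemma zet_hcs {N : ℕ} : HasCompactSupport (zet : Euc N → ℝ) :=
  hasCompactSupport_of_ball fun _ h => zet_supp h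

lemma eta_nonneg {N : ℕ} [NeZero N] (y : Euc N) : 0 ≤ eta y := by
  rw [eta_eq]; exact mul_nonneg (inv_nonneg.2 etaMass_pos.le) (eta0_nonneg y)

lemma zet_nonneg {N : ℕ} [NeZero N] (y : Euc N) : 0 ≤ zet y :=
  mul_nonneg (inv_nonneg.2 etaMass_pos.le) (Real.smoothTransition.nonneg _)

lemma eta_neg {N : ℕ} (y : Euc N) : eta (-y) = eta y := by simp [eta]
lemma zet_neg {N : ℕ} (y : Euc N) : zet (-y) = zet y := by simp [zet]

lemma integral_eta {N : ℕ} [NeZero N] : ∫ y : Euc N, eta y = 1 := by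
  simp_rw [eta_eq]
  rw [integral_const_mul]
  exact inv_mul_cancel₀ etaMass_pos.ne'

lemma integral_zet_pos {N : ℕ} [NeZero N] : 0 < ∫ y : Euc N, zet y := by
  refine zet_contDiff.continuous.integral_pos_of_hasCompactSupport_nonneg_nonzero
    zet_hcs zet_nonneg (x := 0) ?_
  simp [zet, prof, prof0, etaMass_pos.ne']

/-- The averaging operator with kernel `k` at scale `t`. -/
def avgOp {N : ℕ} (k : Euc N → ℝ) (t : ℝ) (f : Euc N → ℝ) (x : Euc N) : ℝ :=
  ∫ y, k y * f (x + t • y)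

/-- The potential operator at scale `r`: `gam r h = ∫₀ʳ t (ζ_t * h) dt`. -/
def gam {N : ℕ} (r : ℝ) (h : Euc N → ℝ) (x : Euc N) : ℝ :=
  ∫ t in (0 : ℝ)..r, t * avgOp zet t h x

lemma measurable_shift {N : ℕ} {f : Euc N → ℝ} (hf : Measurable f) (x : Euc N) (t : ℝ) :
    Measurable (fun y => f (x + t • y)) := hf.comp (by fun_prop)

lemma integrable_avg {N : ℕ} {k f : Euc N → ℝ} (hk : Integrable k) (hf : Measurable f) {C : ℝ}
    (hC : ∀ x, |f x| ≤ C) (x : Euc N) (t : ℝ) : Integrable (fun y => k y * f (x + t • y)) :=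
  hk.mul_bdd (c := C) (measurable_shift hf x t).aestronglyMeasurable
    (Eventually.of_forall fun _ => hC _)

lemma integrable_of_hcs {N : ℕ} {k : Euc N → ℝ} (hk : Continuous k) (hc : HasCompactSupport k) :
    Integrable k := hk.integrable_of_hasCompactSupport hc

lemma integrable_eta {N : ℕ} : Integrable (eta : Euc N → ℝ) :=
  integrable_of_hcs eta_contDiff.continuous eta_hcs

lemma integrable_zet {N : ℕ} : Integrable (zet : Euc N → ℝ) :=
  integrable_of_hcs zet_contDiff.continuous zet_hcs

lemma abs_avg_le {N : ℕ} {k f : Euc N → ℝ} (hk : Integrable k) {C : ℝ}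
    {x : Euc N} {t : ℝ} (hC : ∀ y, k y ≠ 0 → |f (x + t • y)| ≤ C) :
    |avgOp k t f x| ≤ (∫ y, |k y|) * C := by
  unfold avgOp
  rw [← integral_mul_const, ← Real.norm_eq_abs]
  refine norm_integral_le_of_norm_le (hk.abs.mul_const C) (Eventually.of_forall fun y => ?_)
  by_cases h : k y = 0
  · simp [h]
  · rw [norm_mul]; exact mul_le_mul_of_nonneg_left (hC y h) (norm_nonneg _)

/-- Joint continuity of averages of a bounded continuous function. -/
lemma continuous_avg {N : ℕ} {k f : Euc N → ℝ} (hk : Continuous k) (hc : HasCompactSupport k)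
    (hf : Continuous f) {C : ℝ} (hC : ∀ x, |f x| ≤ C) :
    Continuous (fun q : ℝ × Euc N => avgOp k q.1 f q.2) := by
  unfold avgOp
  refine continuous_of_dominated (bound := fun y => |k y| * C) ?_ ?_ ?_ ?_
  · intro q
    exact (hk.mul (hf.comp (by fun_prop))).aestronglyMeasurable
  · intro q
    refine Eventually.of_forall fun y => ?_
    rw [norm_mul]; exact mul_le_mul_of_nonneg_left (hC _) (norm_nonneg _)
  · exact (integrable_of_hcs hk hc).abs.mul_const C
  · refine Eventually.of_forall fun y => ?_
    exact continuous_const.mul (hf.comp (by fun_prop))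

lemma avg_scaled {N : ℕ} (k f : Euc N → ℝ) {t : ℝ} (ht : 0 < t) (x : Euc N) :
    avgOp k t f x = ∫ z, (t⁻¹) ^ N * k (t⁻¹ • (z - x)) * f z := by
  have h1 : avgOp k t f x = ∫ y, (fun w => k (t⁻¹ • w) * f (x + w)) (t • y) := by
    unfold avgOp
    refine integral_congr_ae (Eventually.of_forall fun y => ?_)
    simp [smul_smul, inv_mul_cancel₀ ht.ne']
  rw [h1, Measure.integral_comp_smul volume (fun w => k (t⁻¹ • w) * f (x + w)) t]
  rw [← integral_sub_right_eq_self (fun w => k (t⁻¹ • w) * f (x + w)) x]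
  simp only [finrank_euclideanSpace, Fintype.card_fin, smul_eq_mul, add_sub_cancel]
  rw [← integral_const_mul, abs_of_pos (by positivity)]
  refine integral_congr_ae (Eventually.of_forall fun y => ?_)
  simp; ring

/-- The test function `z ↦ t · t^{-N} ζ((z-x)/t)`. -/
def phiK {N : ℕ} (t : ℝ) (x z : Euc N) : ℝ := t * (t⁻¹) ^ N * prof N ((t⁻¹) ^ 2 * ‖z - x‖ ^ 2)

lemma phiK_eq {N : ℕ} {t : ℝ} (ht : 0 < t) (x z : Euc N) :
    phiK t x z = t * ((t⁻¹) ^ N * zet (t⁻¹ • (z - x))) := by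
  unfold phiK zet
  rw [norm_smul, mul_pow, Real.norm_eq_abs, abs_of_pos (by positivity)]; ring

lemma phiK_contDiff {N : ℕ} (t : ℝ) (x : Euc N) : ContDiff ℝ (⊤ : ℕ∞) (phiK t x) :=
  contDiff_const.mul (prof_contDiff.comp (contDiff_const.mul
    ((contDiff_norm_sq ℝ).comp (contDiff_id.sub contDiff_const))))

lemma phiK_tsupport {N : ℕ} {t : ℝ} (ht : 0 < t) (x : Euc N) :
    tsupport (phiK t x) ⊆ Metric.closedBall x t := by
  refine closure_minimal ?_ Metric.isClosed_closedBall
  intro z hz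
  by_contra h
  apply hz
  rw [phiK_eq ht, zet_supp]
  · simp
  · rw [norm_smul, Real.norm_eq_abs, abs_of_pos (by positivity)]
    simp only [Metric.mem_closedBall, dist_eq_norm, not_le] at h
    rw [inv_mul_eq_div, one_lt_div ht]; exact h

lemma phiK_hcs {N : ℕ} {t : ℝ} (ht : 0 < t) (x : Euc N) : HasCompactSupport (phiK t x) :=
  HasCompactSupport.of_support_subset_isCompact (isCompact_closedBall x t)
    ((subset_tsupport _).trans (phiK_tsupport ht x))

lemma prof_hasDerivAt {N : ℕ} (s : ℝ) : HasDerivAt (prof N) (deriv (prof N) s) s :=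
  (prof_contDiff.differentiable (by simp) s).hasDerivAt

lemma deriv_prof_contDiff {N : ℕ} : ContDiff ℝ (⊤ : ℕ∞) (deriv (prof N)) := by
  have h : ContDiff ℝ ((⊤ : ℕ∞) + 1) (prof N) := by simpa using prof_contDiff
  exact (contDiff_succ_iff_deriv.1 h).2.2

lemma prof_hasDerivAt2 {N : ℕ} (s : ℝ) :
    HasDerivAt (deriv (prof N)) (deriv (deriv (prof N)) s) s :=
  (deriv_prof_contDiff.differentiable (by simp) s).hasDerivAt

lemma lap_zet {N : ℕ} (y : Euc N) : lap zet y =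
    4 * ‖y‖ ^ 2 * deriv (deriv (prof N)) (‖y‖ ^ 2) + 2 * N * deriv (prof N) (‖y‖ ^ 2) := by
  have h := lap_radial (N := N) (prof_hasDerivAt (N := N)) (prof_hasDerivAt2 (N := N)) 0 y
  simp only [sub_zero] at h
  exact h

lemma lap_phiK {N : ℕ} {t : ℝ} (ht : 0 < t) (x z : Euc N) :
    lap (phiK t x) z = t⁻¹ * (t⁻¹) ^ N * lap zet (t⁻¹ • (z - x)) := by
  have h1 : ∀ s, HasDerivAt (fun s => t * (t⁻¹) ^ N * prof N ((t⁻¹) ^ 2 * s))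
      (t * (t⁻¹) ^ N * (deriv (prof N) ((t⁻¹) ^ 2 * s) * (t⁻¹) ^ 2)) s := fun s => by
    have : HasDerivAt (fun s => (t⁻¹) ^ 2 * s) ((t⁻¹) ^ 2) s := 
      ((hasDerivAt_id s).const_mul ((t⁻¹) ^ 2)).congr_deriv (mul_one _)
    exact ((prof_hasDerivAt _).comp s this).const_mul _
  have h2 : ∀ s, HasDerivAt (fun s => t * (t⁻¹) ^ N * (deriv (prof N) ((t⁻¹) ^ 2 * s) * (t⁻¹) ^ 2))
      (t * (t⁻¹) ^ N * (deriv (deriv (prof N)) ((t⁻¹) ^ 2 * s) * (t⁻¹) ^ 2 * (t⁻¹) ^ 2)) s :=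
    fun s => by
    have : HasDerivAt (fun s => (t⁻¹) ^ 2 * s) ((t⁻¹) ^ 2) s := 
      ((hasDerivAt_id s).const_mul ((t⁻¹) ^ 2)).congr_deriv (mul_one _)
    exact (((prof_hasDerivAt2 _).comp s this).mul_const _).const_mul _
  have h := lap_radial h1 h2 x z
  have e : phiK t x = fun y => t * (t⁻¹) ^ N * prof N ((t⁻¹) ^ 2 * ‖y - x‖ ^ 2) := rfl
  rw [e, h, lap_zet, norm_smul, mul_pow, Real.norm_eq_abs, abs_of_pos (by positivity)]
  field_simp

/-- The scaled mollifier moves along the heat-type flow `∂ₜ(t^{-N}η(·/t)) = Δ(t^{1-N}ζ(·/t))`. -/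
lemma hasDerivAt_kernel {N : ℕ} {t : ℝ} (ht : 0 < t) (x z : Euc N) :
    HasDerivAt (fun t : ℝ => (t⁻¹) ^ N * eta (t⁻¹ • (z - x))) (lap (phiK t x) z) t := by
  have e : (fun t : ℝ => (t⁻¹) ^ N * eta (t⁻¹ • (z - x))) =
      fun t : ℝ => (t⁻¹) ^ N * (-2 * deriv (prof N) ((t⁻¹) ^ 2 * ‖z - x‖ ^ 2)) := by
    funext t; unfold eta; rw [norm_smul, mul_pow, Real.norm_eq_abs, sq_abs]
  rw [e]
  have hi := hasDerivAt_inv ht.ne'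
  have h2 := ((prof_hasDerivAt2 (N := N) ((t⁻¹) ^ 2 * ‖z - x‖ ^ 2)).comp t
    ((hi.pow 2).mul_const (‖z - x‖ ^ 2))).const_mul (-2)
  have h := (hi.pow N).mul h2
  refine h.congr_deriv ?_
  rw [lap_phiK ht, lap_zet, norm_smul, mul_pow, Real.norm_eq_abs, abs_of_pos (by positivity)]
  simp only [Function.comp_apply, Pi.pow_apply]
  generalize deriv (prof N) (t⁻¹ ^ 2 * ‖z - x‖ ^ 2) = a
  generalize deriv (deriv (prof N)) (t⁻¹ ^ 2 * ‖z - x‖ ^ 2) = b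
  have e1 : -(t ^ 2)⁻¹ = -(t⁻¹) ^ 2 := by rw [inv_pow]
  rw [e1]
  rcases N with _ | n
  · simp; ring
  · simp only [Nat.add_sub_cancel]; push_cast; ring

/-! ### Distributional Poisson equations and mean values -/

lemma two_le_top' : (2 : WithTop ℕ∞) ≤ ((⊤ : ℕ∞) : WithTop ℕ∞) :=
  WithTop.coe_le_coe.2 le_top

lemma one_le_top' : (1 : WithTop ℕ∞) ≤ ((⊤ : ℕ∞) : WithTop ℕ∞) :=
  WithTop.coe_le_coe.2 le_top

lemma testFun_phiK {N : ℕ} {U : Set (Euc N)} {t : ℝ} (ht : 0 < t) {x : Euc N}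
    (hU : Metric.closedBall x t ⊆ U) : TestFun U (phiK t x) :=
  ⟨phiK_contDiff t x, phiK_hcs ht x, (phiK_tsupport ht x).trans hU⟩

lemma exists_bound_lap_zet {N : ℕ} : ∃ C, 0 ≤ C ∧ ∀ y : Euc N, |lap zet y| ≤ C := by
  have h1 : Continuous (lap (zet : Euc N → ℝ)) := continuous_lap (zet_contDiff.of_le two_le_top')
  have h2 : HasCompactSupport (lap (zet : Euc N → ℝ)) :=
    HasCompactSupport.of_support_subset_isCompact zet_hcs
      ((subset_tsupport _).trans (tsupport_lap_subset _))
  obtain ⟨C, hC⟩ := h2.exists_bound_of_continuous h1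
  exact ⟨C, (abs_nonneg _).trans (hC 0), hC⟩

/-- Averages against the scaled mollifier are differentiable in the scale. -/
lemma hasDerivAt_avg {N : ℕ} {u : Euc N → ℝ} (hu : Integrable u) {t : ℝ} (ht : 0 < t)
    (x : Euc N) :
    HasDerivAt (fun t => avgOp eta t u x) (∫ z, u z * lap (phiK t x) z) t := by
  obtain ⟨C, hC0, hC⟩ := exists_bound_lap_zet (N := N)
  have hb := hasDerivAt_integral_of_dominated_loc_of_deriv_le (μ := volume) (𝕜 := ℝ)
    (F := fun (s : ℝ) (z : Euc N) => (s⁻¹) ^ N * eta (s⁻¹ • (z - x)) * u z)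
    (F' := fun s z => lap (phiK s x) z * u z) (x₀ := t)
    (bound := fun z => ((t / 2)⁻¹ * ((t / 2)⁻¹) ^ N * C) * |u z|) (s := Ioi (t / 2))
    (Ioi_mem_nhds (by linarith)) ?_ ?_ ?_ ?_ ?_ ?_
  · have h2 := hb.2
    refine (h2.congr_deriv ?_).congr_of_eventuallyEq ?_
    · simp_rw [mul_comm]
    · filter_upwards [lt_mem_nhds ht] with s hs using avg_scaled eta u hs x
  · filter_upwards [lt_mem_nhds ht] with s hs
    refine AEStronglyMeasurable.mul ?_ hu.1
    exact (continuous_const.mul (eta_contDiff.continuous.comp (by fun_prop))).aestronglyMeasurable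
  · obtain ⟨D, hD⟩ := (eta_hcs (N := N)).exists_bound_of_continuous eta_contDiff.continuous
    refine hu.bdd_mul (c := |(t⁻¹) ^ N| * D) ?_ (Eventually.of_forall fun z => ?_)
    · exact (continuous_const.mul (eta_contDiff.continuous.comp
        (by fun_prop))).aestronglyMeasurable
    · rw [norm_mul]; exact mul_le_mul_of_nonneg_left (hD _) (norm_nonneg _)
  · refine AEStronglyMeasurable.mul ?_ hu.1
    exact (continuous_lap ((phiK_contDiff t x).of_le two_le_top')).aestronglyMeasurable
  · refine Eventually.of_forall fun z s hs => ?_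
    have hs0 : 0 < s := lt_trans (by linarith) (mem_Ioi.1 hs)
    have hle : s⁻¹ ≤ (t / 2)⁻¹ := inv_anti₀ (by linarith) (mem_Ioi.1 hs).le
    have hp : 0 < s⁻¹ := inv_pos.2 hs0
    rw [norm_mul, lap_phiK hs0, norm_mul, Real.norm_eq_abs, Real.norm_eq_abs, Real.norm_eq_abs,
      abs_of_pos (by positivity)]
    have := hC (s⁻¹ • (z - x))
    gcongr
  · exact hu.abs.const_mul _
  · refine Eventually.of_forall fun z s hs => ?_
    have hs0 : 0 < s := lt_trans (by linarith) (mem_Ioi.1 hs)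
    exact (hasDerivAt_kernel hs0 x z).mul_const _

/-- `-Δu = h` in the sense of distributions on `U`. -/
def DS {N : ℕ} (U : Set (Euc N)) (u h : Euc N → ℝ) : Prop :=
  ∀ φ, TestFun U φ → ∫ z, u z * lap φ z = -∫ z, h z * φ z

lemma integral_phiK {N : ℕ} (h : Euc N → ℝ) {t : ℝ} (ht : 0 < t) (x : Euc N) :
    ∫ z, h z * phiK t x z = t * avgOp zet t h x := by
  rw [avg_scaled zet h ht, ← integral_const_mul]
  refine integral_congr_ae (Eventually.of_forall fun z => ?_)
  simp only; rw [phiK_eq ht]; ring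

lemma continuous_tQ {N : ℕ} {h : Euc N → ℝ} (hh : Continuous h) {H : ℝ}
    (hH : ∀ x, |h x| ≤ H) (x : Euc N) : Continuous fun t => t * avgOp zet t h x :=
  continuous_id.mul ((continuous_avg zet_contDiff.continuous zet_hcs hh hH).comp
    (continuous_id.prodMk continuous_const))

lemma hasDerivAt_gam {N : ℕ} {h : Euc N → ℝ} (hh : Continuous h) {H : ℝ}
    (hH : ∀ x, |h x| ≤ H) (x : Euc N) (t : ℝ) :
    HasDerivAt (fun t => gam t h x) (t * avgOp zet t h x) t :=
  (continuous_tQ hh hH x).integral_hasStrictDerivAt 0 t |>.hasDerivAt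

/-- The mean value identity: `A_s u + Γ_s h` does not depend on the scale. -/
lemma mv_const {N : ℕ} {U : Set (Euc N)} {u h : Euc N → ℝ} (hu : Integrable u)
    (hh : Continuous h) {H : ℝ} (hH : ∀ x, |h x| ≤ H) (hds : DS U u h) {x : Euc N} {s r : ℝ}
    (hs : 0 < s) (hsr : s ≤ r) (hU : Metric.closedBall x r ⊆ U) :
    avgOp eta s u x + gam s h x = avgOp eta r u x + gam r h x := by
  have hd : ∀ t ∈ Icc s r, HasDerivAt (fun t => avgOp eta t u x + gam t h x) 0 t := by
    intro t ht
    have ht0 : 0 < t := hs.trans_le ht.1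
    refine ((hasDerivAt_avg hu ht0 x).add (hasDerivAt_gam hh hH x t)).congr_deriv ?_
    rw [hds _ (testFun_phiK ht0 ((Metric.closedBall_subset_closedBall ht.2).trans hU)),
      integral_phiK h ht0]
    ring
  have := constant_of_has_deriv_right_zero
    (fun t ht => (hd t ht).continuousAt.continuousWithinAt)
    (fun t ht => (hd t (Ico_subset_Icc_self ht)).hasDerivWithinAt) r (right_mem_Icc.2 hsr)
  exact this.symm

lemma avg_zero {N : ℕ} [NeZero N] (u : Euc N → ℝ) (x : Euc N) : avgOp eta 0 u x = u x := by
  simp [avgOp, integral_mul_const, integral_eta]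

lemma gam_zero {N : ℕ} (h : Euc N → ℝ) (x : Euc N) : gam 0 h x = 0 := by simp [gam]

lemma continuous_avg_t {N : ℕ} {u : Euc N → ℝ} (huc : Continuous u) {C : ℝ}
    (hC : ∀ x, |u x| ≤ C) (x : Euc N) : Continuous fun t => avgOp eta t u x :=
  (continuous_avg eta_contDiff.continuous eta_hcs huc hC).comp
    (continuous_id.prodMk continuous_const)

/-- Mean value formula for continuous distributional solutions. -/
lemma mv_cont {N : ℕ} [NeZero N] {U : Set (Euc N)} {u h : Euc N → ℝ} (hu : Integrable u)
    (huc : Continuous u) {C : ℝ} (hC : ∀ x, |u x| ≤ C)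
    (hh : Continuous h) {H : ℝ} (hH : ∀ x, |h x| ≤ H) (hds : DS U u h) {x : Euc N} {r : ℝ}
    (hr : 0 < r) (hU : Metric.closedBall x r ⊆ U) :
    u x = avgOp eta r u x + gam r h x := by
  have h1 : Tendsto (fun t => avgOp eta t u x + gam t h x) (𝓝[>] 0) (𝓝 (u x)) := by
    have h2 : Continuous fun t => avgOp eta t u x + gam t h x :=
      (continuous_avg_t huc hC x).add
        (continuous_iff_continuousAt.2 fun t => (hasDerivAt_gam hh hH x t).continuousAt)
    have := (h2.tendsto 0).mono_left (nhdsWithin_le_nhds (s := Ioi 0))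
    simpa [avg_zero, gam_zero] using this
  refine tendsto_nhds_unique h1 (tendsto_const_nhds.congr' ?_)
  filter_upwards [Ioc_mem_nhdsGT hr] with t ht
  exact (mv_const hu hh hH hds ht.1 ht.2 hU).symm

/-- One-sided mean value estimate for global subsolutions, with a majorant `B'` for the averages of
the right-hand side. -/
lemma mv_sub {N : ℕ} [NeZero N] {u h : Euc N → ℝ} (hu : Integrable u)
    (huc : Continuous u) {C : ℝ} (hC : ∀ x, |u x| ≤ C) {B b : ℝ → ℝ} {x : Euc N}
    (hds : ∀ t, 0 < t → -∫ z, h z * phiK t x z ≤ ∫ z, u z * lap (phiK t x) z)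
    (hB : ∀ t, 0 < t → HasDerivAt B (b t) t) (hB0 : Continuous B) (hB00 : B 0 = 0)
    (hb : ∀ t, 0 < t → t * avgOp zet t h x ≤ b t) {r : ℝ} (hr : 0 < r) :
    u x ≤ avgOp eta r u x + B r := by
  have hc : Continuous fun t => avgOp eta t u x + B t := (continuous_avg_t huc hC x).add hB0
  have hm : MonotoneOn (fun t => avgOp eta t u x + B t) (Icc 0 r) := by
    refine monotoneOn_of_deriv_nonneg (convex_Icc _ _) hc.continuousOn ?_ ?_
    · intro t ht
      rw [interior_Icc] at ht
      exact ((hasDerivAt_avg hu ht.1 x).add (hB t ht.1)).differentiableAt.differentiableWithinAt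
    · intro t ht
      rw [interior_Icc] at ht
      have h1 := ((hasDerivAt_avg hu ht.1 x).add (hB t ht.1)).deriv
      have h2 := hds t ht.1
      rw [integral_phiK h ht.1] at h2
      have h3 := hb t ht.1
      have e : (fun t => avgOp eta t u x + B t) = (fun t => avgOp eta t u x) + B := rfl
      rw [e, h1]; linarith
  have := hm (left_mem_Icc.2 hr.le) (right_mem_Icc.2 hr.le) hr.le
  simpa [avg_zero, hB00] using this

/-! ### Uniqueness for the Dirichlet problem -/

lemma integral_eta_inner {N : ℕ} (x : Euc N) : ∫ y : Euc N, eta y * inner ℝ x y = 0 := by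
  have h := integral_neg_eq_self (fun y : Euc N => eta y * inner ℝ x y) volume
  simp only [eta_neg, inner_neg_right, mul_neg, integral_neg] at h
  linarith

lemma integral_eta_sq_pos {N : ℕ} [NeZero N] : 0 < ∫ y : Euc N, eta y * ‖y‖ ^ 2 := by
  obtain ⟨y, hy0, hy⟩ := exists_eta0_ne (N := N)
  refine (eta_contDiff.continuous.mul (by fun_prop)).integral_pos_of_hasCompactSupport_nonneg_nonzero
    eta_hcs.mul_right (fun y => mul_nonneg (eta_nonneg y) (by positivity)) (x := y) ?_
  rw [eta_eq]
  have := etaMass_pos (N := N)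
  have : ‖y‖ ≠ 0 := norm_ne_zero_iff.2 hy0
  simp [*, etaMass_pos.ne']

lemma avg_sq {N : ℕ} [NeZero N] (x : Euc N) (r : ℝ) :
    avgOp eta r (fun z => ‖z‖ ^ 2) x = ‖x‖ ^ 2 + r ^ 2 * ∫ y : Euc N, eta y * ‖y‖ ^ 2 := by
  unfold avgOp
  have h1 : Integrable fun y : Euc N => eta y * inner ℝ x y :=
    integrable_of_hcs (eta_contDiff.continuous.mul (by fun_prop)) eta_hcs.mul_right
  have h2 : Integrable fun y : Euc N => eta y * ‖y‖ ^ 2 :=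
    integrable_of_hcs (eta_contDiff.continuous.mul (by fun_prop)) eta_hcs.mul_right
  have e : ∀ y : Euc N, eta y * ‖x + r • y‖ ^ 2 =
      eta y * ‖x‖ ^ 2 + (2 * r) * (eta y * inner ℝ x y) + r ^ 2 * (eta y * ‖y‖ ^ 2) := by
    intro y
    rw [norm_add_sq_real, inner_smul_right, norm_smul, mul_pow, Real.norm_eq_abs, sq_abs]; ring
  simp_rw [e]
  rw [integral_add (by exact (integrable_eta.mul_const _).add (h1.const_mul _))
    (h2.const_mul _), integral_add (integrable_eta.mul_const _) (h1.const_mul _),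
    integral_mul_const, integral_eta, integral_const_mul, integral_eta_inner, integral_const_mul]
  ring

lemma integrable_of_zero_off {N : ℕ} {Ω : Set (Euc N)} (hb : Bornology.IsBounded Ω)
    {u : Euc N → ℝ} (hu : Continuous u) (h0 : ∀ x ∉ Ω, u x = 0) : Integrable u :=
  hu.integrable_of_hasCompactSupport
    (HasCompactSupport.intro hb.isCompact_closure fun x hx => h0 x fun h => hx (subset_closure h))

lemma bound_of_zero_off {N : ℕ} {Ω : Set (Euc N)} (hb : Bornology.IsBounded Ω)
    {u : Euc N → ℝ} (hu : Continuous u) (h0 : ∀ x ∉ Ω, u x = 0) : ∃ C, ∀ x, |u x| ≤ C :=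
  (HasCompactSupport.intro hb.isCompact_closure
    fun x hx => h0 x fun h => hx (subset_closure h)).exists_bound_of_continuous hu

/-- If `u` were positive somewhere, `u + ε|x|²` would, for small `ε`, have an interior maximum,
contradicting the mean value property of `u` and the strict one of `|x|²`. -/
lemma max_principle {N : ℕ} [NeZero N] {Ω : Set (Euc N)} (ho : IsOpen Ω)
    (hb : Bornology.IsBounded Ω) {u : Euc N → ℝ} (hu : Continuous u) (h0 : ∀ x ∉ Ω, u x = 0)
    (hds : DS Ω u fun _ => 0) (x : Euc N) : u x ≤ 0 := by
  by_contra! hx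
  have hxΩ : x ∈ Ω := by by_contra h; linarith [h0 x h]
  obtain ⟨R, hR0, hR⟩ := hb.closure.exists_pos_norm_le
  set ε := u x / (2 * R ^ 2) with hε
  have hεp : 0 < ε := by positivity
  have hεR : ε * R ^ 2 < u x := by
    rw [hε, div_mul_eq_mul_div, div_lt_iff₀ (by positivity)]
    nlinarith [mul_pos hx (pow_pos hR0 2)]
  obtain ⟨z, hz, hmax⟩ := hb.isCompact_closure.exists_isMaxOn ⟨x, subset_closure hxΩ⟩
    (f := fun x => u x + ε * ‖x‖ ^ 2) (by fun_prop)
  have hzR : ‖z‖ ^ 2 ≤ R ^ 2 := pow_le_pow_left₀ (norm_nonneg _) (hR z hz) 2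
  have h1 : u x + ε * ‖x‖ ^ 2 ≤ u z + ε * ‖z‖ ^ 2 := hmax (subset_closure hxΩ)
  have hzΩ : z ∈ Ω := by
    by_contra h
    rw [h0 z h] at h1
    nlinarith [sq_nonneg ‖x‖, mul_nonneg hεp.le (sq_nonneg ‖x‖)]
  obtain ⟨r, hr, hball⟩ := Metric.nhds_basis_closedBall.mem_iff.1 (ho.mem_nhds hzΩ)
  obtain ⟨C, hC⟩ := bound_of_zero_off hb hu h0
  have hmv := mv_cont (integrable_of_zero_off hb hu h0) hu hC (h := fun _ => 0) continuous_const
    (H := 0) (by simp) hds hr hball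
  have hg : gam r (fun _ => 0) z = 0 := by simp [gam, avgOp]
  rw [hg, add_zero] at hmv
  have hle : avgOp eta r u z + ε * avgOp eta r (fun z => ‖z‖ ^ 2) z ≤ u z + ε * ‖z‖ ^ 2 := by
    unfold avgOp
    have i1 := integrable_avg integrable_eta hu.measurable hC z r
    have i2 : Integrable fun y : Euc N => eta y * ‖z + r • y‖ ^ 2 :=
      integrable_of_hcs (eta_contDiff.continuous.mul (by fun_prop)) eta_hcs.mul_right
    rw [← integral_const_mul, ← integral_add i1 (i2.const_mul ε)]
    calc _ ≤ ∫ y : Euc N, eta y * (u z + ε * ‖z‖ ^ 2) := by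
          refine integral_mono (i1.add (i2.const_mul ε)) (integrable_eta.mul_const _) fun y => ?_
          by_cases hy : 1 < ‖y‖
          · simp [eta_supp hy]
          · have hm : z + r • y ∈ closure Ω := by
              refine subset_closure (hball ?_)
              rw [Metric.mem_closedBall, dist_eq_norm, add_sub_cancel_left, norm_smul,
                Real.norm_eq_abs, abs_of_pos hr]
              nlinarith
            have h2 : u (z + r • y) + ε * ‖z + r • y‖ ^ 2 ≤ u z + ε * ‖z‖ ^ 2 := hmax hm
            have := mul_le_mul_of_nonneg_left h2 (eta_nonneg y)
            simp only; linarith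
      _ = _ := by rw [integral_mul_const, integral_eta, one_mul]
  rw [avg_sq, ← hmv] at hle
  have := integral_eta_sq_pos (N := N)
  have : 0 < ε * (r ^ 2 * ∫ y : Euc N, eta y * ‖y‖ ^ 2) := by positivity
  linarith

lemma DS.neg {N : ℕ} {U : Set (Euc N)} {u h : Euc N → ℝ} (hd : DS U u h) :
    DS U (fun x => -u x) (fun x => -h x) := fun φ hφ => by
  simp only [neg_mul, integral_neg]; rw [hd φ hφ]

/-- A continuous function vanishing off `Ω` and harmonic in `Ω` is zero. -/
lemma dirichlet_unique {N : ℕ} [NeZero N] {Ω : Set (Euc N)} (ho : IsOpen Ω)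
    (hb : Bornology.IsBounded Ω) {u : Euc N → ℝ} (hu : Continuous u) (h0 : ∀ x ∉ Ω, u x = 0)
    (hds : DS Ω u fun _ => 0) (x : Euc N) : u x = 0 := by
  refine le_antisymm (max_principle ho hb hu h0 hds x) ?_
  have := max_principle ho hb hu.neg (fun x hx => by simp [h0 x hx])
    (fun φ hφ => by simpa using hds.neg φ hφ) x
  simp only [Pi.neg_apply] at this
  linarith

/-! ### The Dirichlet form on test functions -/

/-- The `i`-th partial derivative. -/
def pd {N : ℕ} (i : Fin N) (f : Euc N → ℝ) (x : Euc N) : ℝ := fderiv ℝ f x (EuclideanSpace.single i 1)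

/-- The pointwise product of gradients `∇f · ∇g`. -/
def dir {N : ℕ} (f g : Euc N → ℝ) (x : Euc N) : ℝ := ∑ i : Fin N, pd i f x * pd i g x

/-- The Dirichlet form. -/
def Bf {N : ℕ} (f g : Euc N → ℝ) : ℝ := ∫ x, dir f g x

lemma norm_sq_dual {N : ℕ} (L : Euc N →L[ℝ] ℝ) :
    ‖L‖ ^ 2 = ∑ i : Fin N, (L (EuclideanSpace.single i 1)) ^ 2 := by
  obtain ⟨v, rfl⟩ := (InnerProductSpace.toDual ℝ (Euc N)).surjective L
  rw [LinearIsometryEquiv.norm_map, EuclideanSpace.norm_sq_eq]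
  simp [InnerProductSpace.toDual_apply_apply, inner_single_one]

lemma norm_sq_fderiv {N : ℕ} (f : Euc N → ℝ) (x : Euc N) : ‖fderiv ℝ f x‖ ^ 2 = dir f f x := by
  rw [norm_sq_dual]; simp [dir, pd, sq]

lemma dir_comm {N : ℕ} (f g : Euc N → ℝ) (x : Euc N) : dir f g x = dir g f x := by
  simp [dir, mul_comm]

lemma Bf_comm {N : ℕ} (f g : Euc N → ℝ) : Bf f g = Bf g f := by simp [Bf, dir_comm f g]

lemma dir_self_nonneg {N : ℕ} (f : Euc N → ℝ) (x : Euc N) : 0 ≤ dir f f x :=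
  Finset.sum_nonneg fun i _ => mul_self_nonneg _

lemma Bf_self_nonneg {N : ℕ} (f : Euc N → ℝ) : 0 ≤ Bf f f := integral_nonneg (dir_self_nonneg f)

lemma TestFun.continuous {N : ℕ} {Ω : Set (Euc N)} {f : Euc N → ℝ} (h : TestFun Ω f) :
    Continuous f := h.1.continuous

lemma TestFun.differentiable {N : ℕ} {Ω : Set (Euc N)} {f : Euc N → ℝ} (h : TestFun Ω f) :
    Differentiable ℝ f := h.1.differentiable (by simp)

lemma continuous_pd {N : ℕ} {f : Euc N → ℝ} (h : ContDiff ℝ 1 f) (i : Fin N) :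
    Continuous (pd i f) := (h.continuous_fderiv one_ne_zero).clm_apply continuous_const

lemma continuous_dir {N : ℕ} {f g : Euc N → ℝ} (hf : ContDiff ℝ 1 f) (hg : ContDiff ℝ 1 g) :
    Continuous (dir f g) :=
  continuous_finsetSum _ fun i _ => (continuous_pd hf i).mul (continuous_pd hg i)

lemma pd_zero_of_notMem {N : ℕ} {f : Euc N → ℝ} {x : Euc N} (hx : x ∉ tsupport f) (i : Fin N) :
    pd i f x = 0 := by
  unfold pd
  rw [image_eq_zero_of_notMem_tsupport (f := fderiv ℝ f) fun h => hx (tsupport_fderiv_subset ℝ h)]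
  simp

lemma dir_zero_of_notMem {N : ℕ} {f g : Euc N → ℝ} {x : Euc N} (hx : x ∉ tsupport g) :
    dir f g x = 0 :=
  Finset.sum_eq_zero fun i _ => by rw [pd_zero_of_notMem hx, mul_zero]

lemma integrable_dir {N : ℕ} {f g : Euc N → ℝ} (hf : ContDiff ℝ 1 f) (hg : ContDiff ℝ 1 g)
    (hc : HasCompactSupport g) : Integrable (dir f g) :=
  (continuous_dir hf hg).integrable_of_hasCompactSupport
    (HasCompactSupport.intro hc fun _ hx => dir_zero_of_notMem hx)

lemma TestFun.c1 {N : ℕ} {Ω : Set (Euc N)} {f : Euc N → ℝ} (h : TestFun Ω f) :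
    ContDiff ℝ 1 f := h.1.of_le one_le_top'

lemma TestFun.c2 {N : ℕ} {Ω : Set (Euc N)} {f : Euc N → ℝ} (h : TestFun Ω f) :
    ContDiff ℝ 2 f := h.1.of_le two_le_top'

lemma TestFun.zero_off {N : ℕ} {Ω : Set (Euc N)} {f : Euc N → ℝ} (h : TestFun Ω f) :
    ∀ x ∉ Ω, f x = 0 := fun x hx => image_eq_zero_of_notMem_tsupport fun h' => hx (h.2.2 h')

lemma TestFun.add_smul {N : ℕ} {Ω : Set (Euc N)} {f g : Euc N → ℝ} (hf : TestFun Ω f)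
    (hg : TestFun Ω g) (t : ℝ) : TestFun Ω (f + t • g) :=
  ⟨hf.1.add (contDiff_const.smul hg.1), hf.2.1.add (hg.2.1.smul_left (f := fun _ => t)),
    (tsupport_add f (t • g)).trans (union_subset hf.2.2
      ((tsupport_smul_subset_right (fun _ => t) g).trans hg.2.2))⟩

lemma testFun_zero {N : ℕ} {Ω : Set (Euc N)} : TestFun Ω (0 : Euc N → ℝ) :=
  ⟨contDiff_const, HasCompactSupport.zero, by simp [tsupport]⟩

lemma pd_add_smul {N : ℕ} {f g : Euc N → ℝ} (hf : Differentiable ℝ f) (hg : Differentiable ℝ g)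
    (t : ℝ) (i : Fin N) (x : Euc N) : pd i (f + t • g) x = pd i f x + t * pd i g x := by
  unfold pd
  rw [fderiv_add (hf x) ((hg x).const_smul t), fderiv_const_smul (hg x)]
  simp

lemma Bf_add_smul {N : ℕ} {Ω : Set (Euc N)} {f g k : Euc N → ℝ} (hf : TestFun Ω f)
    (hg : TestFun Ω g) (hk : TestFun Ω k) (t : ℝ) :
    Bf (f + t • g) k = Bf f k + t * Bf g k := by
  unfold Bf
  rw [← integral_const_mul, ← integral_add (integrable_dir hf.c1 hk.c1 hk.2.1)
    ((integrable_dir hg.c1 hk.c1 hk.2.1).const_mul t)]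
  refine integral_congr_ae (Eventually.of_forall fun x => ?_)
  simp only [dir, Finset.mul_sum, ← Finset.sum_add_distrib]
  refine Finset.sum_congr rfl fun i _ => ?_
  rw [pd_add_smul hf.differentiable hg.differentiable]; ring

lemma Bf_quad {N : ℕ} {Ω : Set (Euc N)} {f g : Euc N → ℝ} (hf : TestFun Ω f)
    (hg : TestFun Ω g) (t : ℝ) :
    Bf (f + t • g) (f + t • g) = Bf f f + 2 * t * Bf f g + t ^ 2 * Bf g g := by
  have h := hf.add_smul hg t
  rw [Bf_add_smul hf hg h, Bf_comm f, Bf_comm g, Bf_add_smul hf hg hf, Bf_add_smul hf hg hg,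
    Bf_comm g f]
  ring

/-- Green's formula `∫ ∇f·∇g = -∫ Δf g`. -/
lemma Bf_green {N : ℕ} {f g : Euc N → ℝ} (hf : ContDiff ℝ 2 f) (hg : ContDiff ℝ 1 g)
    (hc : HasCompactSupport g) : Bf f g = -∫ x, lap f x * g x := by
  unfold Bf dir lap
  have hf1 : ∀ i : Fin N, ContDiff ℝ 1 (pd i f) := fun i =>
    (hf.fderiv_right (by norm_num)).clm_apply contDiff_const
  simp_rw [Finset.sum_mul]
  rw [integral_finsetSum _ fun i _ => ?_, integral_finsetSum _ fun i _ => ?_,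
    ← Finset.sum_neg_distrib]
  · refine Finset.sum_congr rfl fun i _ => ?_
    exact ibp_open isOpen_univ (hf1 i).contDiffOn hg hc (subset_univ _) _
  · exact (((continuous_pd (hf1 i) i).mul hg.continuous)).integrable_of_hasCompactSupport hc.mul_left
  · refine (((hf1 i).continuous.mul (continuous_pd hg i))).integrable_of_hasCompactSupport ?_
    exact HasCompactSupport.intro hc fun x hx => by
      rw [Pi.mul_apply, pd_zero_of_notMem hx, mul_zero]

/-- The Cauchy–Schwarz inequality for integrals. -/
lemma integral_cs {X : Type*} [MeasurableSpace X] {μ : Measure X} {f g : X → ℝ}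
    (hf : Integrable (fun x => f x ^ 2) μ) (hg : Integrable (fun x => g x ^ 2) μ)
    (hfg : Integrable (fun x => f x * g x) μ) :
    (∫ x, f x * g x ∂μ) ^ 2 ≤ (∫ x, f x ^ 2 ∂μ) * ∫ x, g x ^ 2 ∂μ := by
  have h : ∀ t : ℝ, 0 ≤ (∫ x, g x ^ 2 ∂μ) * (t * t) + (2 * ∫ x, f x * g x ∂μ) * t +
      ∫ x, f x ^ 2 ∂μ := by
    intro t
    have e : ∫ x, (f x + t * g x) ^ 2 ∂μ = (∫ x, g x ^ 2 ∂μ) * (t * t) +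
        (2 * ∫ x, f x * g x ∂μ) * t + ∫ x, f x ^ 2 ∂μ := by
      have : ∀ x, (f x + t * g x) ^ 2 = (t * t) * g x ^ 2 + (2 * t) * (f x * g x) + f x ^ 2 :=
        fun x => by ring
      simp_rw [this]
      rw [integral_add (by exact (hg.const_mul _).add (hfg.const_mul _)) hf,
        integral_add (hg.const_mul _) (hfg.const_mul _), integral_const_mul, integral_const_mul]
      ring
    rw [← e]; exact integral_nonneg fun x => sq_nonneg _
  have := discrim_le_zero h
  rw [discrim] at this
  nlinarith

/-- Almost-minimisers of a quadratic functional almost satisfy the Euler–Lagrange equation. -/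
lemma exists_almost_min {V : Type*} [AddCommGroup V] [Module ℝ V] {P : V → Prop} (P0 : P 0)
    (Padd : ∀ v w, P v → P w → ∀ t : ℝ, P (v + t • w)) {B : V → V → ℝ} {l : V → ℝ}
    (hB : ∀ v w, P v → P w → ∀ t : ℝ,
      B (v + t • w) (v + t • w) = B v v + 2 * t * B v w + t ^ 2 * B w w)
    (hl : ∀ v w, P v → P w → ∀ t : ℝ, l (v + t • w) = l v + t * l w) {C : ℝ} (hC : 0 < C)
    (hlB : ∀ v, P v → l v ^ 2 ≤ C * B v v) {δ : ℝ} (hδ : 0 < δ) :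
    ∃ v, P v ∧ ∀ w, P w → (B v w - l w) ^ 2 ≤ δ * B w w := by
  set J : V → ℝ := fun v => B v v / 2 - l v with hJ
  have hbdd : BddBelow (J '' {v | P v}) := by
    refine ⟨-C / 2, ?_⟩
    rintro _ ⟨v, hv, rfl⟩
    have h1 := hlB v hv
    have h2 : l v ≤ (B v v + C) / 2 := by
      by_contra! h
      have h3 : 0 ≤ B v v := nonneg_of_mul_nonneg_right ((sq_nonneg _).trans h1) hC
      nlinarith [sq_nonneg (B v v - C)]
    simp only [hJ]; linarith
  have hne : (J '' {v | P v}).Nonempty := ⟨_, 0, P0, rfl⟩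
  obtain ⟨_, ⟨v, hv, rfl⟩, hlt⟩ := exists_lt_of_csInf_lt hne
    (show sInf (J '' {v | P v}) < sInf (J '' {v | P v}) + δ / 2 by linarith)
  refine ⟨v, hv, fun w hw => ?_⟩
  have h : ∀ t : ℝ, 0 ≤ (B w w / 2) * (t * t) + (B v w - l w) * t + δ / 2 := by
    intro t
    have h1 : sInf (J '' {v | P v}) ≤ J (v + t • w) := csInf_le hbdd ⟨_, Padd v w hv hw t, rfl⟩
    simp only [hJ, hB v w hv hw t, hl v w hv hw t] at h1 hlt
    nlinarith
  have := discrim_le_zero h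
  rw [discrim] at this
  nlinarith

lemma TestFun.integrable_mul {N : ℕ} {Ω : Set (Euc N)} {f h : Euc N → ℝ} (hf : TestFun Ω f)
    (hh : Continuous h) : Integrable (fun x => h x * f x) :=
  (hh.mul hf.continuous).integrable_of_hasCompactSupport hf.2.1.mul_left

lemma TestFun.integrable_sq {N : ℕ} {Ω : Set (Euc N)} {f : Euc N → ℝ} (hf : TestFun Ω f) :
    Integrable (fun x => f x ^ 2) := by
  simp_rw [sq]; exact hf.integrable_mul hf.continuous

/-- Poincaré's inequality on a bounded set. -/
lemma poincare {N : ℕ} [NeZero N] {Ω : Set (Euc N)} (hb : Bornology.IsBounded Ω) :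
    ∃ P : ℝ, 0 < P ∧ ∀ φ, TestFun Ω φ → ∫ x, φ x ^ 2 ≤ P * Bf φ φ := by
  obtain ⟨D, hD0, hD⟩ := hb.exists_pos_norm_le
  refine ⟨4 * D ^ 2, by positivity, fun φ hφ => ?_⟩
  have hpd := continuous_pd hφ.c1 (0 : Fin N)
  have h1 := ibp_open isOpen_univ (f := fun x : Euc N => x 0) (g := fun x => φ x ^ 2)
    (by fun_prop) (hφ.c1.pow 2) (by simp_rw [sq]; exact hφ.2.1.mul_left) (subset_univ _)
    (EuclideanSpace.single 0 1)
  have e1 : ∀ x, fderiv ℝ (fun x => φ x ^ 2) x (EuclideanSpace.single 0 1) =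
      2 * (φ x * pd 0 φ x) := by
    intro x
    rw [((hφ.differentiable x).hasFDerivAt.pow 2).fderiv]
    simp [pd]; ring
  have e2 : ∀ x : Euc N, fderiv ℝ (fun x : Euc N => x 0) x (EuclideanSpace.single 0 1) = 1 := by
    intro x
    have := (EuclideanSpace.proj (𝕜 := ℝ) (0 : Fin N) : Euc N →L[ℝ] ℝ).hasFDerivAt (x := x)
    have h2 : HasFDerivAt (fun x : Euc N => x 0) (EuclideanSpace.proj (𝕜 := ℝ) (0 : Fin N)) x := this
    rw [h2.fderiv]; simp
  simp_rw [e1, e2, one_mul] at h1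
  have hcs := integral_cs (μ := volume) (f := fun x : Euc N => x 0 * φ x) (g := fun x => pd 0 φ x)
    (((by fun_prop : Continuous fun x : Euc N => x 0).mul hφ.continuous).pow 2
      |>.integrable_of_hasCompactSupport (by simp_rw [sq]; exact (hφ.2.1.mul_left).mul_left))
    ((hpd.pow 2).integrable_of_hasCompactSupport (HasCompactSupport.intro hφ.2.1 fun x hx => by
      simp [pd_zero_of_notMem hx]))
    (((by fun_prop : Continuous fun x : Euc N => x 0).mul hφ.continuous).mul hpd
      |>.integrable_of_hasCompactSupport (hφ.2.1.mul_left.mul_right))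
  have e3 : ∫ x : Euc N, x 0 * (2 * (φ x * pd 0 φ x)) = 2 * ∫ x : Euc N, x 0 * φ x * pd 0 φ x := by
    rw [← integral_const_mul]; congr 1; ext x; ring
  have h3 : ∫ x : Euc N, (x 0 * φ x) ^ 2 ≤ D ^ 2 * ∫ x, φ x ^ 2 := by
    rw [← integral_const_mul]
    refine integral_mono_of_nonneg (Eventually.of_forall fun x => sq_nonneg _)
      (hφ.integrable_sq.const_mul _) (Eventually.of_forall fun x => ?_)
    simp only [mul_pow]
    by_cases hx : x ∈ Ω
    · have : |x 0| ≤ D := (PiLp.norm_apply_le x 0).trans (hD x hx)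
      have := sq_le_sq' (by linarith [neg_abs_le (x 0)]) ((le_abs_self _).trans this)
      gcongr
    · simp [hφ.zero_off x hx]
  have h4 : ∫ x, pd 0 φ x ^ 2 ≤ Bf φ φ := by
    refine integral_mono_of_nonneg (Eventually.of_forall fun x => sq_nonneg _)
      (integrable_dir hφ.c1 hφ.c1 hφ.2.1) (Eventually.of_forall fun x => ?_)
    simp only [dir, sq]
    exact Finset.single_le_sum (f := fun i => pd i φ x * pd i φ x)
      (fun i _ => mul_self_nonneg _) (Finset.mem_univ 0)
  set S := ∫ x, φ x ^ 2
  have hS : 0 ≤ S := integral_nonneg fun x => sq_nonneg _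
  have hP : 0 ≤ ∫ x, pd 0 φ x ^ 2 := integral_nonneg fun x => sq_nonneg _
  rw [e3] at h1
  rcases hS.eq_or_lt with h0 | h0
  · rw [← h0]; have := Bf_self_nonneg φ; positivity
  · have : S ^ 2 ≤ 4 * D ^ 2 * S * Bf φ φ := by
      calc S ^ 2 = 4 * (∫ x : Euc N, x 0 * φ x * pd 0 φ x) ^ 2 := by nlinarith
        _ ≤ 4 * ((D ^ 2 * S) * Bf φ φ) := by
          have := mul_le_mul h3 h4 hP (by positivity)
          linarith
        _ = _ := by ring
    nlinarith

/-! ### Weak solutions of the Dirichlet problem -/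

/-- `u` is the `L²`-limit of test functions `ζ n` that almost satisfy the weak form of `-Δu = h`. -/
structure WeakSol {N : ℕ} (Ω : Set (Euc N)) (h u : Euc N → ℝ) (ζ : ℕ → Euc N → ℝ) : Prop where
  test : ∀ n, TestFun Ω (ζ n)
  meas : Measurable u
  memLp : MemLp u 2 volume
  lim : Tendsto (fun n => ∫ x, (ζ n x - u x) ^ 2) atTop (𝓝 0)
  el : ∀ n φ, TestFun Ω φ → (Bf (ζ n) φ - ∫ x, h x * φ x) ^ 2 ≤ (1 / ((n : ℝ) + 1)) * Bf φ φ

lemma TestFun.memLp {N : ℕ} {Ω : Set (Euc N)} {f : Euc N → ℝ} (hf : TestFun Ω f) :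
    MemLp f 2 volume := hf.continuous.memLp_of_hasCompactSupport hf.2.1

lemma norm_sq_toLp {X : Type*} [MeasurableSpace X] {μ : Measure X} {f : X → ℝ}
    (hf : MemLp f 2 μ) : ‖hf.toLp f‖ ^ 2 = ∫ x, f x ^ 2 ∂μ := by
  rw [← real_inner_self_eq_norm_sq, L2.inner_def]
  refine integral_congr_ae ?_
  filter_upwards [hf.coeFn_toLp] with x hx
  rw [hx]; simp [sq]

/-- Completeness of `L²` in terms of functions. -/
lemma exists_L2_limit {N : ℕ} {ζ : ℕ → Euc N → ℝ} (hζ : ∀ n, MemLp (ζ n) 2 volume)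
    (hc : ∀ ε > 0, ∃ n0, ∀ n ≥ n0, ∀ m ≥ n0, ∫ x, (ζ n x - ζ m x) ^ 2 < ε) :
    ∃ u : Euc N → ℝ, Measurable u ∧ MemLp u 2 volume ∧
      Tendsto (fun n => ∫ x, (ζ n x - u x) ^ 2) atTop (𝓝 0) := by
  have hcs : CauchySeq fun n => (hζ n).toLp (ζ n) := by
    rw [Metric.cauchySeq_iff]
    intro ε hε
    obtain ⟨n0, h0⟩ := hc (ε ^ 2) (by positivity)
    refine ⟨n0, fun n hn m hm => ?_⟩
    rw [dist_eq_norm, ← MemLp.toLp_sub]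
    have := h0 n hn m hm
    have h2 := norm_sq_toLp ((hζ n).sub (hζ m))
    simp only [Pi.sub_apply] at h2
    rw [← h2] at this
    exact lt_of_pow_lt_pow_left₀ 2 hε.le this
  obtain ⟨U, hU⟩ := cauchySeq_tendsto_of_complete hcs
  refine ⟨U, (Lp.stronglyMeasurable U).measurable, Lp.memLp U, ?_⟩
  have h3 := tendsto_iff_norm_sub_tendsto_zero.1 hU
  have h4 := h3.pow 2
  rw [zero_pow two_ne_zero] at h4
  refine h4.congr fun n => ?_
  have h2 := norm_sq_toLp ((hζ n).sub (Lp.memLp U))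
  simp only [Pi.sub_apply] at h2
  rw [← h2, MemLp.toLp_sub (hζ n) (Lp.memLp U), Lp.toLp_coeFn]

/-- The linear form `φ ↦ ∫ h φ` is bounded in `L²`. -/
lemma l_bound {N : ℕ} {Ω : Set (Euc N)} (hb : Bornology.IsBounded Ω)
    {h : Euc N → ℝ} (hh : Continuous h) {φ : Euc N → ℝ} (hφ : TestFun Ω φ) :
    (∫ x, h x * φ x) ^ 2 ≤ (∫ x in Ω, h x ^ 2) * ∫ x, φ x ^ 2 := by
  have e1 : ∫ x, h x * φ x = ∫ x in Ω, h x * φ x :=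
    (setIntegral_eq_integral_of_forall_compl_eq_zero fun x hx => by
      rw [hφ.zero_off x hx, mul_zero]).symm
  have e2 : ∫ x, φ x ^ 2 = ∫ x in Ω, φ x ^ 2 :=
    (setIntegral_eq_integral_of_forall_compl_eq_zero fun x hx => by
      rw [hφ.zero_off x hx]; simp).symm
  rw [e1, e2]
  refine integral_cs ?_ hφ.integrable_sq.integrableOn (hφ.integrable_mul hh).integrableOn
  exact ((hh.pow 2).continuousOn.integrableOn_compact hb.isCompact_closure).mono_set subset_closure

/-- Almost-minimisers of the Dirichlet energy form a Cauchy sequence in `L²`, by Poincaré's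
inequality. -/
lemma exists_weakSol {N : ℕ} [NeZero N] {Ω : Set (Euc N)} (hb : Bornology.IsBounded Ω)
    {h : Euc N → ℝ} (hh : Continuous h) : ∃ u ζ, WeakSol Ω h u ζ := by
  obtain ⟨P, hP, hPoin⟩ := poincare hb
  have hI : 0 ≤ ∫ x in Ω, h x ^ 2 := integral_nonneg fun x => sq_nonneg _
  have key : ∀ n : ℕ, ∃ v, TestFun Ω v ∧ ∀ w, TestFun Ω w →
      (Bf v w - ∫ x, h x * w x) ^ 2 ≤ (1 / ((n : ℝ) + 1)) * Bf w w := fun n =>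
    exists_almost_min (P := TestFun Ω) testFun_zero (fun v w hv hw t => hv.add_smul hw t)
      (B := Bf) (l := fun w => ∫ x, h x * w x) (fun v w hv hw t => Bf_quad hv hw t)
      (fun v w hv hw t => by
        rw [← integral_const_mul, ← integral_add (hv.integrable_mul hh)
          ((hw.integrable_mul hh).const_mul t)]
        refine integral_congr_ae (Eventually.of_forall fun x => ?_)
        simp; ring) (C := ((∫ x in Ω, h x ^ 2) + 1) * P) (by positivity)
      (fun v hv => by
        have h1 := l_bound hb hh hv
        have h2 := hPoin v hv
        have h3 : 0 ≤ ∫ x, v x ^ 2 := integral_nonneg fun x => sq_nonneg _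
        calc _ ≤ _ := h1
          _ ≤ ((∫ x in Ω, h x ^ 2) + 1) * (P * Bf v v) := by gcongr; linarith
          _ = _ := by ring) (δ := 1 / ((n : ℝ) + 1)) (by positivity)
  choose ζ hζ hel using key
  have hBd : ∀ n m, Bf (ζ n + (-1 : ℝ) • ζ m) (ζ n + (-1 : ℝ) • ζ m) ≤
      2 * (1 / ((n : ℝ) + 1) + 1 / ((m : ℝ) + 1)) := by
    intro n m
    have ht := (hζ n).add_smul (hζ m) (-1)
    set w := ζ n + (-1 : ℝ) • ζ m
    have h1 := hel n w ht
    have h2 := hel m w ht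
    have h3 : Bf w w = Bf (ζ n) w + (-1) * Bf (ζ m) w := Bf_add_smul (hζ n) (hζ m) ht (-1)
    have h0 := Bf_self_nonneg w
    have h4 : Bf w w ^ 2 ≤ 2 * (1 / ((n : ℝ) + 1) + 1 / ((m : ℝ) + 1)) * Bf w w := by
      rw [h3] at h1 h2 ⊢
      nlinarith [sq_nonneg ((Bf (ζ n) w - ∫ x, h x * w x) + (Bf (ζ m) w - ∫ x, h x * w x))]
    rcases h0.eq_or_lt with h5 | h5
    · rw [← h5]; positivity
    · nlinarith
  obtain ⟨u, hu, hu2, hlim⟩ := exists_L2_limit (fun n => (hζ n).memLp) (by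
    intro ε hε
    obtain ⟨n0, hn0⟩ := exists_nat_one_div_lt (show 0 < ε / (4 * P) by positivity)
    refine ⟨n0, fun n hn m hm => ?_⟩
    have h1 := hPoin _ ((hζ n).add_smul (hζ m) (-1))
    have e : ∀ x, (ζ n + (-1 : ℝ) • ζ m) x = ζ n x - ζ m x := fun x => by simp; ring
    simp_rw [e] at h1
    refine h1.trans_lt ?_
    have a1 : 1 / ((n : ℝ) + 1) ≤ 1 / ((n0 : ℝ) + 1) := by gcongr
    have a2 : 1 / ((m : ℝ) + 1) ≤ 1 / ((n0 : ℝ) + 1) := by gcongr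
    have h2 := hBd n m
    have h3 : Bf (ζ n + (-1 : ℝ) • ζ m) (ζ n + (-1 : ℝ) • ζ m) < ε / P := by
      have : ε / P = 4 * (ε / (4 * P)) := by field_simp
      rw [this]; linarith
    calc _ < P * (ε / P) := by gcongr
      _ = ε := by field_simp)
  exact ⟨u, ζ, hζ, hu, hu2, hlim, hel⟩

lemma integrable_mul_L2 {X : Type*} [MeasurableSpace X] {μ : Measure X} {f g : X → ℝ}
    (hf : MemLp f 2 μ) (hg : MemLp g 2 μ) : Integrable (fun x => f x * g x) μ :=
  hf.integrable_mul hg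

/-- Strong `L²` convergence implies weak convergence. -/
lemma tendsto_integral_mul {X : Type*} [MeasurableSpace X] {μ : Measure X} {f : ℕ → X → ℝ}
    {g u : X → ℝ} (hf : ∀ n, MemLp (f n) 2 μ) (hg : MemLp g 2 μ) (hu : MemLp u 2 μ)
    (hlim : Tendsto (fun n => ∫ x, (f n x - u x) ^ 2 ∂μ) atTop (𝓝 0)) :
    Tendsto (fun n => ∫ x, g x * f n x ∂μ) atTop (𝓝 (∫ x, g x * u x ∂μ)) := by
  rw [tendsto_iff_norm_sub_tendsto_zero]
  have h1 : Tendsto (fun n => Real.sqrt ((∫ x, g x ^ 2 ∂μ) * ∫ x, (f n x - u x) ^ 2 ∂μ)) atTop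
      (𝓝 0) := by
    have := (hlim.const_mul (∫ x, g x ^ 2 ∂μ)).sqrt
    simpa using this
  refine squeeze_zero (fun n => norm_nonneg _) (fun n => ?_) h1
  rw [← integral_sub (integrable_mul_L2 hg (hf n)) (integrable_mul_L2 hg hu)]
  have e : ∀ x, g x * f n x - g x * u x = g x * (f n x - u x) := fun x => by ring
  simp_rw [e]
  refine Real.abs_le_sqrt ?_
  exact integral_cs hg.integrable_sq ((hf n).sub hu).integrable_sq
    (integrable_mul_L2 hg ((hf n).sub hu))

lemma WeakSol.tendsto_mul {N : ℕ} {Ω : Set (Euc N)} {h u : Euc N → ℝ} {ζ : ℕ → Euc N → ℝ}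
    (hw : WeakSol Ω h u ζ) {g : Euc N → ℝ} (hg : MemLp g 2 volume) :
    Tendsto (fun n => ∫ x, g x * ζ n x) atTop (𝓝 (∫ x, g x * u x)) :=
  tendsto_integral_mul (fun n => (hw.test n).memLp) hg hw.memLp hw.lim

lemma tendsto_zero_of_sq_le {a b : ℕ → ℝ} (h : ∀ n, a n ^ 2 ≤ b n) (hb : Tendsto b atTop (𝓝 0)) :
    Tendsto a atTop (𝓝 0) := by
  have h1 := hb.sqrt
  rw [Real.sqrt_zero] at h1
  exact squeeze_zero_norm (fun n => Real.abs_le_sqrt (h n)) h1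

lemma tendsto_inv_succ : Tendsto (fun n : ℕ => 1 / ((n : ℝ) + 1)) atTop (𝓝 0) :=
  tendsto_one_div_add_atTop_nhds_zero_nat

lemma WeakSol.tendsto_Bf {N : ℕ} {Ω : Set (Euc N)} {h u : Euc N → ℝ} {ζ : ℕ → Euc N → ℝ}
    (hw : WeakSol Ω h u ζ) {φ : Euc N → ℝ} (hφ : TestFun Ω φ) :
    Tendsto (fun n => Bf (ζ n) φ) atTop (𝓝 (∫ x, h x * φ x)) := by
  have := tendsto_zero_of_sq_le (fun n => hw.el n φ hφ)
    (by simpa using tendsto_inv_succ.mul_const (Bf φ φ))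
  simpa using this.add_const (∫ x, h x * φ x)

lemma TestFun.memLp_lap {N : ℕ} {Ω : Set (Euc N)} {φ : Euc N → ℝ} (hφ : TestFun Ω φ) :
    MemLp (lap φ) 2 volume :=
  (continuous_lap hφ.c2).memLp_of_hasCompactSupport
    (HasCompactSupport.of_support_subset_isCompact hφ.2.1
      ((subset_tsupport _).trans (tsupport_lap_subset _)))

/-- Weak solutions are distributional solutions. -/
lemma WeakSol.ds {N : ℕ} {Ω : Set (Euc N)} {h u : Euc N → ℝ} {ζ : ℕ → Euc N → ℝ}
    (hw : WeakSol Ω h u ζ) : DS Ω u h := by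
  intro φ hφ
  have h1 := hw.tendsto_Bf hφ
  have h2 := hw.tendsto_mul hφ.memLp_lap
  have e : ∀ n, Bf (ζ n) φ = -∫ x, lap φ x * ζ n x := fun n => by
    rw [Bf_comm, Bf_green hφ.c2 (hw.test n).c1 (hw.test n).2.1]
  simp_rw [e] at h1
  have h3 := tendsto_nhds_unique h1 h2.neg
  rw [h3, neg_neg]; congr 1; ext x; ring

/-- The energy of the approximating test functions converges to `∫ h u`. -/
lemma WeakSol.energy {N : ℕ} {Ω : Set (Euc N)} (hb : Bornology.IsBounded Ω) (ho : IsOpen Ω)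
    {h u : Euc N → ℝ} {ζ : ℕ → Euc N → ℝ}
    (hw : WeakSol Ω h u ζ) (hh : Continuous h) :
    Tendsto (fun n => Bf (ζ n) (ζ n)) atTop (𝓝 (∫ x in Ω, h x * u x)) := by
  have hm : MemLp (Ω.indicator h) 2 volume := by
    rw [memLp_indicator_iff_restrict ho.measurableSet]
    rw [memLp_two_iff_integrable_sq hh.aestronglyMeasurable]
    exact ((hh.pow 2).continuousOn.integrableOn_compact hb.isCompact_closure).mono_set
      subset_closure
  have h1 := hw.tendsto_mul hm
  have e1 : ∫ x, Ω.indicator h x * u x = ∫ x in Ω, h x * u x := by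
    rw [← integral_indicator ho.measurableSet]
    congr 1; ext x; by_cases hx : x ∈ Ω <;> simp [hx]
  have e2 : ∀ n, ∫ x, Ω.indicator h x * ζ n x = ∫ x, h x * ζ n x := by
    intro n; congr 1; ext x
    by_cases hx : x ∈ Ω
    · simp [hx]
    · simp [hx, (hw.test n).zero_off x hx]
  rw [e1] at h1
  simp_rw [e2] at h1
  set L := ∫ x in Ω, h x * u x
  -- the energies are bounded, since `(b - l)² ≤ δ b` with `l` bounded
  obtain ⟨C, hC⟩ := h1.abs.bddAbove_range
  have hC' : ∀ n, |∫ x, h x * ζ n x| ≤ C := fun n => hC ⟨n, rfl⟩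
  have hBb : ∀ n, Bf (ζ n) (ζ n) ≤ 2 * C + 2 := by
    intro n
    have a := hw.el n _ (hw.test n)
    have b := Bf_self_nonneg (ζ n)
    have c : 1 / ((n : ℝ) + 1) ≤ 1 := by
      rw [div_le_one (by positivity)]; linarith [n.cast_nonneg (α := ℝ)]
    have d := hC' n
    have d1 := abs_le.1 d
    by_contra! hlt
    have e := mul_le_mul_of_nonneg_right c b
    nlinarith
  have h2 := tendsto_zero_of_sq_le (a := fun n => Bf (ζ n) (ζ n) - ∫ x, h x * ζ n x)
    (b := fun n : ℕ => (1 / ((n : ℝ) + 1)) * (2 * C + 2))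
    (fun n => (hw.el n _ (hw.test n)).trans (by have := hBb n; gcongr))
    (by simpa using tendsto_inv_succ.mul_const (2 * C + 2))
  simpa using h2.add h1

/-! ### Weak comparison and the global subsolution property -/

lemma st_deriv_zero {s : ℝ} (h : s ∉ Icc (0 : ℝ) 1) : deriv Real.smoothTransition s = 0 := by
  rw [mem_Icc, not_and_or, not_le, not_le] at h
  rcases h with h | h
  · have : Real.smoothTransition =ᶠ[𝓝 s] fun _ => 0 := by
      filter_upwards [gt_mem_nhds h] with y hy using Real.smoothTransition.zero_of_nonpos hy.le
    rw [this.deriv_eq]; simp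
  · have : Real.smoothTransition =ᶠ[𝓝 s] fun _ => 1 := by
      filter_upwards [lt_mem_nhds h] with y hy using Real.smoothTransition.one_of_one_le hy.le
    rw [this.deriv_eq]; simp

lemma st_contDiff : ContDiff ℝ (⊤ : ℕ∞) Real.smoothTransition := Real.smoothTransition.contDiff

lemma st_hasDerivAt (s : ℝ) :
    HasDerivAt Real.smoothTransition (deriv Real.smoothTransition s) s :=
  (st_contDiff.differentiable (by simp) s).hasDerivAt

lemma st_deriv_nonneg (s : ℝ) : 0 ≤ deriv Real.smoothTransition s :=
  Real.smoothTransition.monotone.deriv_nonneg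

lemma st_deriv_bound : ∃ C : ℝ, 0 < C ∧ ∀ s, deriv Real.smoothTransition s ≤ C := by
  have h1 : Continuous (deriv Real.smoothTransition) :=
    st_contDiff.continuous_deriv one_le_top'
  obtain ⟨C, hC⟩ := (HasCompactSupport.intro isCompact_Icc
    fun s hs => st_deriv_zero hs).exists_bound_of_continuous h1
  exact ⟨|C| + 1, by positivity, fun s =>
    (le_abs_self _).trans ((hC s).trans ((le_abs_self C).trans (by linarith)))⟩

lemma st_lip {C : ℝ} (hC : ∀ s, deriv Real.smoothTransition s ≤ C) (a b : ℝ) :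
    |Real.smoothTransition a - Real.smoothTransition b| ≤ C * |a - b| := by
  have := convex_univ.norm_image_sub_le_of_norm_deriv_le (f := Real.smoothTransition) (C := C)
    (fun s _ => (st_hasDerivAt s).differentiableAt)
    (fun s _ => by rw [Real.norm_eq_abs, abs_of_nonneg (st_deriv_nonneg s)]; exact hC s)
    (mem_univ b) (mem_univ a)
  simpa using this

/-- Functions smooth on `Ω` and vanishing with a test function are test functions. -/
lemma testFun_indicator {N : ℕ} {Ω : Set (Euc N)} (ho : IsOpen Ω) {ζ f : Euc N → ℝ}
    (hζ : TestFun Ω ζ) (hf : ContDiffOn ℝ (⊤ : ℕ∞) f Ω) (h0 : ∀ x ∈ Ω, ζ x = 0 → f x = 0) :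
    TestFun Ω (Ω.indicator f) := by
  have hsupp : tsupport (Ω.indicator f) ⊆ tsupport ζ := by
    refine closure_mono fun x hx hz => hx ?_
    by_cases h : x ∈ Ω
    · rw [indicator_of_mem h, h0 x h hz]
    · rw [indicator_of_notMem h]
  refine ⟨contDiff_iff_contDiffAt.2 fun x => ?_, ?_, hsupp.trans hζ.2.2⟩
  · by_cases hx : x ∈ Ω
    · refine (hf.contDiffAt (ho.mem_nhds hx)).congr_of_eventuallyEq ?_
      filter_upwards [ho.mem_nhds hx] with y hy using indicator_of_mem hy f
    · have hx' : x ∉ tsupport (Ω.indicator f) := fun h => hx (hζ.2.2 (hsupp h))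
      have : Ω.indicator f =ᶠ[𝓝 x] fun _ => 0 := by
        filter_upwards [(isClosed_tsupport _).isOpen_compl.mem_nhds hx'] with y hy
          using image_eq_zero_of_notMem_tsupport hy
      exact contDiffAt_const.congr_of_eventuallyEq this
  · exact HasCompactSupport.of_support_subset_isCompact hζ.2.1 ((subset_tsupport _).trans hsupp)

lemma pd_congr {N : ℕ} {f g : Euc N → ℝ} {x : Euc N} (h : f =ᶠ[𝓝 x] g) (i : Fin N) :
    pd i f x = pd i g x := by unfold pd; rw [h.fderiv_eq]

lemma pd_comp {N : ℕ} {g : ℝ → ℝ} {g' : ℝ} {f : Euc N → ℝ} {x : Euc N}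
    (hg : HasDerivAt g g' (f x)) (hf : DifferentiableAt ℝ f x) (i : Fin N) :
    pd i (fun x => g (f x)) x = g' * pd i f x := by
  unfold pd
  have e : (fun x => g (f x)) = g ∘ f := rfl
  rw [e, (hg.comp_hasFDerivAt x hf.hasFDerivAt).fderiv]; simp

lemma pd_sub {N : ℕ} {f g : Euc N → ℝ} {x : Euc N} (hf : DifferentiableAt ℝ f x)
    (hg : DifferentiableAt ℝ g x) (i : Fin N) :
    pd i (fun x => f x - g x) x = pd i f x - pd i g x := by
  unfold pd; rw [fderiv_fun_sub hf hg]; simp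

lemma pd_mul {N : ℕ} {f g : Euc N → ℝ} {x : Euc N} (hf : DifferentiableAt ℝ f x)
    (hg : DifferentiableAt ℝ g x) (i : Fin N) :
    pd i (fun x => f x * g x) x = f x * pd i g x + g x * pd i f x := by
  unfold pd; rw [fderiv_fun_mul hf hg]; simp

/-- Weak comparison with a smooth supersolution. -/
lemma WeakSol.le {N : ℕ} [NeZero N] {Ω : Set (Euc N)} (hb : Bornology.IsBounded Ω)
    (ho : IsOpen Ω) {h u : Euc N → ℝ} {ζ : ℕ → Euc N → ℝ} (hw : WeakSol Ω h u ζ)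
    (hh : Continuous h) {w : Euc N → ℝ} (hws : ContDiff ℝ (⊤ : ℕ∞) w) (hw0 : ∀ x ∈ Ω, 0 ≤ w x)
    (hlap : ∀ x ∈ Ω, h x ≤ -lap w x) : ∀ᵐ x ∂volume.restrict Ω, u x ≤ w x := by
  obtain ⟨C, hC0, hC⟩ := st_deriv_bound
  obtain ⟨P, hP, hPoin⟩ := poincare hb
  have hwd : Differentiable ℝ w := hws.differentiable (by simp)
  -- The equation is tested with a smooth truncation of the positive part of `ζ n - w`.
  set S := Real.smoothTransition with hS
  set θ : ℕ → Euc N → ℝ := fun n => Ω.indicator fun x => S (ζ n x - w x) with hθ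
  have htest : ∀ n, TestFun Ω (θ n) := fun n =>
    testFun_indicator ho (hw.test n)
      (st_contDiff.comp ((hw.test n).1.sub hws)).contDiffOn
      fun x hx hz => Real.smoothTransition.zero_of_nonpos (by rw [hz]; linarith [hw0 x hx])
  have hθ0 : ∀ n x, 0 ≤ θ n x := fun n x => indicator_nonneg
    (fun x _ => Real.smoothTransition.nonneg _) x
  have hpd : ∀ n i, ∀ x ∈ Ω, pd i (θ n) x =
      deriv S (ζ n x - w x) * (pd i (ζ n) x - pd i w x) := by
    intro n i x hx
    have e : θ n =ᶠ[𝓝 x] fun x => S (ζ n x - w x) := by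
      filter_upwards [ho.mem_nhds hx] with y hy using indicator_of_mem hy _
    rw [pd_congr e, pd_comp (f := fun x => ζ n x - w x) (st_hasDerivAt _)
      (((hw.test n).differentiable x).sub (hwd x)),
      pd_sub ((hw.test n).differentiable x) (hwd x)]
  have hB : ∀ n, Bf (θ n) (θ n) ≤ C ^ 2 * (1 / ((n : ℝ) + 1)) := by
    intro n
    have h1 : C⁻¹ * Bf (θ n) (θ n) ≤ Bf (ζ n) (θ n) - Bf w (θ n) := by
      unfold Bf
      have t1 := htest n
      rw [← integral_const_mul, ← integral_sub (integrable_dir (hw.test n).c1 t1.c1 t1.2.1)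
        (integrable_dir (hws.of_le one_le_top') t1.c1 t1.2.1)]
      refine integral_mono ((integrable_dir t1.c1 t1.c1 t1.2.1).const_mul _)
        ((integrable_dir (hw.test n).c1 t1.c1 t1.2.1).sub
        (integrable_dir (hws.of_le one_le_top') t1.c1 t1.2.1)) fun x => ?_
      by_cases hx : x ∈ Ω
      · simp only [dir, Finset.mul_sum, ← Finset.sum_sub_distrib]
        refine Finset.sum_le_sum fun i _ => ?_
        rw [hpd n i x hx]
        have d0 : 0 ≤ deriv S (ζ n x - w x) := st_deriv_nonneg _
        have d1 : deriv S (ζ n x - w x) ≤ C := hC _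
        generalize deriv S (ζ n x - w x) = d at d0 d1
        generalize pd i (ζ n) x = a
        generalize pd i w x = b
        have : C⁻¹ * d ≤ 1 := by rw [inv_mul_le_iff₀ hC0]; linarith
        have : 0 ≤ (1 - C⁻¹ * d) * (d * (a - b) ^ 2) :=
          mul_nonneg (by linarith) (mul_nonneg d0 (sq_nonneg _))
        nlinarith
      · have : x ∉ tsupport (θ n) := fun h' => hx (t1.2.2 h')
        simp [dir_zero_of_notMem this]
    have h2 : ∫ x, h x * θ n x ≤ Bf w (θ n) := by
      rw [Bf_green (hws.of_le two_le_top') (htest n).c1 (htest n).2.1, ← integral_neg]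
      refine integral_mono ((htest n).integrable_mul hh)
        (((htest n).integrable_mul (continuous_lap (hws.of_le two_le_top'))).neg) fun x => ?_
      by_cases hx : x ∈ Ω
      · have := mul_le_mul_of_nonneg_right (hlap x hx) (hθ0 n x)
        simp only; linarith
      · simp [(htest n).zero_off x hx]
    have h3 := hw.el n _ (htest n)
    have h4 := Bf_self_nonneg (θ n)
    set b := Bf (θ n) (θ n)
    have h5 : C⁻¹ * b ≤ Bf (ζ n) (θ n) - ∫ x, h x * θ n x := by linarith
    have h6 : (C⁻¹ * b) ^ 2 ≤ (1 / ((n : ℝ) + 1)) * b :=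
      (pow_le_pow_left₀ (by positivity) h5 2).trans h3
    rcases h4.eq_or_lt with h7 | h7
    · rw [← h7]; positivity
    · have : (C⁻¹) ^ 2 * b ≤ 1 / ((n : ℝ) + 1) := by
        refine le_of_mul_le_mul_right ?_ h7
        nlinarith
      calc b = C ^ 2 * ((C⁻¹) ^ 2 * b) := by field_simp
        _ ≤ _ := by gcongr
  have hθ2 : Tendsto (fun n => ∫ x, θ n x ^ 2) atTop (𝓝 0) := by
    refine squeeze_zero (g := fun n : ℕ => P * (C ^ 2 * (1 / ((n : ℝ) + 1))))
      (fun n => integral_nonneg fun x => sq_nonneg _)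
      (fun n => (hPoin _ (htest n)).trans (by have := hB n; gcongr)) ?_
    simpa using (tendsto_inv_succ.const_mul (C ^ 2)).const_mul P
  set T : Euc N → ℝ := Ω.indicator fun x => S (u x - w x) with hT
  have hTle : ∀ n x, T x ^ 2 ≤ 2 * θ n x ^ 2 + 2 * C ^ 2 * (ζ n x - u x) ^ 2 := by
    intro n x
    by_cases hx : x ∈ Ω
    · simp only [hT, hθ, indicator_of_mem hx]
      have := st_lip hC (ζ n x - w x) (u x - w x)
      rw [show ζ n x - w x - (u x - w x) = ζ n x - u x by ring] at this
      have h2 : (S (ζ n x - w x) - S (u x - w x)) ^ 2 ≤ C ^ 2 * (ζ n x - u x) ^ 2 := by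
        rw [← mul_pow, sq_le_sq, abs_mul, abs_of_pos hC0]; exact this
      nlinarith [sq_nonneg (2 * S (ζ n x - w x) - S (u x - w x))]
    · simp only [hT, hθ, indicator_of_notMem hx, zero_pow two_ne_zero]; positivity
  have hintg : ∀ n, Integrable fun x => 2 * θ n x ^ 2 + 2 * C ^ 2 * (ζ n x - u x) ^ 2 := fun n =>
    ((htest n).integrable_sq.const_mul 2).add
      (((hw.test n).memLp.sub hw.memLp).integrable_sq.const_mul _)
  have hTm : Measurable T :=
    (Real.smoothTransition.continuous.measurable.comp
      (hw.meas.sub hws.continuous.measurable)).indicator ho.measurableSet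
  have hTi : Integrable fun x => T x ^ 2 :=
    (hintg 0).mono' (hTm.pow_const 2).aestronglyMeasurable
      (Eventually.of_forall fun x => by
        rw [Real.norm_eq_abs, abs_of_nonneg (sq_nonneg _)]; exact hTle 0 x)
  have hT0 : ∫ x, T x ^ 2 = 0 := by
    refine le_antisymm ?_ (integral_nonneg fun x => sq_nonneg _)
    have hl := (hθ2.const_mul 2).add (hw.lim.const_mul (2 * C ^ 2))
    simp only [mul_zero, add_zero] at hl
    refine ge_of_tendsto' hl fun n => ?_
    rw [← integral_const_mul, ← integral_const_mul, ← integral_add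
      ((htest n).integrable_sq.const_mul 2)
      (by exact ((hw.test n).memLp.sub hw.memLp).integrable_sq.const_mul _)]
    exact integral_mono hTi (hintg n) (hTle n)
  rw [integral_eq_zero_iff_of_nonneg (fun x => sq_nonneg _) hTi] at hT0
  rw [ae_restrict_iff' ho.measurableSet]
  filter_upwards [hT0] with x hx hxΩ
  by_contra! hlt
  have : S (u x - w x) = 0 := by simpa [hT, indicator_of_mem hxΩ] using hx
  have h2 := Real.smoothTransition.pos_of_pos (x := u x - w x) (by linarith)
  exact absurd this h2.ne'

lemma WeakSol.neg {N : ℕ} {Ω : Set (Euc N)} {h u : Euc N → ℝ} {ζ : ℕ → Euc N → ℝ}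
    (hw : WeakSol Ω h u ζ) :
    WeakSol Ω (fun x => -h x) (fun x => -u x) (fun n => 0 + (-1 : ℝ) • ζ n) where
  test n := testFun_zero.add_smul (hw.test n) _
  meas := hw.meas.neg
  memLp := hw.memLp.neg
  lim := by
    refine hw.lim.congr fun n => ?_
    congr 1; ext x; simp; ring
  el n φ hφ := by
    rw [Bf_add_smul testFun_zero (hw.test n) hφ]
    have e : Bf (0 : Euc N → ℝ) φ = 0 := by
      unfold Bf dir pd
      simp [show fderiv ℝ (0 : Euc N → ℝ) = 0 from funext fun x => by simp]
    rw [e]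
    simp only [neg_mul, integral_neg]
    convert hw.el n φ hφ using 1; ring

/-- A weak solution vanishes almost everywhere off `Ω`, as an `L²` limit of test functions. -/
lemma WeakSol.zero_off {N : ℕ} {Ω : Set (Euc N)} (ho : IsOpen Ω)
    {h u : Euc N → ℝ} {ζ : ℕ → Euc N → ℝ}
    (hw : WeakSol Ω h u ζ) : ∀ᵐ x, x ∉ Ω → u x = 0 := by
  have hintg := fun n => ((hw.test n).memLp.sub hw.memLp).integrable_sq
  set T : Euc N → ℝ := Ωᶜ.indicator u
  have hTle : ∀ n x, T x ^ 2 ≤ (ζ n x - u x) ^ 2 := by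
    intro n x
    by_cases hx : x ∈ Ω
    · simp only [T]; rw [indicator_of_notMem (by simpa using hx), zero_pow two_ne_zero]; positivity
    · simp only [T]; rw [indicator_of_mem (by simpa using hx), (hw.test n).zero_off x hx]; simp
  have hTi : Integrable fun x => T x ^ 2 := (hintg 0).mono'
    ((hw.meas.indicator ho.measurableSet.compl).pow_const 2).aestronglyMeasurable
      (Eventually.of_forall fun x => by
        rw [Real.norm_eq_abs, abs_of_nonneg (sq_nonneg _)]; exact hTle 0 x)
  have hT0 : ∫ x, T x ^ 2 = 0 := le_antisymm
    (ge_of_tendsto' hw.lim fun n => integral_mono hTi (hintg n) (hTle n))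
    (integral_nonneg fun x => sq_nonneg _)
  rw [integral_eq_zero_iff_of_nonneg (fun x => sq_nonneg _) hTi] at hT0
  filter_upwards [hT0] with x hx hxΩ
  simpa [T, hxΩ] using hx

/-! ### Exterior balls and barriers -/

lemma frontier_props {N : ℕ} {Ω : Set (Euc N)} {F : Euc N → ℝ} (hF : Continuous F)
    (hΩ : Ω = {x | F x < 0}) {x : Euc N} (hx : x ∈ frontier Ω) : F x = 0 := by
  have h1 : x ∈ frontier {x | F x < 0} := hΩ ▸ hx
  exact frontier_lt_subset_eq hF continuous_const h1

/-- A `C³` domain satisfies a uniform exterior ball condition. -/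
lemma exists_ext_ball {N : ℕ} {Ω : Set (Euc N)} (hΩ : IsC3Domain Ω) :
    ∃ s : ℝ, 0 < s ∧ ∀ x0 ∈ frontier Ω, ∃ y0 : Euc N, ‖x0 - y0‖ = s ∧
      ∀ x ∈ Ω, s ≤ ‖x - y0‖ := by
  obtain ⟨ho, -, hb, F, hF, hΩF, hne⟩ := hΩ
  have hcomp : IsCompact (frontier Ω) :=
    hb.isCompact_closure.of_isClosed_subset isClosed_frontier frontier_subset_closure
  have hF1 : Continuous (fderiv ℝ F) := hF.continuous_fderiv (by norm_num)
  obtain ⟨m, hm, hmle⟩ := hcomp.exists_forall_le' (f := fun x => ‖fderiv ℝ F x‖) (a := 0)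
    hF1.norm.continuousOn fun x hx => norm_pos_iff.2 (hne x hx)
  obtain ⟨R, hR⟩ := hb.subset_closedBall (0 : Euc N)
  have hR' : closure Ω ⊆ Metric.closedBall 0 R :=
    closure_minimal hR Metric.isClosed_closedBall
  have hF2 : ContDiff ℝ 1 (fderiv ℝ F) := hF.fderiv_right (by norm_num)
  obtain ⟨M, hM⟩ := (isCompact_closedBall (0 : Euc N) (R + 2)).exists_bound_of_continuousOn
    (hF2.continuous_fderiv (by norm_num)).continuousOn
  set L := |M| + 1
  have hL : 0 < L := by positivity
  have hLip : ∀ x ∈ Metric.closedBall (0 : Euc N) (R + 2), ∀ y ∈ Metric.closedBall (0 : Euc N) (R + 2),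
      ‖fderiv ℝ F y - fderiv ℝ F x‖ ≤ L * ‖y - x‖ := fun x hx y hy =>
    (convex_closedBall _ _).norm_image_sub_le_of_norm_fderiv_le
      (fun z _ => hF2.differentiable (by norm_num) z)
      (fun z hz => (hM z hz).trans ((le_abs_self M).trans (by simp [L]))) hx hy
  refine ⟨min 1 (m / (2 * L)), by positivity, fun x0 hx0 => ?_⟩
  set s := min 1 (m / (2 * L))
  have hs0 : 0 < s := by positivity
  have hs1 : s ≤ 1 := min_le_left _ _
  have hs2 : s * (2 * L) ≤ m := (le_div_iff₀ (by positivity)).1 (min_le_right _ _)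
  set g : Euc N := (InnerProductSpace.toDual ℝ (Euc N)).symm (fderiv ℝ F x0) with hg
  have hgn : ‖g‖ = ‖fderiv ℝ F x0‖ := by rw [hg]; simp
  have hg1 : m ≤ ‖g‖ := hgn ▸ hmle x0 hx0
  have hg0 : 0 < ‖g‖ := hm.trans_le hg1
  have hgi : ∀ v, fderiv ℝ F x0 v = inner ℝ g v := fun v => by
    rw [hg, InnerProductSpace.toDual_symm_apply]
  -- The centre lies at distance `s` along the outer normal. A point of `Ω` in the ball would have
  -- `F > 0`, since the gradient term dominates the quadratic Taylor remainder when `2 L s ≤ m`.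
  refine ⟨x0 + (s / ‖g‖) • g, ?_, fun x hx => ?_⟩
  · rw [sub_add_cancel_left, norm_neg, norm_smul, Real.norm_eq_abs, abs_of_pos (by positivity)]
    field_simp
  by_contra! hlt
  set v := x - x0 with hv
  have hxe : x - (x0 + (s / ‖g‖) • g) = v - (s / ‖g‖) • g := by rw [hv]; abel
  rw [hxe] at hlt
  have h1 : ‖v‖ ^ 2 < 2 * (s / ‖g‖) * inner ℝ g v := by
    have h2 := norm_sub_sq_real v ((s / ‖g‖) • g)
    have h3 : ‖v - (s / ‖g‖) • g‖ ^ 2 < s ^ 2 := by gcongr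
    have h4 : ‖(s / ‖g‖) • g‖ = s := by
      rw [norm_smul, Real.norm_eq_abs, abs_of_pos (by positivity)]; field_simp
    rw [h2, h4, inner_smul_right, real_inner_comm] at h3
    linarith
  have hvn : ‖v‖ ≤ 2 := by
    have h4 : ‖(s / ‖g‖) • g‖ = s := by
      rw [norm_smul, Real.norm_eq_abs, abs_of_pos (by positivity)]; field_simp
    have := norm_sub_norm_le v ((s / ‖g‖) • g)
    linarith
  have hx0R : ‖x0‖ ≤ R := by simpa using hR' (frontier_subset_closure hx0)
  have hsub : Metric.closedBall x0 ‖v‖ ⊆ Metric.closedBall (0 : Euc N) (R + 2) :=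
    Metric.closedBall_subset_closedBall' (by rw [dist_zero_right]; linarith)
  have h5 := (convex_closedBall x0 ‖v‖).norm_image_sub_le_of_norm_fderiv_le' (f := F)
    (φ := fderiv ℝ F x0) (C := L * ‖v‖) (x := x0) (y := x)
    (fun z _ => hF.differentiable (by norm_num) z)
    (fun z hz => (hLip x0 (hsub (by simp)) z (hsub hz)).trans (by
      have : ‖z - x0‖ ≤ ‖v‖ := by simpa [dist_eq_norm] using hz
      gcongr)) (by simp) (by simp [dist_eq_norm, hv])
  rw [frontier_props hF.continuous hΩF hx0, sub_zero, ← hv, hgi, Real.norm_eq_abs] at h5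
  have h6 : F x < 0 := by rw [hΩF] at hx; exact hx
  have h7 := (abs_le.1 h5).1
  -- `⟨g, v⟩ > |v|² |g| / (2 s) ≥ L |v|²`
  have h8 : inner ℝ g v < L * ‖v‖ ^ 2 := by nlinarith
  have h9 : ‖v‖ ^ 2 * ‖g‖ < 2 * s * inner ℝ g v := by
    have := mul_lt_mul_of_pos_right h1 hg0
    calc _ < _ := this
      _ = _ := by field_simp
  have h10 : 0 ≤ ‖v‖ ^ 2 := sq_nonneg _
  nlinarith [mul_le_mul_of_nonneg_left hg1 h10]

/-- Barriers at boundary points, with linear growth uniform in the point. -/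
lemma exists_barrier {N : ℕ} [NeZero N] {Ω : Set (Euc N)} (hΩ : IsC3Domain Ω) :
    ∃ C : ℝ, 0 < C ∧ ∀ x0 ∈ frontier Ω, ∃ w : Euc N → ℝ, ContDiff ℝ (⊤ : ℕ∞) w ∧
      (∀ x ∈ Ω, 0 ≤ w x) ∧ (∀ x ∈ Ω, 1 ≤ -lap w x) ∧ ∀ x ∈ Ω, w x ≤ C * ‖x - x0‖ := by
  obtain ⟨s, hs, hball⟩ := exists_ext_ball hΩ
  obtain ⟨R, hR0, hR⟩ := hΩ.2.2.1.subset_closedBall_lt 0 (0 : Euc N)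
  have hR' : closure Ω ⊆ Metric.closedBall 0 R :=
    closure_minimal hR Metric.isClosed_closedBall
  have hN : (0 : ℝ) < N := Nat.cast_pos.2 (NeZero.pos N)
  -- The barrier is `A (exp(-k s²) - exp(-k |x - y0|²))` for an exterior ball of centre `y0`.
  set k := (N : ℝ) / s ^ 2 with hk
  have hk0 : 0 < k := by positivity
  set D := 2 * R + s
  set A := Real.exp (k * D ^ 2) / (2 * N * k) with hA
  have hA0 : 0 < A := by positivity
  refine ⟨A * k * (2 * R + 2 * s), by positivity, fun x0 hx0 => ?_⟩
  obtain ⟨y0, hy0, hy⟩ := hball x0 hx0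
  have hx0R : ‖x0‖ ≤ R := by simpa using hR' (frontier_subset_closure hx0)
  have hxR : ∀ x ∈ Ω, ‖x - x0‖ ≤ 2 * R := fun x hx => by
    have h1 : ‖x‖ ≤ R := by simpa using hR hx
    linarith [norm_sub_le x x0]
  have hxy : ∀ x, ‖x - y0‖ ≤ ‖x - x0‖ + s := fun x => by
    rw [← hy0]; exact norm_sub_le_norm_sub_add_norm_sub _ _ _
  have hd : ∀ τ, HasDerivAt (fun τ => A * (Real.exp (-(k * s ^ 2)) - Real.exp (-(k * τ))))
      (A * k * Real.exp (-(k * τ))) τ := fun τ => by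
    have := ((((hasDerivAt_id τ).const_mul k).neg.exp).const_sub
      (Real.exp (-(k * s ^ 2)))).const_mul A
    exact this.congr_deriv (by simp only [Pi.neg_apply, id]; ring)
  have hd2 : ∀ τ, HasDerivAt (fun τ => A * k * Real.exp (-(k * τ)))
      (-(A * k ^ 2 * Real.exp (-(k * τ)))) τ := fun τ => by
    have := ((((hasDerivAt_id τ).const_mul k).neg.exp)).const_mul (A * k)
    exact this.congr_deriv (by simp only [Pi.neg_apply, id]; ring)
  refine ⟨fun x => A * (Real.exp (-(k * s ^ 2)) - Real.exp (-(k * ‖x - y0‖ ^ 2))), ?_, ?_, ?_, ?_⟩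
  · exact contDiff_const.mul (contDiff_const.sub
      ((contDiff_const.mul ((contDiff_id.sub contDiff_const).norm_sq ℝ)).neg.exp))
  · intro x hx
    refine mul_nonneg hA0.le (sub_nonneg.2 (Real.exp_le_exp.2 ?_))
    have := hy x hx
    have : s ^ 2 ≤ ‖x - y0‖ ^ 2 := by gcongr
    nlinarith
  · intro x hx
    rw [lap_radial hd hd2]
    have h1 : s ^ 2 ≤ ‖x - y0‖ ^ 2 := by have := hy x hx; gcongr
    have h2 : ‖x - y0‖ ^ 2 ≤ D ^ 2 := by
      have := (hxy x).trans (add_le_add_left (hxR x hx) s)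
      gcongr
    set τ := ‖x - y0‖ ^ 2
    have h3 : (N : ℝ) ≤ k * τ := by
      calc (N : ℝ) = k * s ^ 2 := by rw [hk]; field_simp
        _ ≤ _ := by gcongr
    have h4 : Real.exp (-(k * D ^ 2)) ≤ Real.exp (-(k * τ)) := by
      apply Real.exp_le_exp.2; nlinarith
    have h5 : A * (2 * N * k) * Real.exp (-(k * D ^ 2)) = 1 := by
      rw [hA, div_mul_cancel₀ _ (by positivity), ← Real.exp_add]; simp
    have h6 : 0 ≤ A * k * Real.exp (-(k * τ)) := by positivity
    have h7 : A * (2 * N * k) * Real.exp (-(k * D ^ 2)) ≤ A * (2 * N * k) * Real.exp (-(k * τ)) := by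
      gcongr
    nlinarith [mul_le_mul_of_nonneg_left h3 h6]
  · intro x hx
    have h1 : s ^ 2 ≤ ‖x - y0‖ ^ 2 := by have := hy x hx; gcongr
    have h2 : ‖x - y0‖ ^ 2 - s ^ 2 ≤ (2 * R + 2 * s) * ‖x - x0‖ := by
      have a := hxy x
      have b : ‖x - y0‖ ^ 2 ≤ (‖x - x0‖ + s) ^ 2 := by gcongr
      nlinarith [hxR x hx, norm_nonneg (x - x0)]
    set τ := ‖x - y0‖ ^ 2
    have h3 : Real.exp (-(k * s ^ 2)) - Real.exp (-(k * τ)) ≤ k * (τ - s ^ 2) := by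
      have e1 : Real.exp (-(k * τ)) = Real.exp (-(k * s ^ 2)) * Real.exp (-(k * (τ - s ^ 2))) := by
        rw [← Real.exp_add]; ring_nf
      have e2 := Real.add_one_le_exp (-(k * (τ - s ^ 2)))
      have e3 : Real.exp (-(k * s ^ 2)) ≤ 1 := Real.exp_le_one_iff.2 (by nlinarith [sq_nonneg s])
      have e4 := (Real.exp_pos (-(k * s ^ 2))).le
      have e5 : 0 ≤ k * (τ - s ^ 2) := mul_nonneg hk0.le (by linarith)
      rw [e1]
      nlinarith
    calc _ ≤ A * (k * (τ - s ^ 2)) := by simp only; gcongr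
      _ ≤ A * (k * ((2 * R + 2 * s) * ‖x - x0‖)) := by gcongr
      _ = _ := by ring

lemma exists_frontier_near {N : ℕ} {Ω : Set (Euc N)} {x y : Euc N} (hx : x ∈ Ω) (hy : y ∉ Ω) :
    ∃ z ∈ frontier Ω, ‖x - z‖ ≤ ‖x - y‖ := by
  obtain ⟨z, hz, hzf⟩ : ∃ z ∈ segment ℝ x y, z ∈ frontier Ω := by
    by_contra! hcon
    have hintg : ∀ z ∈ segment ℝ x y, z ∈ closure Ω → z ∈ interior Ω := fun z hz hzc => by
      by_contra hzi; exact hcon z hz ⟨hzc, hzi⟩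
    obtain ⟨z, -, hz1, hz2⟩ := (convex_segment (𝕜 := ℝ) x y).isPreconnected (interior Ω)
      (closure Ω)ᶜ isOpen_interior isClosed_closure.isOpen_compl
      (fun z hz => by
        by_cases h : z ∈ closure Ω
        · exact Or.inl (hintg z hz h)
        · exact Or.inr h)
      ⟨x, left_mem_segment ℝ x y, hintg x (left_mem_segment ℝ x y) (subset_closure hx)⟩
      ⟨y, right_mem_segment ℝ x y, fun h => hy
        (interior_subset (hintg y (right_mem_segment ℝ x y) h))⟩
    exact hz2 (subset_closure (interior_subset hz1))
  refine ⟨z, hzf, ?_⟩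
  have := norm_sub_le_of_mem_segment hz
  rw [norm_sub_rev x z, norm_sub_rev x y]; exact this

/-! ### Estimates for averages and potentials -/

/-- An `L¹` Lipschitz bound for translations of a kernel. -/
lemma exists_transl {N : ℕ} {k : Euc N → ℝ} (hk : ContDiff ℝ 1 k)
    (hs : ∀ y, 1 < ‖y‖ → k y = 0) :
    ∃ C : ℝ, 0 ≤ C ∧ ∀ v : Euc N, ∫ y, |k y - k (y + v)| ≤ C * ‖v‖ := by
  have hc : HasCompactSupport k := hasCompactSupport_of_ball hs
  have hki : Integrable k := integrable_of_hcs hk.continuous hc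
  obtain ⟨L, hL⟩ := (hc.fderiv ℝ).exists_bound_of_continuous (hk.continuous_fderiv (by norm_num))
  have hL0 : 0 ≤ L := (norm_nonneg _).trans (hL 0)
  set V := (volume (Metric.closedBall (0 : Euc N) 2)).toReal
  refine ⟨L * V + 2 * ∫ y, |k y|, by
    have : 0 ≤ ∫ y, |k y| := integral_nonneg fun _ => abs_nonneg _
    positivity, fun v => ?_⟩
  have hI0 : 0 ≤ ∫ y, |k y| := integral_nonneg fun _ => abs_nonneg _
  have hV0 : 0 ≤ V := ENNReal.toReal_nonneg
  have hi2 : Integrable fun y => k (y + v) := hki.comp_add_right v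
  rcases le_or_gt ‖v‖ 1 with hv | hv
  · have h1 : ∀ y, |k y - k (y + v)| ≤
        (Metric.closedBall (0 : Euc N) 2).indicator (fun _ => L * ‖v‖) y := by
      intro y
      by_cases hy : y ∈ Metric.closedBall (0 : Euc N) 2
      · rw [indicator_of_mem hy]
        have := convex_univ.norm_image_sub_le_of_norm_fderiv_le (f := k) (C := L)
          (fun z _ => hk.differentiable (by norm_num) z) (fun z _ => hL z)
          (mem_univ (y + v)) (mem_univ y)
        simpa [norm_neg] using this
      · rw [indicator_of_notMem hy]
        have hy2 : 2 < ‖y‖ := by simpa using hy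
        have : 1 < ‖y + v‖ := by
          have := norm_sub_norm_le y (-v)
          rw [sub_neg_eq_add, norm_neg] at this; linarith
        rw [hs y (by linarith), hs _ this]; simp
    calc _ ≤ ∫ y, (Metric.closedBall (0 : Euc N) 2).indicator (fun _ => L * ‖v‖) y := by
          refine integral_mono (hki.sub hi2).abs ?_ h1
          exact (integrable_indicator_iff Metric.isClosed_closedBall.measurableSet).2
            (integrableOn_const (isCompact_closedBall _ _).measure_lt_top.ne)
      _ = V * (L * ‖v‖) := by
          rw [integral_indicator_const _ Metric.isClosed_closedBall.measurableSet]
          rfl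
      _ ≤ _ := by nlinarith [norm_nonneg v]
  · calc _ ≤ ∫ y, (|k y| + |k (y + v)|) :=
          integral_mono (hki.sub hi2).abs (hki.abs.add hi2.abs) fun y => abs_sub _ _
      _ = 2 * ∫ y, |k y| := by
          rw [integral_add hki.abs hi2.abs, integral_add_right_eq_self (fun y => |k y|) v]; ring
      _ ≤ _ := by nlinarith [mul_nonneg hL0 hV0]

/-- Averages of bounded functions are Lipschitz at the scale of the average. -/
lemma exists_avg_lip {N : ℕ} {k : Euc N → ℝ} (hk : ContDiff ℝ 1 k)
    (hs : ∀ y, 1 < ‖y‖ → k y = 0) :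
    ∃ C : ℝ, 0 ≤ C ∧ ∀ (f : Euc N → ℝ) (B M s : ℝ) (x x' : Euc N), Measurable f →
      (∀ z, |f z| ≤ B) → 0 < s → (∀ z, ‖z - x‖ ≤ s ∨ ‖z - x'‖ ≤ s → |f z| ≤ M) →
      |avgOp k s f x - avgOp k s f x'| ≤ C * M / s * ‖x - x'‖ := by
  obtain ⟨C, hC0, hC⟩ := exists_transl hk hs
  refine ⟨C, hC0, fun f B M s x x' hf hB hs0 hM => ?_⟩
  have hki : Integrable k := integrable_of_hcs hk.continuous (hasCompactSupport_of_ball hs)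
  set v := s⁻¹ • (x - x') with hv
  have e1 : avgOp k s f x' = ∫ y, k (y + v) * f (x + s • y) := by
    unfold avgOp
    rw [← integral_add_right_eq_self (fun y => k y * f (x' + s • y)) v]
    refine integral_congr_ae (Eventually.of_forall fun y => ?_)
    simp only
    congr 2
    rw [hv, smul_add, smul_inv_smul₀ hs0.ne']; abel
  have i1 := integrable_avg hki hf hB x s
  have i2 : Integrable fun y => k (y + v) * f (x + s • y) :=
    integrable_avg (hki.comp_add_right v) hf hB x s
  have hM0 : 0 ≤ M := (abs_nonneg _).trans (hM x (Or.inl (by simpa using hs0.le)))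
  rw [e1]
  unfold avgOp
  rw [← integral_sub i1 i2]
  calc _ ≤ ∫ y, |k y * f (x + s • y) - k (y + v) * f (x + s • y)| := abs_integral_le_integral_abs
    _ ≤ ∫ y, |k y - k (y + v)| * M := by
        refine integral_mono (i1.sub i2).abs
          ((hki.sub (hki.comp_add_right v)).abs.mul_const M) fun y => ?_
        simp only
        rw [← sub_mul, abs_mul]
        by_cases hz : k y - k (y + v) = 0
        · simp [hz]
        · refine mul_le_mul_of_nonneg_left (hM _ ?_) (abs_nonneg _)
          by_contra! hcon
          refine hz ?_
          rw [hs y, hs (y + v), sub_zero]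
          · have h2 := hcon.2
            have : x + s • y - x' = s • (y + v) := by
              rw [hv, smul_add, smul_inv_smul₀ hs0.ne']; abel
            rw [this, norm_smul, Real.norm_eq_abs, abs_of_pos hs0] at h2
            nlinarith
          · have h2 := hcon.1
            rw [add_sub_cancel_left, norm_smul, Real.norm_eq_abs, abs_of_pos hs0] at h2
            nlinarith
    _ ≤ C * ‖v‖ * M := by
        rw [integral_mul_const]; exact mul_le_mul_of_nonneg_right (hC v) hM0
    _ = _ := by
        rw [hv, norm_smul, norm_inv, Real.norm_eq_abs, abs_of_pos hs0]; field_simp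

lemma gam_bound {N : ℕ} {h : Euc N → ℝ} {H : ℝ} (hH : ∀ x, |h x| ≤ H) {s : ℝ} (hs : 0 ≤ s)
    (x : Euc N) : |gam s h x| ≤ (∫ y : Euc N, |zet y|) * H * s ^ 2 := by
  have h1 := intervalIntegral.norm_integral_le_of_norm_le_const (a := 0) (b := s)
    (f := fun t => t * avgOp zet t h x) (C := s * ((∫ y : Euc N, |zet y|) * H)) (by
      intro t ht
      rw [uIoc_of_le hs] at ht
      rw [Real.norm_eq_abs, abs_mul, abs_of_pos ht.1]
      exact mul_le_mul ht.2 (abs_avg_le integrable_zet fun y _ => hH _) (abs_nonneg _) hs)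
  rw [sub_zero, abs_of_nonneg hs, Real.norm_eq_abs] at h1
  unfold gam
  linarith

lemma exists_gam_lip {N : ℕ} : ∃ C : ℝ, 0 ≤ C ∧ ∀ (h : Euc N → ℝ) (H s : ℝ) (x x' : Euc N),
    Continuous h → (∀ z, |h z| ≤ H) → 0 ≤ s → |gam s h x - gam s h x'| ≤ C * H * s * ‖x - x'‖ := by
  obtain ⟨C, hC0, hC⟩ := exists_avg_lip (N := N) (zet_contDiff.of_le one_le_top')
    fun y hy => zet_supp hy
  refine ⟨C, hC0, fun h H s x x' hh hH hs => ?_⟩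
  unfold gam
  rw [← intervalIntegral.integral_sub ((continuous_tQ hh hH x).intervalIntegrable _ _)
    ((continuous_tQ hh hH x').intervalIntegrable _ _)]
  have h1 := intervalIntegral.norm_integral_le_of_norm_le_const (a := 0) (b := s)
    (f := fun t => t * avgOp zet t h x - t * avgOp zet t h x') (C := C * H * ‖x - x'‖) (by
      intro t ht
      rw [uIoc_of_le hs] at ht
      rw [Real.norm_eq_abs, ← mul_sub, abs_mul, abs_of_pos ht.1]
      have := hC h H H t x x' hh.measurable hH ht.1 fun z _ => hH z
      calc _ ≤ t * (C * H / t * ‖x - x'‖) := mul_le_mul_of_nonneg_left this ht.1.le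
        _ = _ := by have := ht.1.ne'; field_simp)
  rw [sub_zero, abs_of_nonneg hs, Real.norm_eq_abs] at h1
  linarith

/-- Averages converge at Lebesgue points. -/
lemma ae_tendsto_avg {N : ℕ} [NeZero N] {u : Euc N → ℝ} (hu : Measurable u) {M : ℝ}
    (hM : ∀ x, |u x| ≤ M) :
    ∀ᵐ x, Tendsto (fun s => avgOp eta s u x) (𝓝[>] 0) (𝓝 (u x)) := by
  have hloc : LocallyIntegrable u volume := by
    refine (locallyIntegrable_const M).mono hu.aestronglyMeasurable
      (Eventually.of_forall fun x => ?_)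
    rw [Real.norm_eq_abs, Real.norm_eq_abs]; exact (hM x).trans (le_abs_self M)
  obtain ⟨E, hE⟩ := (eta_hcs (N := N)).exists_bound_of_continuous eta_contDiff.continuous
  have hE0 : 0 ≤ E := (norm_nonneg _).trans (hE 0)
  set V := (volume (Metric.closedBall (0 : Euc N) 1)).toReal
  have hV0 : 0 < V := ENNReal.toReal_pos
    (Metric.measure_closedBall_pos volume _ one_pos).ne' (isCompact_closedBall _ _).measure_lt_top.ne
  filter_upwards [(Besicovitch.vitaliFamily (volume : Measure (Euc N))).ae_tendsto_average_norm_sub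
    hloc] with x hx
  have h1 := (hx.comp (Besicovitch.tendsto_filterAt volume x)).const_mul (E * V)
  rw [mul_zero] at h1
  refine tendsto_iff_norm_sub_tendsto_zero.2 (squeeze_zero' (Eventually.of_forall fun _ => norm_nonneg _)
    ?_ h1)
  filter_upwards [self_mem_nhdsWithin] with s hs
  have hs : 0 < s := hs
  have e1 : avgOp eta s u x - u x = ∫ y, eta y * (u (x + s • y) - u x) := by
    simp only [mul_sub]
    rw [integral_sub (integrable_avg integrable_eta hu hM x s) (integrable_eta.mul_const _),
      integral_mul_const, integral_eta, one_mul]; rfl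
  set g : Euc N → ℝ := fun z => ‖u z - u x‖ with hg
  have hgm : Measurable g := (hu.sub_const _).norm
  have hgb : ∀ z, |g z| ≤ 2 * M := fun z => by
    simp only [hg, abs_norm]; exact (norm_sub_le _ _).trans (by
      have a := hM z; have b := hM x; simp only [Real.norm_eq_abs]; linarith)
  set k : Euc N → ℝ := (Metric.closedBall (0 : Euc N) 1).indicator (fun _ => 1) with hk
  have hki : Integrable k := (integrable_indicator_iff Metric.isClosed_closedBall.measurableSet).2
            (integrableOn_const (isCompact_closedBall _ _).measure_lt_top.ne)
  have e2 : avgOp k s g x = V * ⨍ y in Metric.closedBall x s, ‖u y - u x‖ := by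
    rw [avg_scaled _ _ hs, setAverage_eq, smul_eq_mul]
    have hvol : volume.real (Metric.closedBall x s) = s ^ N * V := by
      rw [Measure.real, Measure.addHaar_closedBall' volume x hs.le]
      simp [V, ENNReal.toReal_mul, hs.le]
    rw [hvol, mul_inv, ← integral_const_mul, ← integral_const_mul, ← integral_indicator
      Metric.isClosed_closedBall.measurableSet]
    refine integral_congr_ae (Eventually.of_forall fun z => ?_)
    have hiff : s⁻¹ • (z - x) ∈ Metric.closedBall (0 : Euc N) 1 ↔ z ∈ Metric.closedBall x s := by
      rw [mem_closedBall_zero_iff, mem_closedBall_iff_norm, norm_smul, norm_inv, Real.norm_eq_abs,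
        abs_of_pos hs, inv_mul_le_iff₀ hs, mul_one]
    by_cases hz : z ∈ Metric.closedBall x s
    · simp only [hk, indicator_of_mem hz, indicator_of_mem (hiff.2 hz), hg, inv_pow]
      field_simp
    · simp only [hk, indicator_of_notMem hz, indicator_of_notMem (fun h => hz (hiff.1 h))]
      simp
  rw [Real.norm_eq_abs, e1]
  calc _ ≤ ∫ y, |eta y * (u (x + s • y) - u x)| := abs_integral_le_integral_abs
    _ ≤ ∫ y, E * (k y * g (x + s • y)) := by
        refine integral_mono ?_ ((integrable_avg hki hgm hgb x s).const_mul E) fun y => ?_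
        · have := (integrable_avg integrable_eta hu hM x s).sub
            ((integrable_eta (N := N)).mul_const (u x))
          simp only [mul_sub]; exact this.abs
        · simp only [abs_mul, hg, Real.norm_eq_abs]
          by_cases hy : y ∈ Metric.closedBall (0 : Euc N) 1
          · rw [hk, indicator_of_mem hy, one_mul]
            exact mul_le_mul_of_nonneg_right (hE y) (abs_nonneg _)
          · rw [eta_supp (by simpa using hy), hk, indicator_of_notMem hy]; simp
    _ = E * avgOp k s g x := by rw [integral_const_mul]; rfl
    _ = _ := by rw [e2]; simp only [Function.comp]; ring

/-! ### The Dirichlet problem with continuous right-hand side -/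

lemma avg_congr_ae {N : ℕ} (k : Euc N → ℝ) {f g : Euc N → ℝ} (hfg : f =ᵐ[volume] g) {t : ℝ}
    (ht : 0 < t) (x : Euc N) : avgOp k t f x = avgOp k t g x := by
  rw [avg_scaled _ _ ht, avg_scaled _ _ ht]
  refine integral_congr_ae ?_
  filter_upwards [hfg] with z hz
  rw [hz]

lemma WeakSol.congr_ae {N : ℕ} {Ω : Set (Euc N)} {h u v : Euc N → ℝ} {ζ : ℕ → Euc N → ℝ}
    (hw : WeakSol Ω h u ζ) (hv : Measurable v) (huv : u =ᵐ[volume] v) : WeakSol Ω h v ζ where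
  test := hw.test
  meas := hv
  memLp := hw.memLp.ae_eq huv
  lim := by
    refine hw.lim.congr fun n => integral_congr_ae ?_
    filter_upwards [huv] with x hx
    rw [hx]
  el := hw.el

lemma exists_ball_sub {N : ℕ} {Ω : Set (Euc N)} (ho : IsOpen Ω) {x : Euc N} (hx : x ∈ Ω) :
    ∃ s : ℝ, 0 < s ∧ Metric.closedBall x s ⊆ Ω :=
  Metric.nhds_basis_closedBall.mem_iff.1 (ho.mem_nhds hx)

/-- Solvability of `-Δu = h` in `Ω`, `u = 0` off `Ω`, with a Lipschitz estimate. -/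
lemma exists_dirichlet {N : ℕ} [NeZero N] {Ω : Set (Euc N)} (hΩ : IsC3Domain Ω) :
    ∃ L : ℝ, 0 < L ∧ ∀ (h : Euc N → ℝ) (H : ℝ), Continuous h → (∀ x, |h x| ≤ H) →
      ∃ u ζ, WeakSol Ω h u ζ ∧ (∀ x ∉ Ω, u x = 0) ∧
        ∀ x x', |u x - u x'| ≤ L * H * ‖x - x'‖ := by
  obtain ⟨C, hC0, hbar⟩ := exists_barrier hΩ
  have ho : IsOpen Ω := hΩ.1
  have hb : Bornology.IsBounded Ω := hΩ.2.2.1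
  obtain ⟨Ce, hCe0, hCe⟩ := exists_avg_lip (N := N) (eta_contDiff.of_le one_le_top')
    fun y hy => eta_supp hy
  obtain ⟨Cz, hCz0, hCz⟩ := exists_gam_lip (N := N)
  obtain ⟨R, hR0, hR⟩ := hb.subset_closedBall_lt 0 (0 : Euc N)
  refine ⟨5 * C + 4 * C * Ce + Cz * R + 1, by positivity, fun h H hh hH => ?_⟩
  have hH0 : 0 ≤ H := (abs_nonneg _).trans (hH 0)
  obtain ⟨u0, ζ, hw0⟩ := exists_weakSol hb hh
  -- the barrier bound at every boundary point
  have hb0 : ∀ x0 ∈ frontier Ω, ∀ᵐ x ∂volume.restrict Ω, |u0 x| ≤ C * H * ‖x - x0‖ := by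
    intro x0 hx0
    obtain ⟨w, hw1, hw2, hw3, hw4⟩ := hbar x0 hx0
    have hl : ∀ x, lap (fun x => H * w x) x = H * lap w x := by
      intro x
      have hd : ∀ y, DifferentiableAt ℝ w y := hw1.differentiable (by simp)
      have hd2 : ∀ (v : Euc N) y, DifferentiableAt ℝ (fun y => fderiv ℝ w y v) y := fun v y =>
        (contDiff_partial (n := 1) (hw1.of_le (by norm_num; exact two_le_top')) v).differentiable
          (by norm_num) y
      simp only [lap, Finset.mul_sum]
      refine Finset.sum_congr rfl fun i _ => ?_
      have : (fun y => fderiv ℝ (fun x => H * w x) y (EuclideanSpace.single i 1)) =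
          fun y => H * fderiv ℝ w y (EuclideanSpace.single i 1) := by
        ext y; rw [fderiv_const_mul (hd y)]; simp
      rw [this, fderiv_const_mul (hd2 _ x)]; simp
    have hWs : ContDiff ℝ (⊤ : ℕ∞) fun x => H * w x := contDiff_const.mul hw1
    have hW0 : ∀ x ∈ Ω, 0 ≤ H * w x := fun x hx => mul_nonneg hH0 (hw2 x hx)
    have hWl : ∀ x ∈ Ω, H ≤ -lap (fun x => H * w x) x := fun x hx => by
      rw [hl]; nlinarith [hw3 x hx]
    have h1 := hw0.le hb ho hh hWs hW0 fun x hx => ((le_abs_self _).trans (hH x)).trans (hWl x hx)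
    have h2 := hw0.neg.le hb ho hh.neg hWs hW0
      fun x hx => ((neg_le_abs _).trans (hH x)).trans (hWl x hx)
    filter_upwards [h1, h2, ae_restrict_mem ho.measurableSet] with x hx1 hx2 hx3
    have := mul_le_mul_of_nonneg_left (hw4 x hx3) hH0
    rw [abs_le]; constructor <;> linarith
  -- a bounded representative vanishing off `Ω`
  have hfr : (frontier Ω).Nonempty := by
    rw [nonempty_frontier_iff]
    refine ⟨hΩ.2.1.nonempty, fun hu => ?_⟩
    rw [hu] at hb
    exact NormedSpace.unbounded_univ ℝ (Euc N) hb
  obtain ⟨z0, hz0⟩ := hfr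
  set M := C * H * (2 * R) with hM
  have hM0 : 0 ≤ M := by positivity
  set u1 : Euc N → ℝ := Ω.indicator fun x => max (-M) (min (u0 x) M) with hu1
  have hu1m : Measurable u1 :=
    (measurable_const.max (hw0.meas.min measurable_const)).indicator ho.measurableSet
  have hu1b : ∀ x, |u1 x| ≤ M := by
    intro x
    by_cases hx : x ∈ Ω
    · rw [hu1, indicator_of_mem hx, abs_le]
      exact ⟨le_max_left _ _, max_le (by linarith) (min_le_right _ _)⟩
    · rw [hu1, indicator_of_notMem hx]; simpa
  have hz0R : ‖z0‖ ≤ R := by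
    simpa using closure_minimal hR Metric.isClosed_closedBall (frontier_subset_closure hz0)
  have hu01 : u0 =ᵐ[volume] u1 := by
    have h1 := hb0 z0 hz0
    rw [ae_restrict_iff' ho.measurableSet] at h1
    filter_upwards [h1, hw0.zero_off ho] with x hx1 hx2
    by_cases hx : x ∈ Ω
    · rw [hu1, indicator_of_mem hx]
      have h3 : |u0 x| ≤ M := (hx1 hx).trans (by
        have : ‖x‖ ≤ R := by simpa using hR hx
        rw [hM]
        have : ‖x - z0‖ ≤ 2 * R := by linarith [norm_sub_le x z0]
        gcongr)
      rw [abs_le] at h3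
      rw [min_eq_left h3.2, max_eq_right h3.1]
    · rw [hu1, indicator_of_notMem hx, hx2 hx]
  have hw1 : WeakSol Ω h u1 ζ := hw0.congr_ae hu1m hu01
  have hu1i : Integrable u1 := by
    have : IntegrableOn u1 Ω := by
      refine Measure.integrableOn_of_bounded (M := M) hb.measure_lt_top.ne
        hu1m.aestronglyMeasurable (Eventually.of_forall fun x => hu1b x)
    exact (integrableOn_iff_integrable_of_support_subset
      (support_indicator_subset)).1 this
  -- the precise representative
  set u : Euc N → ℝ := fun x => open Classical in
    if hx : x ∈ Ω then avgOp eta (exists_ball_sub ho hx).choose u1 x +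
      gam (exists_ball_sub ho hx).choose h x else 0 with hu
  have hu_off : ∀ x ∉ Ω, u x = 0 := fun x hx => by simp [hu, hx]
  have hu_eq : ∀ x s, 0 < s → Metric.closedBall x s ⊆ Ω →
      u x = avgOp eta s u1 x + gam s h x := by
    intro x s hs hsub
    have hx : x ∈ Ω := hsub (by simp [hs.le])
    obtain ⟨h1, h2⟩ := (exists_ball_sub ho hx).choose_spec
    simp only [hu, dif_pos hx]
    set r := (exists_ball_sub ho hx).choose
    rcases le_total s r with hsr | hsr
    · exact (mv_const hu1i hh hH hw1.ds hs hsr h2).symm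
    · exact mv_const hu1i hh hH hw1.ds h1 hsr hsub
  have hgl : ∀ x, Tendsto (fun s => gam s h x) (𝓝[>] 0) (𝓝 0) := fun x => by
    have := (hasDerivAt_gam hh hH x 0).continuousAt.tendsto
    simp only [gam_zero] at this
    exact this.mono_left nhdsWithin_le_nhds
  have hev : ∀ x ∈ Ω, ∀ᶠ s in 𝓝[>] (0 : ℝ), 0 < s ∧ Metric.closedBall x s ⊆ Ω := by
    intro x hx
    obtain ⟨r, hr, hsub⟩ := exists_ball_sub ho hx
    filter_upwards [Ioo_mem_nhdsGT hr] with s hs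
    exact ⟨hs.1, (Metric.closedBall_subset_closedBall hs.2.le).trans hsub⟩
  have huu : u1 =ᵐ[volume] u := by
    filter_upwards [ae_tendsto_avg hu1m hu1b] with x hx
    by_cases hxΩ : x ∈ Ω
    · have h1 := hx.add (hgl x)
      rw [add_zero] at h1
      refine tendsto_nhds_unique h1 (tendsto_const_nhds.congr' ?_)
      filter_upwards [hev x hxΩ] with s hs using hu_eq x s hs.1 hs.2
    · rw [hu_off x hxΩ, hu1, indicator_of_notMem hxΩ]
  have hloc : ∀ x x' s B, 0 < s → Metric.closedBall x s ⊆ Ω → Metric.closedBall x' s ⊆ Ω →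
      (∀ z, |u1 z| ≤ B) → |u x - u x'| ≤ (Ce * B / s + Cz * H * s) * ‖x - x'‖ := by
    intro x x' s B hs hx hx' hB
    rw [hu_eq x s hs hx, hu_eq x' s hs hx']
    have a := hCe u1 B B s x x' hu1m hB hs fun z _ => hB z
    have b := hCz h H s x x' hh hH hs.le
    calc _ = |(avgOp eta s u1 x - avgOp eta s u1 x') + (gam s h x - gam s h x')| := by
          congr 1; ring
      _ ≤ _ := (abs_add_le _ _).trans (by rw [add_mul]; exact add_le_add a b)
  have hcont : ContinuousOn u Ω := by
    intro x hx
    obtain ⟨r, hr, hsub⟩ := exists_ball_sub ho hx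
    refine ContinuousAt.continuousWithinAt (Metric.continuousAt_iff'.2 fun ε hε => ?_)
    set K := Ce * M / (r / 2) + Cz * H * (r / 2)
    have hK : 0 ≤ K := by positivity
    have hδ : 0 < min (r / 2) (ε / (K + 1)) := by positivity
    filter_upwards [Metric.ball_mem_nhds x hδ] with y hy
    rw [Metric.mem_ball, lt_min_iff] at hy
    have := hloc y x (r / 2) M (by positivity)
      ((Metric.closedBall_subset_closedBall' (by linarith)).trans hsub)
      ((Metric.closedBall_subset_closedBall (by linarith)).trans hsub) hu1b
    rw [Real.dist_eq]
    have h2 : ‖y - x‖ < ε / (K + 1) := by rw [← dist_eq_norm]; exact hy.2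
    rw [lt_div_iff₀ (by positivity)] at h2
    have h3 := norm_nonneg (y - x)
    change _ ≤ K * _ at this
    nlinarith
  -- boundary decay everywhere in `Ω`
  have hdec0 : ∀ x0 ∈ frontier Ω, ∀ x ∈ Ω, |u x| ≤ C * H * ‖x - x0‖ := by
    intro x0 hx0
    by_contra! hcon
    obtain ⟨x, hx, hlt⟩ := hcon
    have hopen : IsOpen (Ω ∩ (fun x => |u x| - C * H * ‖x - x0‖) ⁻¹' Ioi 0) :=
      (hcont.abs.sub (by fun_prop)).isOpen_inter_preimage ho isOpen_Ioi
    have hz : volume (Ω ∩ (fun x => |u x| - C * H * ‖x - x0‖) ⁻¹' Ioi 0) = 0 := by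
      have h1 := hb0 x0 hx0
      rw [ae_restrict_iff' ho.measurableSet] at h1
      have h2 : ∀ᵐ z, z ∉ Ω ∩ (fun x => |u x| - C * H * ‖x - x0‖) ⁻¹' Ioi 0 := by
        filter_upwards [h1, hu01, huu] with z hz1 hz2 hz3 hz4
        have := hz1 hz4.1
        rw [hz2, hz3] at this
        have h5 : 0 < |u z| - C * H * ‖z - x0‖ := hz4.2
        linarith
      rw [ae_iff] at h2
      simpa only [not_not, ofPred_mem_eq] using h2
    rw [hopen.measure_eq_zero_iff volume] at hz
    have : x ∈ Ω ∩ (fun x => |u x| - C * H * ‖x - x0‖) ⁻¹' Ioi 0 := ⟨hx, by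
      simp only [mem_preimage, mem_Ioi]; linarith⟩
    rw [hz] at this; exact this
  have hdec : ∀ x y, y ∉ Ω → |u x| ≤ C * H * ‖x - y‖ := by
    intro x y hy
    by_cases hx : x ∈ Ω
    · obtain ⟨z, hz, hle⟩ := exists_frontier_near hx hy
      exact (hdec0 z hz x hx).trans (by gcongr)
    · rw [hu_off x hx, abs_zero]; positivity
  have hum : Measurable u := by
    classical
    have e : u = Ω.piecewise u 0 := by
      ext x
      by_cases hx : x ∈ Ω
      · rw [piecewise_eq_of_mem _ _ _ hx]
      · rw [piecewise_eq_of_notMem _ _ _ hx, hu_off x hx]; rfl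
    rw [e]
    exact hcont.measurable_piecewise continuousOn_const ho.measurableSet
  have hub : ∀ x, |u x| ≤ M := by
    intro x
    by_cases hx : x ∈ Ω
    · refine (hdec0 z0 hz0 x hx).trans ?_
      have : ‖x‖ ≤ R := by simpa using hR hx
      rw [hM]
      have : ‖x - z0‖ ≤ 2 * R := by linarith [norm_sub_le x z0]
      gcongr
    · rw [hu_off x hx, abs_zero]; exact hM0
  -- near the boundary the averages may be taken of a function bounded by the distance
  have hlip : ∀ x ∈ Ω, ∀ x', |u x - u x'| ≤ (5 * C + 4 * C * Ce + Cz * R + 1) * H * ‖x - x'‖ := by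
    intro x hx x'
    have hne : (Ωᶜ).Nonempty := ⟨z0, fun h => by
      rw [ho.frontier_eq] at hz0; exact hz0.2 h⟩
    obtain ⟨y, hy, hyd⟩ := ho.isClosed_compl.exists_infDist_eq_dist hne x
    set d := Metric.infDist x Ωᶜ with hd
    have hyd' : ‖x - y‖ = d := by rw [← dist_eq_norm, ← hyd]
    have hd0 : 0 < d := by
      rw [← hyd']; exact norm_pos_iff.2 (sub_ne_zero.2 fun h => hy (h ▸ hx))
    have hball : ∀ z, ‖z - x‖ < d → z ∈ Ω := fun z hz => by
      by_contra hzΩ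
      have := Metric.infDist_le_dist_of_mem (x := x) (show z ∈ Ωᶜ from hzΩ)
      rw [dist_eq_norm, norm_sub_rev] at this; linarith
    rcases le_or_gt (d / 2) ‖x - x'‖ with hcase | hcase
    · have h1 := hdec x y hy
      have h2 := hdec x' y hy
      have h3 : ‖x' - y‖ ≤ ‖x - x'‖ + d := by
        rw [← hyd', norm_sub_rev x x']; exact norm_sub_le_norm_sub_add_norm_sub _ _ _
      rw [hyd'] at h1
      have h4 : |u x - u x'| ≤ C * H * d + C * H * (‖x - x'‖ + d) :=
        (abs_sub _ _).trans (add_le_add h1 (h2.trans (by gcongr)))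
      have h5 : 0 ≤ C * H := by positivity
      have h9 : C * H * d ≤ C * H * (2 * ‖x - x'‖) := by gcongr; linarith
      have h10 : 0 ≤ (4 * C * Ce + Cz * R + 1) * H * ‖x - x'‖ := by positivity
      calc _ ≤ _ := h4
        _ ≤ 5 * C * H * ‖x - x'‖ + (4 * C * Ce + Cz * R + 1) * H * ‖x - x'‖ := by linarith
        _ = _ := by ring
    · have hx1 : Metric.closedBall x (d / 2) ⊆ Ω := fun z hz => hball z (by
        rw [mem_closedBall_iff_norm] at hz; linarith)
      have hx2 : Metric.closedBall x' (d / 2) ⊆ Ω := fun z hz => hball z (by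
        rw [mem_closedBall_iff_norm] at hz
        have := norm_sub_le_norm_sub_add_norm_sub z x' x
        rw [norm_sub_rev x' x] at this; linarith)
      rw [hu_eq x (d / 2) (by positivity) hx1, hu_eq x' (d / 2) (by positivity) hx2,
        avg_congr_ae _ huu (by positivity), avg_congr_ae _ huu (by positivity)]
      have hd2 : d ≤ 2 * R := by
        have h1 : d ≤ dist x z0 := Metric.infDist_le_dist_of_mem (by
          rw [ho.frontier_eq] at hz0; exact hz0.2)
        have h2 : ‖x‖ ≤ R := by simpa using hR hx
        rw [dist_eq_norm] at h1
        linarith [norm_sub_le x z0]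
      have a := hCe u M (2 * C * H * d) (d / 2) x x' hum hub (by positivity) fun z hz => by
        refine (hdec z y hy).trans ?_
        have : ‖z - y‖ ≤ 2 * d := by
          have h1 := norm_sub_le_norm_sub_add_norm_sub z x y
          rcases hz with hz | hz
          · linarith
          · have := norm_sub_le_norm_sub_add_norm_sub z x' x
            rw [norm_sub_rev x' x] at this; linarith
        calc _ ≤ C * H * (2 * d) := by gcongr
          _ = _ := by ring
      have b := hCz h H (d / 2) x x' hh hH (by positivity)
      have c : Ce * (2 * C * H * d) / (d / 2) = 4 * C * Ce * H := by field_simp; ring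
      rw [c] at a
      calc _ = |(avgOp eta (d / 2) u x - avgOp eta (d / 2) u x') +
            (gam (d / 2) h x - gam (d / 2) h x')| := by congr 1; ring
        _ ≤ 4 * C * Ce * H * ‖x - x'‖ + Cz * H * (d / 2) * ‖x - x'‖ :=
            (abs_add_le _ _).trans (add_le_add a b)
        _ ≤ 4 * C * Ce * H * ‖x - x'‖ + Cz * H * R * ‖x - x'‖ := by gcongr; linarith
        _ ≤ 4 * C * Ce * H * ‖x - x'‖ + Cz * H * R * ‖x - x'‖ + (5 * C + 1) * H * ‖x - x'‖ :=
            le_add_of_nonneg_right (by positivity)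
        _ = _ := by ring
  have hlip' : ∀ x x', |u x - u x'| ≤ (5 * C + 4 * C * Ce + Cz * R + 1) * H * ‖x - x'‖ := by
    intro x x'
    by_cases hx : x ∈ Ω
    · exact hlip x hx x'
    by_cases hx' : x' ∈ Ω
    · rw [abs_sub_comm, norm_sub_rev]; exact hlip x' hx' x
    · rw [hu_off x hx, hu_off x' hx', sub_self, abs_zero]; positivity
  exact ⟨u, ζ, hw1.congr_ae hum huu, hu_off, hlip'⟩

/-! ### Interior regularity -/

/-- The linear form with given coordinates. -/
def gform {N : ℕ} (a : Fin N → ℝ) : Euc N →L[ℝ] ℝ := ∑ i, a i • EuclideanSpace.proj (𝕜 := ℝ) i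

lemma gform_apply {N : ℕ} (a : Fin N → ℝ) (v : Euc N) : gform a v = ∑ i, a i * v i := by
  simp [gform]

lemma gform_single {N : ℕ} (a : Fin N → ℝ) (i : Fin N) :
    gform a (EuclideanSpace.single i 1) = a i := by
  rw [gform_apply, Finset.sum_eq_single i] <;> simp +contextual

lemma eq_gform {N : ℕ} (T : Euc N →L[ℝ] ℝ) :
    T = gform fun i => T (EuclideanSpace.single i 1) := by
  refine ContinuousLinearMap.coe_injective ((EuclideanSpace.basisFun (Fin N) ℝ).toBasis.ext fun i => ?_)
  have := gform_single (fun i => T (EuclideanSpace.single i 1)) i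
  simpa using this.symm

lemma norm_gform_le {N : ℕ} (a : Fin N → ℝ) : ‖gform a‖ ≤ ∑ i, |a i| := by
  refine ContinuousLinearMap.opNorm_le_bound _ (Finset.sum_nonneg fun i _ => abs_nonneg _) fun v => ?_
  rw [gform_apply, Finset.sum_mul]
  refine (norm_sum_le _ _).trans (Finset.sum_le_sum fun i _ => ?_)
  rw [norm_mul, Real.norm_eq_abs]
  exact mul_le_mul_of_nonneg_left (PiLp.norm_apply_le v i) (abs_nonneg _)

lemma continuous_gform {N : ℕ} {X : Type*} [TopologicalSpace X] {a : Fin N → X → ℝ}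
    (ha : ∀ i, Continuous (a i)) : Continuous fun x => gform fun i => a i x := by
  unfold gform
  exact continuous_finsetSum _ fun i _ => (ha i).smul continuous_const

/-- A function whose partial derivatives are `Cⁿ` is `Cⁿ⁺¹`. -/
lemma contDiffOn_of_gform {N : ℕ} {U : Set (Euc N)} (hU : IsOpen U) {g : Euc N → ℝ}
    {a : Fin N → Euc N → ℝ} {n : ℕ}
    (hg : ∀ x ∈ U, HasFDerivAt g (gform fun i => a i x) x) (ha : ∀ i, ContDiffOn ℝ n (a i) U) :
    ContDiffOn ℝ (n + 1 : ℕ) g U := by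
  push_cast
  rw [contDiffOn_succ_iff_fderiv_of_isOpen hU]
  refine ⟨fun x hx => (hg x hx).differentiableAt.differentiableWithinAt, by simp, ?_⟩
  have h1 : ContDiffOn ℝ n (fun x => gform fun i => a i x) U := by
    unfold gform
    exact ContDiffOn.sum fun i _ => (ha i).smul contDiffOn_const
  exact h1.congr fun x hx => (hg x hx).fderiv

lemma hasFDerivAt_avg {N : ℕ} {k : Euc N → ℝ} (hk : ContDiff ℝ 1 k)
    (hs : ∀ y, 1 < ‖y‖ → k y = 0) {h : Euc N → ℝ} (hh : Continuous h) {t : ℝ} (ht : 0 < t)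
    (x : Euc N) :
    HasFDerivAt (avgOp k t h) (gform fun i => -(t⁻¹ * avgOp (pd i k) t h x)) x := by
  set g : Euc N → ℝ := fun w => (t⁻¹) ^ N * k (-(t⁻¹ • w)) with hg
  have hgc : ContDiff ℝ 1 g := contDiff_const.mul (hk.comp (by fun_prop : ContDiff ℝ 1 fun w : Euc N => -(t⁻¹ • w)))
  have hgs : HasCompactSupport g := by
    refine HasCompactSupport.intro (isCompact_closedBall (0 : Euc N) t) fun w hw => ?_
    have hw : t < ‖w‖ := by simpa using hw
    simp only [hg]
    rw [hs, mul_zero]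
    rw [norm_neg, norm_smul, norm_inv, Real.norm_eq_abs, abs_of_pos ht, lt_inv_mul_iff₀ ht]
    linarith
  have h1 := hgs.hasFDerivAt_convolution_right (ContinuousLinearMap.lsmul ℝ ℝ) (μ := volume)
    hh.locallyIntegrable hgc x
  have e1 : avgOp k t h = convolution h g (ContinuousLinearMap.lsmul ℝ ℝ) volume := by
    ext z
    rw [avg_scaled _ _ ht]
    unfold convolution
    refine integral_congr_ae (Eventually.of_forall fun w => ?_)
    simp only [hg, ContinuousLinearMap.lsmul_apply, smul_eq_mul]
    rw [show -(t⁻¹ • (z - w)) = t⁻¹ • (w - z) by rw [← smul_neg, neg_sub]]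
    ring
  rw [e1]
  refine h1.congr_fderiv ?_
  rw [eq_gform (convolution h (fderiv ℝ g) _ volume x)]
  congr 1; ext i
  rw [convolution_precompR_apply (ContinuousLinearMap.lsmul ℝ ℝ) hh.locallyIntegrable
    (hgs.fderiv ℝ) (hgc.continuous_fderiv one_ne_zero)]
  unfold convolution
  rw [avg_scaled _ _ ht, ← integral_const_mul, ← integral_neg]
  refine integral_congr_ae (Eventually.of_forall fun w => ?_)
  simp only [ContinuousLinearMap.lsmul_apply, smul_eq_mul]
  have hkd : HasFDerivAt k (fderiv ℝ k (-(t⁻¹ • (x - w)))) (-(t⁻¹ • (x - w))) :=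
    (hk.differentiable one_ne_zero _).hasFDerivAt
  have hin : HasFDerivAt (fun w : Euc N => -(t⁻¹ • w)) (-(t⁻¹ • ContinuousLinearMap.id ℝ (Euc N)))
    (x - w) := ((hasFDerivAt_id (x - w)).const_smul t⁻¹).neg
  have hgd : HasFDerivAt g _ (x - w) := (hkd.comp (x - w) hin).const_mul ((t⁻¹) ^ N)
  rw [hgd.fderiv, show t⁻¹ • (w - x) = -(t⁻¹ • (x - w)) by rw [← smul_neg, neg_sub]]
  simp [pd]; ring

lemma pd_supp {N : ℕ} {k : Euc N → ℝ} (hs : ∀ y, 1 < ‖y‖ → k y = 0) (i : Fin N) (y : Euc N)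
    (hy : 1 < ‖y‖) : pd i k y = 0 := by
  have h1 : k =ᶠ[𝓝 y] fun _ => 0 := by
    filter_upwards [(isOpen_lt continuous_const continuous_norm).mem_nhds hy] with z hz
    exact hs z hz
  unfold pd
  rw [h1.fderiv_eq]; simp

lemma contDiff_pd {N : ℕ} {k : Euc N → ℝ} (hk : ContDiff ℝ (⊤ : ℕ∞) k) (i : Fin N) :
    ContDiff ℝ (⊤ : ℕ∞) (pd i k) :=
  contDiff_partial (n := ⊤) (by simpa using hk) _

/-- Differentiation of weighted integrals of averages over the scale. -/
lemma hasFDerivAt_scale {N : ℕ} {k : Euc N → ℝ} (hk : ContDiff ℝ (⊤ : ℕ∞) k)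
    (hs : ∀ y, 1 < ‖y‖ → k y = 0) {h : Euc N → ℝ} (hh : Continuous h) {H : ℝ}
    (hH : ∀ x, |h x| ≤ H) {c : ℝ → ℝ} (hc : Continuous c) {r : ℝ} (hr : 0 ≤ r) {B : ℝ}
    (hB : ∀ i t x, 0 < t → t ≤ r → |c t * t⁻¹ * avgOp (pd i k) t h x| ≤ B) (x : Euc N) :
    HasFDerivAt (fun x => ∫ t in (0:ℝ)..r, c t * avgOp k t h x)
      (gform fun i => -∫ t in (0:ℝ)..r, c t * t⁻¹ * avgOp (pd i k) t h x) x := by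
  have hkc : HasCompactSupport k := hasCompactSupport_of_ball hs
  have hcs : ∀ x, Continuous fun t => c t * avgOp k t h x := fun x =>
    hc.mul ((continuous_avg hk.continuous hkc hh hH).comp (by fun_prop : Continuous fun t : ℝ => (t, x)))
  have hcp : ∀ i, Continuous fun t => avgOp (pd i k) t h x := fun i =>
    ((continuous_avg (contDiff_pd hk i).continuous
      (hasCompactSupport_of_ball (pd_supp hs i)) hh hH).comp
      (by fun_prop : Continuous fun t : ℝ => (t, x)))
  have hm : ∀ i, Measurable fun t : ℝ => c t * t⁻¹ * avgOp (pd i k) t h x := fun i =>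
    (hc.measurable.mul measurable_inv).mul (hcp i).measurable
  have hgm : Measurable fun t : ℝ => gform fun i => -(c t * t⁻¹ * avgOp (pd i k) t h x) := by
    unfold gform
    exact Finset.measurable_sum _ fun i _ => (hm i).neg.smul_const _
  have hintg : ∀ i, IntervalIntegrable (fun t : ℝ => c t * t⁻¹ * avgOp (pd i k) t h x) volume 0 r := by
    intro i
    rw [intervalIntegrable_iff, uIoc_of_le hr]
    refine Measure.integrableOn_of_bounded (M := B) (by simp) (hm i).aestronglyMeasurable ?_
    rw [ae_restrict_iff' measurableSet_Ioc]
    exact Eventually.of_forall fun t ht => hB i t x ht.1 ht.2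
  have key := intervalIntegral.hasFDerivAt_integral_of_dominated_of_fderiv_le (μ := volume)
    (a := 0) (b := r) (F := fun x t => c t * avgOp k t h x)
    (F' := fun x t => gform fun i => -(c t * t⁻¹ * avgOp (pd i k) t h x)) (x₀ := x)
    (bound := fun _ => ∑ _i : Fin N, B) (s := univ) univ_mem
    (Eventually.of_forall fun y => (hcs y).aestronglyMeasurable)
    ((hcs x).intervalIntegrable _ _) hgm.aestronglyMeasurable
    (Eventually.of_forall fun t ht y _ => by
      rw [uIoc_of_le hr] at ht
      refine (norm_gform_le _).trans (Finset.sum_le_sum fun i _ => ?_)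
      rw [abs_neg]; exact hB i t y ht.1 ht.2)
    intervalIntegrable_const
    (Eventually.of_forall fun t ht y _ => by
      rw [uIoc_of_le hr] at ht
      have := (hasFDerivAt_avg (hk.of_le one_le_top') hs hh ht.1 y).const_mul (c t)
      refine this.congr_fderiv ?_
      unfold gform
      rw [Finset.smul_sum]
      refine Finset.sum_congr rfl fun i _ => ?_
      rw [smul_smul]; congr 1; ring)
  refine key.congr_fderiv ?_
  unfold gform
  rw [intervalIntegral.integral_finsetSum]
  · refine Finset.sum_congr rfl fun i _ => ?_
    rw [intervalIntegral.integral_smul_const, intervalIntegral.integral_neg]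
  · intro i _
    exact ⟨(hintg i).neg.1.smul_const _, (hintg i).neg.2.smul_const _⟩

lemma integral_pd {N : ℕ} {k : Euc N → ℝ} (hk : ContDiff ℝ 1 k) (hc : HasCompactSupport k)
    (i : Fin N) : ∫ y, pd i k y = 0 := by
  have := ibp_open isOpen_univ (f := fun _ : Euc N => (1 : ℝ)) contDiffOn_const hk hc
    (subset_univ _) (EuclideanSpace.single i 1)
  simpa [pd] using this

lemma abs_avg_lip_le {N : ℕ} {k : Euc N → ℝ} (hk : Continuous k)
    (hs : ∀ y, 1 < ‖y‖ → k y = 0) (h0 : ∫ y, k y = 0) {h : Euc N → ℝ} (hh : Continuous h)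
    {H L : ℝ} (hH : ∀ x, |h x| ≤ H) (hL0 : 0 ≤ L) (hL : ∀ x x', |h x - h x'| ≤ L * ‖x - x'‖) {t : ℝ} (ht : 0 ≤ t)
    (x : Euc N) : |avgOp k t h x| ≤ (∫ y, |k y|) * (L * t) := by
  have hki : Integrable k := integrable_of_hcs hk (hasCompactSupport_of_ball hs)
  have e : avgOp k t h x = avgOp k t (fun z => h z - h x) x := by
    unfold avgOp
    simp only [mul_sub]
    rw [integral_sub (integrable_avg hki hh.measurable hH x t) (hki.mul_const _),
      integral_mul_const, h0, zero_mul, sub_zero]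
  rw [e]
  refine abs_avg_le hki fun y hy => (hL _ _).trans ?_
  have hy1 : ‖y‖ ≤ 1 := by by_contra! hcon; exact hy (hs y hcon)
  rw [add_sub_cancel_left, norm_smul, Real.norm_eq_abs, abs_of_nonneg ht]
  exact mul_le_mul_of_nonneg_left (mul_le_of_le_one_right ht hy1) hL0

lemma lap_eq_pd {N : ℕ} (f : Euc N → ℝ) (x : Euc N) : lap f x = ∑ i, pd i (pd i f) x := rfl

lemma HasFDerivAt.pd_eq {N : ℕ} {f : Euc N → ℝ} {a : Fin N → ℝ} {x : Euc N}
    (h : HasFDerivAt f (gform a) x) (i : Fin N) : pd i f x = a i := by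
  unfold pd; rw [h.fderiv, gform_single]

lemma avg_congr_ball {N : ℕ} {k : Euc N → ℝ} (hs : ∀ y, 1 < ‖y‖ → k y = 0) {f g : Euc N → ℝ}
    {x : Euc N} {t : ℝ} (ht : 0 ≤ t) (hfg : ∀ z, ‖z - x‖ ≤ t → f z = g z) :
    avgOp k t f x = avgOp k t g x := by
  unfold avgOp
  refine integral_congr_ae (Eventually.of_forall fun y => ?_)
  simp only
  by_cases hy : 1 < ‖y‖
  · simp [hs y hy]
  · rw [hfg]
    rw [add_sub_cancel_left, norm_smul, Real.norm_eq_abs, abs_of_nonneg ht]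
    exact mul_le_of_le_one_right ht (not_lt.1 hy)

/-- Differentiation of averages in the scale, for bounded continuous functions. -/
lemma hasDerivAt_avg' {N : ℕ} {h : Euc N → ℝ} (hh : Continuous h) {t : ℝ} (ht : 0 < t)
    (x : Euc N) : HasDerivAt (fun t => avgOp eta t h x) (t⁻¹ * avgOp (lap zet) t h x) t := by
  set h' : Euc N → ℝ := (Metric.closedBall x (t + 1)).indicator h with hh'
  have hi : Integrable h' :=
    (hh.continuousOn.integrableOn_compact (isCompact_closedBall x (t + 1))).integrable_indicator
      Metric.isClosed_closedBall.measurableSet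
  have heq : ∀ z, ‖z - x‖ ≤ t + 1 → h z = h' z := fun z hz => by
    rw [hh', indicator_of_mem]; simpa [dist_eq_norm] using hz
  have h1 := hasDerivAt_avg hi ht x
  have e : (fun s => avgOp eta s h x) =ᶠ[𝓝 t] fun s => avgOp eta s h' x := by
    filter_upwards [Ioo_mem_nhds ht (lt_add_one t)] with s hs
    exact avg_congr_ball (fun y hy => eta_supp hy) hs.1.le fun z hz => heq z (hz.trans hs.2.le)
  refine (h1.congr_of_eventuallyEq e).congr_deriv ?_
  have hsl : ∀ y : Euc N, 1 < ‖y‖ → lap zet y = 0 := fun y hy => by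
    rw [lap_eq_pd]
    exact Finset.sum_eq_zero fun i _ => pd_supp (pd_supp (fun y hy => zet_supp hy) i) i y hy
  rw [avg_congr_ball hsl ht.le (fun z hz => heq z (by linarith)), avg_scaled _ _ ht,
    ← integral_const_mul]
  refine integral_congr_ae (Eventually.of_forall fun z => ?_)
  simp only; rw [lap_phiK ht]; ring

/-- The potential of a bounded Lipschitz function is `C²`, and its Laplacian is known. -/
lemma gam_regular {N : ℕ} [NeZero N] {h : Euc N → ℝ} (hh : Continuous h) {H L : ℝ}
    (hH : ∀ x, |h x| ≤ H) (hL0 : 0 ≤ L) (hL : ∀ x x', |h x - h x'| ≤ L * ‖x - x'‖) {r : ℝ}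
    (hr : 0 < r) :
    ContDiff ℝ 2 (gam r h) ∧ ∀ x, lap (gam r h) x = avgOp eta r h x - h x := by
  have hH0 : 0 ≤ H := (abs_nonneg _).trans (hH 0)
  have hz : ∀ y : Euc N, 1 < ‖y‖ → zet y = 0 := fun y hy => zet_supp hy
  have hz1 : ∀ (i : Fin N) (y : Euc N), 1 < ‖y‖ → pd i zet y = 0 := fun i => pd_supp hz i
  have hz2 : ∀ (i j : Fin N) (y : Euc N), 1 < ‖y‖ → pd j (pd i zet) y = 0 :=
    fun i j => pd_supp (hz1 i) j
  have hc1 : ∀ i : Fin N, ContDiff ℝ (⊤ : ℕ∞) (pd i zet) := contDiff_pd zet_contDiff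
  have hc2 : ∀ i j : Fin N, ContDiff ℝ (⊤ : ℕ∞) (pd j (pd i zet)) := fun i => contDiff_pd (hc1 i)
  have hb2 : ∀ i j (t : ℝ) x, 0 < t → t ≤ r →
      |1 * t⁻¹ * avgOp (pd j (pd i zet)) t h x| ≤ (∫ y, |pd j (pd i zet) y|) * L := by
    intro i j t x ht _
    have := abs_avg_lip_le (hc2 i j).continuous (hz2 i j)
      (integral_pd ((hc1 i).of_le one_le_top') (hasCompactSupport_of_ball (hz1 i)) j) hh hH hL0 hL
      ht.le x
    rw [one_mul, abs_mul, abs_inv, abs_of_pos ht, inv_mul_le_iff₀ ht]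
    linarith
  set g : Fin N → Euc N → ℝ := fun i x => -∫ t in (0:ℝ)..r, 1 * avgOp (pd i zet) t h x with hg
  set a : Fin N → Fin N → Euc N → ℝ := fun i j x =>
    ∫ t in (0:ℝ)..r, 1 * t⁻¹ * avgOp (pd j (pd i zet)) t h x with ha
  have d1 : ∀ x, HasFDerivAt (gam r h) (gform fun i => g i x) x := by
    intro x
    have := hasFDerivAt_scale (zet_contDiff (N := N)) hz hh hH (c := fun t => t) continuous_id hr.le
      (B := ∑ i, (∫ y, |pd i (zet : Euc N → ℝ) y|) * H) (fun i t x ht _ => by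
        rw [mul_inv_cancel₀ ht.ne', one_mul]
        refine (abs_avg_le (integrable_of_hcs (hc1 i).continuous
          (hasCompactSupport_of_ball (hz1 i))) fun y _ => hH _).trans ?_
        exact Finset.single_le_sum (f := fun i => (∫ y, |pd i (zet : Euc N → ℝ) y|) * H)
          (fun i _ => mul_nonneg (integral_nonneg fun _ => abs_nonneg _) hH0) (Finset.mem_univ i)) x
    refine this.congr_fderiv ?_
    congr 1; ext i
    simp only [hg, neg_inj]
    rw [intervalIntegral.integral_of_le hr.le, intervalIntegral.integral_of_le hr.le]
    refine setIntegral_congr_fun measurableSet_Ioc fun t ht => ?_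
    rw [mul_inv_cancel₀ ht.1.ne']
  have d2 : ∀ i x, HasFDerivAt (g i) (gform fun j => a i j x) x := by
    intro i x
    have := (hasFDerivAt_scale (hc1 i) (hz1 i) hh hH (c := fun _ => 1) continuous_const hr.le
      (B := ∑ j, (∫ y, |pd j (pd i (zet : Euc N → ℝ)) y|) * L) (fun j t x ht htr => by
        refine (hb2 i j t x ht htr).trans ?_
        exact Finset.single_le_sum (f := fun j => (∫ y, |pd j (pd i (zet : Euc N → ℝ)) y|) * L)
          (fun i _ => mul_nonneg (integral_nonneg fun _ => abs_nonneg _) hL0)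
          (Finset.mem_univ j)) x).neg
    refine this.congr_fderiv ?_
    ext v
    simp [gform_apply, ha]
  have ac : ∀ i j, Continuous (a i j) := by
    intro i j
    have hcj : ∀ x, Continuous fun t => avgOp (pd j (pd i zet)) t h x := fun x =>
      ((continuous_avg (hc2 i j).continuous
      (hasCompactSupport_of_ball (hz2 i j)) hh hH).comp
      (by fun_prop : Continuous fun t : ℝ => (t, x)))
    refine intervalIntegral.continuous_of_dominated_interval
      (bound := fun _ => (∫ y, |pd j (pd i zet) y|) * L) (fun x => ?_) (fun x => ?_)
      intervalIntegrable_const (Eventually.of_forall fun t ht => ?_)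
    · exact ((measurable_const.mul measurable_inv).mul (hcj x).measurable).aestronglyMeasurable
    · refine Eventually.of_forall fun t ht => ?_
      rw [uIoc_of_le hr.le] at ht
      exact hb2 i j t x ht.1 ht.2
    · exact continuous_const.mul ((continuous_avg (hc2 i j).continuous
        (hasCompactSupport_of_ball (hz2 i j)) hh hH).comp
        (by fun_prop : Continuous fun x : Euc N => (t, x)))
  refine ⟨?_, fun x => ?_⟩
  · rw [← contDiffOn_univ]
    exact contDiffOn_of_gform (n := 1) isOpen_univ (fun x _ => d1 x) fun i =>
      contDiffOn_of_gform (n := 0) isOpen_univ (fun x _ => d2 i x) fun j =>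
        (contDiff_zero.2 (ac i j)).contDiffOn
  have e1 : ∀ i, pd i (gam r h) = g i := fun i => funext fun x => (d1 x).pd_eq i
  rw [lap_eq_pd]
  simp only [e1, fun i => (d2 i x).pd_eq i]
  have hintg : ∀ i j, IntervalIntegrable (fun t : ℝ => 1 * t⁻¹ * avgOp (pd j (pd i zet)) t h x)
      volume 0 r := by
    intro i j
    rw [intervalIntegrable_iff, uIoc_of_le hr.le]
    refine Measure.integrableOn_of_bounded (M := (∫ y, |pd j (pd i zet) y|) * L) (by simp) ?_ ?_
    · exact ((measurable_const.mul measurable_inv).mul ((continuous_avg (hc2 i j).continuous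
        (hasCompactSupport_of_ball (hz2 i j)) hh hH).comp
        (by fun_prop : Continuous fun t : ℝ => (t, x))).measurable).aestronglyMeasurable
    · rw [ae_restrict_iff' measurableSet_Ioc]
      exact Eventually.of_forall fun t ht => hb2 i j t x ht.1 ht.2
  simp only [ha]
  rw [← intervalIntegral.integral_finsetSum fun i _ => hintg i i]
  have e2 : ∀ t : ℝ, ∑ i, 1 * t⁻¹ * avgOp (pd i (pd i zet)) t h x = t⁻¹ * avgOp (lap zet) t h x := by
    intro t
    rw [← Finset.mul_sum, one_mul]
    congr 1
    unfold avgOp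
    rw [← integral_finsetSum]
    · refine integral_congr_ae (Eventually.of_forall fun y => ?_)
      simp only; rw [lap_eq_pd, Finset.sum_mul]
    · intro i _
      exact integrable_avg (integrable_of_hcs (hc2 i i).continuous
        (hasCompactSupport_of_ball (hz2 i i))) hh.measurable hH x t
  have hii : IntervalIntegrable (fun t : ℝ => t⁻¹ * avgOp (lap zet) t h x) volume 0 r := by
    simp only [← e2]
    have := IntervalIntegrable.sum Finset.univ fun i _ => hintg i i
    refine this.congr_ae (Eventually.of_forall fun t => ?_)
    simp only [Finset.sum_apply]
  simp only [e2]
  rw [intervalIntegral.integral_eq_sub_of_hasDerivAt_of_le hr.le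
    (continuous_avg_t hh hH x).continuousOn (fun t ht => hasDerivAt_avg' hh ht.1 x) hii, avg_zero]

lemma avg_contDiff {N : ℕ} {u : Euc N → ℝ} (hu : Continuous u) {C : ℝ} (hC : ∀ x, |u x| ≤ C)
    {r : ℝ} (hr : 0 < r) : ContDiff ℝ 2 (avgOp eta r u) := by
  have hz : ∀ y : Euc N, 1 < ‖y‖ → eta y = 0 := fun y hy => eta_supp hy
  have hc1 : ∀ i : Fin N, ContDiff ℝ (⊤ : ℕ∞) (pd i eta) := contDiff_pd eta_contDiff
  have hc2 : ∀ i j : Fin N, ContDiff ℝ (⊤ : ℕ∞) (pd j (pd i eta)) := fun i => contDiff_pd (hc1 i)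
  rw [← contDiffOn_univ]
  refine contDiffOn_of_gform (n := 1) isOpen_univ
    (fun x _ => hasFDerivAt_avg (eta_contDiff.of_le one_le_top') hz hu hr x) fun i => ?_
  refine (contDiffOn_const.mul ?_).neg
  refine contDiffOn_of_gform (n := 0) isOpen_univ
    (fun x _ => hasFDerivAt_avg ((hc1 i).of_le one_le_top') (pd_supp hz i) hu hr x) fun j => ?_
  refine (contDiff_zero.2 ((continuous_const.mul ?_).neg)).contDiffOn
  exact (continuous_avg (hc2 i j).continuous
    (hasCompactSupport_of_ball (pd_supp (pd_supp hz i) j)) hu hC).comp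
    (by fun_prop : Continuous fun x : Euc N => (r, x))

/-- Continuous distributional solutions with Lipschitz data are classical. -/
lemma DS.classical {N : ℕ} [NeZero N] {U : Set (Euc N)} (hU : IsOpen U) {u h : Euc N → ℝ}
    (hu : Integrable u) (huc : Continuous u) {C : ℝ} (hC : ∀ x, |u x| ≤ C)
    (hh : Continuous h) {H L : ℝ} (hH : ∀ x, |h x| ≤ H) (hL0 : 0 ≤ L)
    (hL : ∀ x x', |h x - h x'| ≤ L * ‖x - x'‖) (hds : DS U u h) :
    ContDiffOn ℝ 2 u U ∧ ∀ x ∈ U, -lap u x = h x := by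
  have hc : ContDiffOn ℝ 2 u U := by
    intro x hx
    obtain ⟨s, hs, hsU⟩ := exists_ball_sub hU hx
    have h1 : ContDiffAt ℝ 2 (fun y => avgOp eta (s / 2) u y + gam (s / 2) h y) x :=
      ((avg_contDiff huc hC (by positivity)).add
        (gam_regular hh hH hL0 hL (by positivity)).1).contDiffAt
    refine (h1.congr_of_eventuallyEq ?_).contDiffWithinAt
    filter_upwards [Metric.ball_mem_nhds x (half_pos hs)] with y hy
    refine mv_cont hu huc hC hh hH hds (by positivity) fun z hz => hsU ?_
    rw [Metric.mem_closedBall] at hz ⊢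
    rw [Metric.mem_ball] at hy
    linarith [dist_triangle z y x]
  refine ⟨hc, ?_⟩
  have hlc := continuousOn_lap hU hc
  have hz : ∀ᵐ x ∂volume, x ∈ U → lap u x + h x = 0 := by
    refine hU.ae_eq_zero_of_integral_contDiff_smul_eq_zero (f := fun x => lap u x + h x)
      ((hlc.add hh.continuousOn).locallyIntegrableOn hU.measurableSet) fun φ hφ hφc hφU => ?_
    have t1 := hds φ ⟨hφ, hφc, hφU⟩
    have t2 := green_open hU hc (hφ.of_le two_le_top') hφc hφU
    have i1 := integrable_mul_of_tsupport hU hlc hφ.continuous hφc hφU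
    have i2 := integrable_mul_of_tsupport hU (hh.continuousOn (s := U)) hφ.continuous hφc hφU
    have : ∀ x, φ x • (lap u x + h x) = lap u x * φ x + h x * φ x := fun x => by
      simp only [smul_eq_mul]; ring
    simp only [this]
    rw [integral_add i1 i2]
    linarith
  have hz2 : EqOn (fun x => lap u x + h x) (fun _ => 0) U := by
    refine Measure.eqOn_open_of_ae_eq (μ := volume) ?_ hU (hlc.add hh.continuousOn) continuousOn_const
    rw [Filter.EventuallyEq, ae_restrict_iff' hU.measurableSet]
    exact hz
  intro x hx
  have := hz2 hx
  simp only at this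
  linarith

/-! ### The Green operator -/

/-- `G` is the solution operator of the Dirichlet problem `-Δu = h`, acting on bounded continuous
functions on the whole space; the solution is extended by zero. -/
structure IsGreen {N : ℕ} (Ω : Set (Euc N)) (G : (Euc N →ᵇ ℝ) →L[ℝ] (Euc N →ᵇ ℝ)) : Prop where
  lip : ∃ L, 0 < L ∧ ∀ h x x', |G h x - G h x'| ≤ L * ‖h‖ * ‖x - x'‖
  zero_off : ∀ h, ∀ x ∉ Ω, G h x = 0
  weak : ∀ h : Euc N →ᵇ ℝ, ∃ ζ, WeakSol Ω h (G h) ζ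

lemma integrable_bcf_mul {N : ℕ} {Ω : Set (Euc N)} (h : Euc N →ᵇ ℝ) {φ : Euc N → ℝ}
    (hφ : TestFun Ω φ) : Integrable fun x => h x * φ x :=
  integrable_mul_of_tsupport isOpen_univ h.continuous.continuousOn hφ.continuous hφ.2.1
    (subset_univ _)

lemma DS.unique {N : ℕ} [NeZero N] {Ω : Set (Euc N)} (ho : IsOpen Ω)
    (hb : Bornology.IsBounded Ω) {u v h : Euc N → ℝ} (hu : Continuous u) (h0 : ∀ x ∉ Ω, u x = 0)
    (hds : DS Ω u h) (hv : Continuous v) (hv0 : ∀ x ∉ Ω, v x = 0) (hdv : DS Ω v h) : u = v := by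
  ext x
  have := dirichlet_unique ho hb (hu.sub hv) (fun x hx => by simp [h0 x hx, hv0 x hx])
    (fun φ hφ => by
      have i1 := integrable_mul_of_tsupport isOpen_univ hu.continuousOn
        (continuous_lap hφ.c2) (HasCompactSupport.of_support_subset_isCompact hφ.2.1
          ((subset_tsupport _).trans (tsupport_lap_subset _))) (subset_univ _)
      have i2 := integrable_mul_of_tsupport isOpen_univ hv.continuousOn
        (continuous_lap hφ.c2) (HasCompactSupport.of_support_subset_isCompact hφ.2.1
          ((subset_tsupport _).trans (tsupport_lap_subset _))) (subset_univ _)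
      simp only [Pi.sub_apply, sub_mul]
      rw [integral_sub i1 i2, hds φ hφ, hdv φ hφ]; simp) x
  simpa [sub_eq_zero] using this

/-- The solutions of `exists_dirichlet` depend linearly on `h` by uniqueness, and boundedly by the
Lipschitz estimate. -/
lemma exists_green {N : ℕ} [NeZero N] {Ω : Set (Euc N)} (hΩ : IsC3Domain Ω) :
    ∃ G, IsGreen Ω G := by
  obtain ⟨L, hL0, hL⟩ := exists_dirichlet hΩ
  have ho : IsOpen Ω := hΩ.1
  have hb : Bornology.IsBounded Ω := hΩ.2.2.1
  obtain ⟨R, hR0, hR⟩ := hb.exists_pos_norm_le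
  obtain ⟨e, he⟩ : ∃ e : Euc N, ‖e‖ = 1 :=
    ⟨EuclideanSpace.single (0 : Fin N) 1, by simp⟩
  have hL' : ∀ h : Euc N →ᵇ ℝ, ∃ u : Euc N → ℝ, ∃ ζ, WeakSol Ω h u ζ ∧ (∀ x ∉ Ω, u x = 0) ∧
        ∀ x x', |u x - u x'| ≤ L * ‖h‖ * ‖x - x'‖ := fun h =>
    hL h ‖h‖ h.continuous fun x => h.norm_coe_le_norm x
  choose u ζ hw h0 hlip using hL'
  have huc : ∀ h, Continuous (u h) := fun h =>
    (LipschitzWith.of_dist_le_mul (K := ⟨L * ‖h‖, by positivity⟩) fun x y => by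
      rw [dist_eq_norm, dist_eq_norm, Real.norm_eq_abs]
      exact hlip h x y).continuous
  set D : ℝ := 2 * R + 1 with hD
  have hub : ∀ h x, |u h x| ≤ L * D * ‖h‖ := by
    intro h x
    by_cases hx : x ∈ Ω
    · have hn : ‖(R + 1) • e‖ = R + 1 := by
        rw [norm_smul, he, mul_one, Real.norm_eq_abs, abs_of_pos (by positivity)]
      have h1 : (R + 1) • e ∉ Ω := fun hc => by
        have := hR _ hc
        linarith
      have := hlip h x ((R + 1) • e)
      rw [h0 h _ h1, sub_zero] at this
      refine this.trans ?_
      have h2 : ‖x - (R + 1) • e‖ ≤ D := (norm_sub_le _ _).trans (by rw [hn]; linarith [hR x hx])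
      calc L * ‖h‖ * _ ≤ L * ‖h‖ * D := by gcongr
        _ = _ := by ring
    · rw [h0 h x hx, abs_zero]; positivity
  set U : (Euc N →ᵇ ℝ) → (Euc N →ᵇ ℝ) := fun h =>
    BoundedContinuousFunction.ofNormedAddCommGroup (u h) (huc h) (L * D * ‖h‖) (hub h) with hU
  have huniq : ∀ (h : Euc N →ᵇ ℝ) (v : Euc N → ℝ), Continuous v → (∀ x ∉ Ω, v x = 0) → DS Ω v h → u h = v :=
    fun h v hv hv0 hdv => DS.unique ho hb (huc h) (h0 h) (hw h).ds hv hv0 hdv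
  have hil : ∀ {v φ : Euc N → ℝ}, Continuous v → TestFun Ω φ →
      Integrable fun x => v x * lap φ x := fun hv hφ =>
    integrable_mul_of_tsupport isOpen_univ hv.continuousOn
        (continuous_lap hφ.c2) (HasCompactSupport.of_support_subset_isCompact hφ.2.1
          ((subset_tsupport _).trans (tsupport_lap_subset _))) (subset_univ _)
  let T : (Euc N →ᵇ ℝ) →ₗ[ℝ] (Euc N →ᵇ ℝ) :=
    { toFun := U
      map_add' := fun a b => by
        have := huniq (a + b) (fun x => u a x + u b x) ((huc a).add (huc b))
          (fun x hx => by simp [h0 _ x hx]) (fun φ hφ => by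
            simp only [BoundedContinuousFunction.add_apply, add_mul]
            rw [integral_add (hil (huc a) hφ) (hil (huc b) hφ), (hw a).ds φ hφ, (hw b).ds φ hφ,
              integral_add (integrable_bcf_mul a hφ) (integrable_bcf_mul b hφ)]
            ring)
        ext x; exact congrFun this x
      map_smul' := fun c b => by
        have := huniq (c • b) (fun x => c * u b x) (continuous_const.mul (huc b))
          (fun x hx => by simp [h0 _ x hx]) (fun φ hφ => by
            simp only [mul_assoc, BoundedContinuousFunction.coe_smul, smul_eq_mul]
            rw [integral_const_mul, (hw b).ds φ hφ, integral_const_mul]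
            ring)
        ext x; exact congrFun this x }
  refine ⟨T.mkContinuous (L * D) fun h => ?_, ⟨L, hL0, hlip⟩, h0, fun h => ⟨ζ h, hw h⟩⟩
  exact (BoundedContinuousFunction.norm_le (by positivity)).2 (hub h)

section
variable {N : ℕ} {Ω : Set (Euc N)} {G : (Euc N →ᵇ ℝ) →L[ℝ] (Euc N →ᵇ ℝ)}

lemma IsGreen.ds (hG : IsGreen Ω G) (h : Euc N →ᵇ ℝ) : DS Ω (G h) h :=
  let ⟨_, hζ⟩ := hG.weak h; hζ.ds


lemma IsGreen.eq [NeZero N] (hG : IsGreen Ω G) (ho : IsOpen Ω) (hb : Bornology.IsBounded Ω)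
    {v : Euc N → ℝ} (hv : Continuous v) (hv0 : ∀ x ∉ Ω, v x = 0) {h : Euc N →ᵇ ℝ}
    (hdv : DS Ω v h) : v = G h :=
  DS.unique ho hb hv hv0 hdv (G h).continuous (hG.zero_off h) (hG.ds h)

lemma IsGreen.nonneg [NeZero N] (hG : IsGreen Ω G) (ho : IsOpen Ω) (hb : Bornology.IsBounded Ω)
    {h : Euc N →ᵇ ℝ} (hh : ∀ x ∈ Ω, 0 ≤ h x) (x : Euc N) : 0 ≤ G h x := by
  obtain ⟨ζ, hζ⟩ := hG.weak h
  by_cases hx : x ∈ Ω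
  swap
  · rw [hG.zero_off h x hx]
  have h1 := hζ.neg.le hb ho h.continuous.neg (w := fun _ => 0) contDiff_const (fun _ _ => le_rfl)
    (fun x hx => by simpa [lap] using hh x hx)
  have h2 : EqOn (fun x => max (-G h x) 0) (fun _ => 0) Ω := by
    refine Measure.eqOn_open_of_ae_eq (μ := volume) ?_ ho
      ((G h).continuous.neg.max continuous_const).continuousOn continuousOn_const
    filter_upwards [h1] with y hy
    exact max_eq_right hy
  have := h2 hx
  simp only [max_eq_right_iff] at this
  linarith

/-- The Green operator is compact, by Arzelà–Ascoli. -/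
lemma IsGreen.compact (hG : IsGreen Ω G) (hb : Bornology.IsBounded Ω) : IsCompactOperator G := by
  obtain ⟨L, hL0, hL⟩ := hG.lip
  obtain ⟨R, hR0, hR⟩ := hb.exists_pos_norm_le
  set S : ℝ := R + 1 with hS
  have hS0 : 0 < S := by positivity
  set B := Metric.closedBall (0 : Euc N) S
  have : CompactSpace B := isCompact_iff_compactSpace.1 (isCompact_closedBall _ _)
  have hmax : ∀ x : Euc N, 0 < max S ‖x‖ := fun x => hS0.trans_le (le_max_left _ _)
  -- the radial retraction onto the ball
  let π : C(Euc N, B) := ⟨fun x => ⟨(S / max S ‖x‖) • x, by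
      rw [mem_closedBall_zero_iff, norm_smul, Real.norm_eq_abs, abs_of_pos (div_pos hS0 (hmax x)),
        div_mul_eq_mul_div, div_le_iff₀ (hmax x)]
      exact mul_le_mul_of_nonneg_left (le_max_right _ _) hS0.le⟩, by
      have hc : Continuous fun x : Euc N => S / max S ‖x‖ := continuous_const.div (continuous_const.max continuous_norm) fun x => (hmax x).ne'
      exact (hc.smul continuous_id).subtype_mk _⟩
  let ι : C(B, Euc N) := ⟨Subtype.val, continuous_subtype_val⟩
  have hret : ∀ h, ((G h).compContinuous ι).compContinuous π = G h := by
    intro h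
    ext x
    change G h ((S / max S ‖x‖) • x) = G h x
    by_cases hx : ‖x‖ ≤ S
    · rw [max_eq_left hx, div_self hS0.ne', one_smul]
    · push Not at hx
      rw [max_eq_right hx.le, hG.zero_off h x, hG.zero_off]
      · intro hc
        have := hR _ hc
        rw [norm_smul, Real.norm_eq_abs, abs_of_pos (div_pos hS0 (hS0.trans hx)),
          div_mul_cancel₀ _ (hS0.trans hx).ne'] at this
        linarith
      · intro hc; linarith [hR _ hc]
  set A : Set (B →ᵇ ℝ) := (fun h => (G h).compContinuous ι) '' Metric.closedBall 0 1
  have hA : IsCompact (closure A) := by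
    refine BoundedContinuousFunction.arzela_ascoli (Metric.closedBall 0 ‖G‖)
      (isCompact_closedBall _ _) A ?_ ?_
    · rintro f x ⟨h, hh, rfl⟩
      rw [mem_closedBall_zero_iff] at hh ⊢
      exact ((G h).norm_coe_le_norm _).trans (G.unit_le_opNorm h hh)
    · refine LipschitzWith.uniformEquicontinuous _ ⟨L, hL0.le⟩ (fun f => ?_) |>.equicontinuous
      obtain ⟨f, h, hh, rfl⟩ := f
      refine LipschitzWith.of_dist_le_mul fun x y => ?_
      rw [mem_closedBall_zero_iff] at hh
      refine (hL h x y).trans ?_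
      change _ ≤ L * dist (x : Euc N) y
      rw [dist_eq_norm]
      refine mul_le_mul_of_nonneg_right ?_ (norm_nonneg _)
      exact mul_le_of_le_one_right hL0.le hh
  have hcont : Continuous fun f : B →ᵇ ℝ => f.compContinuous π :=
    BoundedContinuousFunction.continuous_compContinuous π
  refine ⟨_, hA.image hcont, ?_⟩
  refine mem_of_superset (Metric.closedBall_mem_nhds (0 : Euc N →ᵇ ℝ) one_pos) fun h hh => ?_
  exact ⟨_, subset_closure ⟨h, hh, rfl⟩, hret h⟩

end

/-! ### The a priori estimate -/

lemma lap_sub {N : ℕ} {U : Set (Euc N)} (hU : IsOpen U) {f g : Euc N → ℝ}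
    (hf : ContDiffOn ℝ 2 f U) (hg : ContDiffOn ℝ 2 g U) {x : Euc N} (hx : x ∈ U) :
    lap (fun y => f y - g y) x = lap f x - lap g x := by
  have hd : ∀ {f : Euc N → ℝ}, ContDiffOn ℝ 2 f U → ∀ y ∈ U, DifferentiableAt ℝ f y :=
    fun hf y hy => (hf.contDiffAt (hU.mem_nhds hy)).differentiableAt (by norm_num)
  have hd1 : ∀ {f : Euc N → ℝ}, ContDiffOn ℝ 2 f U → ∀ i, DifferentiableAt ℝ (pd i f) x :=
    fun hf i => ((contDiffOn_partial hU hf _).contDiffAt (hU.mem_nhds hx)).differentiableAt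
      (by norm_num)
  simp only [lap_eq_pd]
  rw [← Finset.sum_sub_distrib]
  refine Finset.sum_congr rfl fun i _ => ?_
  rw [← pd_sub (hd1 hf i) (hd1 hg i)]
  refine pd_congr ?_ i
  filter_upwards [hU.mem_nhds hx] with y hy
  exact pd_sub (hd hf y hy) (hd hg y hy) i

/-- The second derivative test at a local maximum. -/
lemma pd2_nonpos {N : ℕ} {U : Set (Euc N)} (hU : IsOpen U) {f : Euc N → ℝ}
    (hf : ContDiffOn ℝ 2 f U) {x : Euc N} (hx : x ∈ U) (hm : IsLocalMax f x) (i : Fin N) :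
    pd i (pd i f) x ≤ 0 := by
  by_contra! hcon
  set e : Euc N := EuclideanSpace.single i 1
  set l : ℝ → Euc N := fun s => x + s • e
  have hl : ∀ s, HasDerivAt l e s := fun s => by
    have := ((hasDerivAt_id s).smul_const e).const_add x
    rw [one_smul] at this
    exact this
  have hlc : Continuous l := continuous_iff_continuousAt.2 fun s => (hl s).continuousAt
  have hl0 : l 0 = x := by simp [l]
  have hlU : ∀ᶠ s in 𝓝 (0:ℝ), l s ∈ U :=
    hlc.continuousAt.eventually (by rw [hl0]; exact hU.mem_nhds hx)
  have hd : ∀ᶠ s in 𝓝 (0:ℝ), deriv (f ∘ l) s = pd i f (l s) := by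
    filter_upwards [hlU] with s hs
    have h1 : HasFDerivAt f (fderiv ℝ f (l s)) (l s) :=
      ((hf.contDiffAt (hU.mem_nhds hs)).differentiableAt (by norm_num)).hasFDerivAt
    exact (h1.comp_hasDerivAt s (hl s)).deriv
  have hdd : deriv (deriv (f ∘ l)) 0 = pd i (pd i f) x := by
    rw [Filter.EventuallyEq.deriv_eq hd]
    have h1 : HasFDerivAt (pd i f) (fderiv ℝ (pd i f) (l 0)) (l 0) := by
      rw [hl0]
      exact (((contDiffOn_partial hU hf _).contDiffAt (hU.mem_nhds hx)).differentiableAt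
        (by norm_num)).hasFDerivAt
    have := (h1.comp_hasDerivAt 0 (hl 0)).deriv
    rw [hl0] at this
    exact this
  have hmax : IsLocalMax (f ∘ l) 0 := by
    have : Tendsto l (𝓝 0) (𝓝 x) := by simpa [hl0] using hlc.tendsto 0
    have h2 := this.eventually hm
    unfold IsLocalMax IsMaxFilter
    filter_upwards [h2] with s hs
    simpa [hl0] using hs
  have hc : ContinuousAt (f ∘ l) 0 := by
    refine ContinuousAt.comp ?_ hlc.continuousAt
    rw [hl0]
    exact (hf.contDiffAt (hU.mem_nhds hx)).continuousAt
  have hmin := isLocalMin_of_deriv_deriv_pos (by rw [hdd]; exact hcon) hmax.deriv_eq_zero hc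
  have heq : (f ∘ l) =ᶠ[𝓝 0] fun _ => (f ∘ l) 0 := by
    filter_upwards [hmax, hmin] with s h1 h2 using le_antisymm h1 h2
  have h0 : deriv (f ∘ l) =ᶠ[𝓝 0] fun _ => 0 := by
    filter_upwards [heq.eventuallyEq_nhds] with s hs
    rw [hs.deriv_eq]; simp
  rw [h0.deriv_eq] at hdd
  simp at hdd
  linarith

/-- Classical comparison: a strictly subharmonic function with nonpositive boundary values is
nonpositive. -/
lemma classical_max {N : ℕ} {Ω : Set (Euc N)} (ho : IsOpen Ω) (hb : Bornology.IsBounded Ω)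
    {v : Euc N → ℝ} (hv : Continuous v) (hc : ContDiffOn ℝ 2 v Ω) (hl : ∀ x ∈ Ω, 0 < lap v x)
    (h0 : ∀ x ∈ closure Ω, x ∉ Ω → v x ≤ 0) : ∀ x ∈ Ω, v x ≤ 0 := by
  intro x hx
  obtain ⟨y, hy, hmax⟩ := hb.isCompact_closure.exists_isMaxOn ⟨x, subset_closure hx⟩ hv.continuousOn
  have hxy : v x ≤ v y := hmax (subset_closure hx)
  by_cases hyΩ : y ∈ Ω
  · have hloc : IsLocalMax v y := hmax.isLocalMax (mem_of_superset (ho.mem_nhds hyΩ) subset_closure)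
    have h1 : lap v y ≤ 0 := by
      rw [lap_eq_pd]
      exact Finset.sum_nonpos fun i _ => pd2_nonpos ho hc hyΩ hloc i
    linarith [hl y hyΩ]
  · exact hxy.trans (h0 y hy hyΩ)

/-- Averages at scale `t` are at most `O(t^{-N})` when the mass is at most one. -/
lemma avg_le_mass {N : ℕ} {Ω : Set (Euc N)} (ho : IsOpen Ω) (hb : Bornology.IsBounded Ω)
    {k : Euc N → ℝ} (hs : ∀ y, 1 < ‖y‖ → k y = 0) {kb : ℝ} (hk0 : ∀ y, 0 ≤ k y) (hkb : ∀ y, |k y| ≤ kb)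
    {h : Euc N → ℝ} (hh : Continuous h) (h0 : ∀ x, 0 ≤ h x) (h1 : ∀ x ∉ Ω, h x ≤ 1)
    (hm : ∫ x in Ω, h x ≤ 1) {t : ℝ} (ht : 0 < t) (ht1 : t ≤ 1) (x : Euc N) :
    avgOp k t h x ≤ (t⁻¹) ^ N * (kb * (1 + volume.real (Metric.closedBall (0 : Euc N) 1))) := by
  have hkb0 : 0 ≤ kb := (abs_nonneg _).trans (hkb 0)
  have i1 : Integrable (Ω.indicator h) :=
    (((hh.continuousOn.integrableOn_compact hb.isCompact_closure).mono_set
      subset_closure)).integrable_indicator ho.measurableSet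
  have i2 : Integrable ((Metric.closedBall x 1).indicator fun _ => (1 : ℝ)) :=
    (integrableOn_const (measure_closedBall_lt_top.ne)).integrable_indicator
      Metric.isClosed_closedBall.measurableSet
  rw [avg_scaled _ _ ht]
  have hle : ∀ z, (t⁻¹) ^ N * k (t⁻¹ • (z - x)) * h z ≤
      (t⁻¹) ^ N * kb * (Ω.indicator h z + (Metric.closedBall x 1).indicator (fun _ => (1:ℝ)) z) := by
    intro z
    have hnn1 : 0 ≤ Ω.indicator h z := indicator_nonneg (fun y _ => h0 y) z
    have hnn2 : 0 ≤ (Metric.closedBall x 1).indicator (fun _ => (1:ℝ)) z :=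
      indicator_nonneg (fun y _ => zero_le_one) z
    by_cases hz : 1 < ‖t⁻¹ • (z - x)‖
    · rw [hs _ hz]; simp only [mul_zero, zero_mul]; positivity
    · rw [mul_assoc, mul_assoc]
      refine mul_le_mul_of_nonneg_left ?_ (by positivity)
      have hzx : z ∈ Metric.closedBall x 1 := by
        rw [Metric.mem_closedBall, dist_eq_norm]
        rw [norm_smul, norm_inv, Real.norm_eq_abs, abs_of_pos ht, lt_inv_mul_iff₀ ht, mul_one,
          not_lt] at hz
        linarith
      have : h z ≤ Ω.indicator h z + (Metric.closedBall x 1).indicator (fun _ => (1:ℝ)) z := by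
        rw [indicator_of_mem hzx]
        by_cases hzΩ : z ∈ Ω
        · rw [indicator_of_mem hzΩ]; linarith
        · rw [indicator_of_notMem hzΩ]; linarith [h1 z hzΩ]
      exact mul_le_mul ((le_abs_self _).trans (hkb _)) this (h0 z) hkb0
  refine (integral_mono_of_nonneg (Eventually.of_forall fun z => mul_nonneg
    (mul_nonneg (by positivity) (hk0 _)) (h0 z)) ((i1.add i2).const_mul _)
    (Eventually.of_forall hle)).trans ?_
  rw [integral_const_mul, mul_assoc]
  refine mul_le_mul_of_nonneg_left (mul_le_mul_of_nonneg_left ?_ hkb0) (by positivity)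
  simp only [Pi.add_apply]
  rw [integral_add i1 i2, integral_indicator ho.measurableSet,
    integral_indicator Metric.isClosed_closedBall.measurableSet, setIntegral_const, smul_eq_mul,
    mul_one, measureReal_def, measureReal_def, Measure.addHaar_closedBall_center volume x]
  gcongr

/-- Interpolation between the sup bound and the mass bound for the potential. -/
lemma gam_mass_bound {N : ℕ} [NeZero N] {Ω : Set (Euc N)} (ho : IsOpen Ω)
    (hb : Bornology.IsBounded Ω) {θ : ℝ} (hθ0 : 0 ≤ θ) (hθ1 : θ ≤ 1) (hθ : N * (1 - θ) < 2) :
    ∃ C, 0 ≤ C ∧ ∀ (h : Euc N → ℝ) (K : ℝ), Continuous h → 1 ≤ K → (∀ x, 0 ≤ h x) →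
      (∀ x, h x ≤ K) → (∀ x ∉ Ω, h x ≤ 1) → (∫ x in Ω, h x ≤ 1) → ∀ x, gam 1 h x ≤ C * K ^ θ := by
  obtain ⟨kb, hkb⟩ := (zet_hcs (N := N)).exists_bound_of_continuous zet_contDiff.continuous
  set q := kb * (1 + volume.real (Metric.closedBall (0 : Euc N) 1)) with hq
  set M := max (∫ y : Euc N, |zet y|) q with hM
  have hM0 : 0 ≤ M := le_max_of_le_left (integral_nonneg fun _ => abs_nonneg _)
  have hexp : -1 < 1 - N * (1 - θ) := by linarith
  refine ⟨M * (1 / (2 - N * (1 - θ))), mul_nonneg hM0 (div_nonneg zero_le_one (by linarith)), ?_⟩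
  intro h K hh hK h0 hhK h1 hm x
  have hK0 : 0 < K := by linarith
  have hH : ∀ x, |h x| ≤ K := fun x => by rw [abs_of_nonneg (h0 x)]; exact hhK x
  have hpt : ∀ t ∈ Icc (0:ℝ) 1, t * avgOp zet t h x ≤ M * K ^ θ * t ^ (1 - N * (1 - θ)) := by
    intro t ht
    rcases ht.1.eq_or_lt with rfl | ht0
    · rw [zero_mul]
      exact mul_nonneg (mul_nonneg hM0 (Real.rpow_nonneg hK0.le _)) (Real.rpow_nonneg le_rfl _)
    set Q := avgOp zet t h x with hQ
    have hQ0 : 0 ≤ Q := integral_nonneg fun y => mul_nonneg (zet_nonneg y) (h0 _)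
    have hQ1 : Q ≤ M * K := by
      refine (le_abs_self _).trans ((abs_avg_le integrable_zet fun y _ => hH _).trans ?_)
      exact mul_le_mul_of_nonneg_right (le_max_left _ _) hK0.le
    have hQ2 : Q ≤ M * (t⁻¹) ^ N := by
      refine (avg_le_mass ho hb (fun y hy => zet_supp hy) zet_nonneg hkb hh h0 h1 hm ht0 ht.2 x).trans ?_
      rw [mul_comm]
      exact mul_le_mul_of_nonneg_right (le_max_right _ _) (by positivity)
    -- Interpolation of the two bounds, in the form `Q = Q^θ Q^(1-θ)`.
    have hQ3 : Q ≤ M * K ^ θ * t ^ (-(N * (1 - θ))) := by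
      calc Q = Q ^ θ * Q ^ (1 - θ) := by
            rw [← Real.rpow_add_of_nonneg hQ0 hθ0 (by linarith)]; simp
        _ ≤ (M * K) ^ θ * (M * (t⁻¹) ^ N) ^ (1 - θ) := by
            have : 0 ≤ 1 - θ := by linarith
            gcongr
        _ = (M ^ θ * M ^ (1 - θ)) * K ^ θ * ((t⁻¹) ^ N) ^ (1 - θ) := by
            rw [Real.mul_rpow hM0 hK0.le, Real.mul_rpow hM0 (by positivity)]; ring
        _ = _ := by
            rw [← Real.rpow_add_of_nonneg hM0 hθ0 (by linarith), ← Real.rpow_natCast,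
              ← Real.rpow_mul (by positivity), Real.inv_rpow ht0.le, ← Real.rpow_neg ht0.le]
            simp
    calc t * Q ≤ t * (M * K ^ θ * t ^ (-(N * (1 - θ)))) := by gcongr
      _ = _ := by
        rw [sub_eq_add_neg 1 ((N : ℝ) * (1 - θ)), Real.rpow_add ht0, Real.rpow_one]; ring
  unfold gam
  refine (intervalIntegral.integral_mono_on zero_le_one
    ((continuous_tQ hh hH x).intervalIntegrable _ _)
    ((intervalIntegral.intervalIntegrable_rpow' hexp).const_mul _) hpt).trans ?_
  rw [intervalIntegral.integral_const_mul, integral_rpow (Or.inl hexp)]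
  rw [Real.one_rpow, Real.zero_rpow (by linarith), sub_zero]
  rw [show 1 - (N:ℝ) * (1 - θ) + 1 = 2 - N * (1 - θ) by ring]
  exact le_of_eq (by ring)

/-- Sub-linear sup bound for solutions of the Dirichlet problem with data of mass at most one. -/
lemma IsGreen.bound {N : ℕ} [NeZero N] {Ω : Set (Euc N)} {G : (Euc N →ᵇ ℝ) →L[ℝ] (Euc N →ᵇ ℝ)}
    (hG : IsGreen Ω G) (ho : IsOpen Ω) (hb : Bornology.IsBounded Ω) {θ : ℝ} (hθ0 : 0 ≤ θ)
    (hθ1 : θ ≤ 1) (hθ : N * (1 - θ) < 2) :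
    ∃ C, 0 ≤ C ∧ ∀ (h : Euc N →ᵇ ℝ) (K L : ℝ), 1 ≤ K → 0 ≤ L →
      (∀ x x', |h x - h x'| ≤ L * ‖x - x'‖) → (∀ x, 0 ≤ h x) →
      (∀ x, h x ≤ K) → (∀ x ∉ Ω, h x ≤ 1) → (∫ x in Ω, h x ≤ 1) → ∀ x, G h x ≤ C * K ^ θ := by
  obtain ⟨C, hC0, hC⟩ := gam_mass_bound ho hb hθ0 hθ1 hθ
  obtain ⟨kb, hkb⟩ := (eta_hcs (N := N)).exists_bound_of_continuous eta_contDiff.continuous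
  obtain ⟨R, hR0, hR⟩ := hb.closure.exists_pos_norm_le
  have hkb0 : 0 ≤ kb := (abs_nonneg _).trans (hkb 0)
  have hN : (0 : ℝ) < N := Nat.cast_pos.2 (NeZero.pos N)
  set a := kb * (1 + volume.real (Metric.closedBall (0 : Euc N) 1)) with ha
  have ha0 : 0 ≤ a := by positivity
  set c := (a + 1) / (2 * N) with hc
  have hc0 : 0 ≤ c := by positivity
  refine ⟨C + c * R ^ 2, by positivity, ?_⟩
  intro h K L hK hL0 hL h0 hhK h1 hm x
  have hH : ∀ x, |h x| ≤ K := fun x => by rw [abs_of_nonneg (h0 x)]; exact hhK x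
  have hKθ : 1 ≤ K ^ θ := Real.one_le_rpow hK hθ0
  by_cases hx : x ∈ Ω
  swap
  · rw [hG.zero_off h x hx]; positivity
  obtain ⟨hg2, hgl⟩ := gam_regular h.continuous hH hL0 hL one_pos
  obtain ⟨hu2, hul⟩ := (hG.ds h).classical ho
    (integrable_of_zero_off hb (G h).continuous (hG.zero_off h)) (G h).continuous
    (fun x => (G h).norm_coe_le_norm x) h.continuous hH hL0 hL
  -- `G h` is compared with the potential of `h` plus a paraboloid absorbing the bounded error
  -- `η * h` in the Laplacian of the potential.
  set Qd : Euc N → ℝ := fun y => c * (R ^ 2 - ‖y - 0‖ ^ 2) with hQd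
  have hQl : ∀ y, lap Qd y = -(a + 1) := by
    intro y
    have := lap_radial (f := fun s => c * (R ^ 2 - s)) (f1 := fun _ => -c) (f2 := fun _ => 0)
      (fun s => by simpa using ((hasDerivAt_id s).const_sub (R ^ 2)).const_mul c)
      (fun s => hasDerivAt_const _ _) (0 : Euc N) y
    simp only [hQd]
    rw [this, hc]; field_simp; ring
  have hQ2 : ContDiff ℝ 2 Qd :=
    contDiff_const.mul (contDiff_const.sub ((contDiff_norm_sq ℝ).comp (contDiff_id.sub contDiff_const)))
  set v : Euc N → ℝ := fun y => (G h y - gam 1 h y) - Qd y with hv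
  have hv2 : ContDiffOn ℝ 2 v Ω := (hu2.sub hg2.contDiffOn).sub hQ2.contDiffOn
  have hvl : ∀ y ∈ Ω, 0 < lap v y := by
    intro y hy
    rw [hv, lap_sub ho (hu2.sub hg2.contDiffOn) hQ2.contDiffOn hy,
      lap_sub ho hu2 hg2.contDiffOn hy, hgl, hQl]
    have := hul y hy
    have h3 := avg_le_mass ho hb (fun y hy => eta_supp hy) eta_nonneg hkb h.continuous h0 h1 hm
      one_pos le_rfl y
    rw [inv_one, one_pow, one_mul] at h3
    linarith
  have hg0 : ∀ y, 0 ≤ gam 1 h y := fun y =>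
    intervalIntegral.integral_nonneg zero_le_one fun t ht =>
      mul_nonneg ht.1 (integral_nonneg fun y => mul_nonneg (zet_nonneg y) (h0 _))
  have := classical_max (v := v) ho hb (((G h).continuous.sub hg2.continuous).sub hQ2.continuous) hv2 hvl
    (fun y hy hyΩ => by
      have : 0 ≤ Qd y := by
        simp only [hQd, sub_zero]
        have := hR y hy
        exact mul_nonneg hc0 (sub_nonneg.2 (by gcongr))
      simp only [hv]
      rw [hG.zero_off h y hyΩ]
      linarith [hg0 y]) x hx
  have h4 := hC h K h.continuous hK h0 hhK h1 hm x
  have h5 : Qd x ≤ c * R ^ 2 := by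
    simp only [hQd]; exact mul_le_mul_of_nonneg_left (by linarith [sq_nonneg ‖x - 0‖]) hc0
  have h6 : c * R ^ 2 ≤ c * R ^ 2 * K ^ θ := le_mul_of_one_le_right (by positivity) hKθ
  simp only [hv] at this
  linarith

/-! ### The fixed point formulation -/

/-- The nonlinearity `t ↦ [t]₊^p`. -/
def gp (p t : ℝ) : ℝ := (max t 0) ^ p

lemma gp_nonneg (p t : ℝ) : 0 ≤ gp p t := Real.rpow_nonneg (le_max_right _ _) _

lemma gp_mono {p : ℝ} (hp : 1 ≤ p) : Monotone (gp p) := fun a b hab =>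
  Real.rpow_le_rpow (le_max_right _ _) (max_le_max_right 0 hab) (by linarith)

lemma gp_continuous {p : ℝ} (hp : 0 ≤ p) : Continuous (gp p) :=
  (continuous_id.max continuous_const).rpow_const fun _ => Or.inr hp

/-- `[t]₊^p` is Lipschitz on half-lines bounded above. -/
lemma gp_lip {p : ℝ} (hp : 1 ≤ p) {M a b : ℝ} (hM : 0 ≤ M) (ha : a ≤ M) (hb : b ≤ M) :
    |gp p a - gp p b| ≤ p * M ^ (p - 1) * |a - b| := by
  have h1 := (convex_Icc (0:ℝ) M).norm_image_sub_le_of_norm_hasDerivWithin_le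
    (f := fun x : ℝ => x ^ p) (f' := fun x => p * x ^ (p - 1)) (C := p * M ^ (p - 1))
    (x := max b 0) (y := max a 0)
    (fun x _ => (Real.hasDerivAt_rpow_const (Or.inr hp)).hasDerivWithinAt)
    (fun x hx => by
      rw [Real.norm_eq_abs, abs_of_nonneg (mul_nonneg (by linarith) (Real.rpow_nonneg hx.1 _))]
      exact mul_le_mul_of_nonneg_left (Real.rpow_le_rpow hx.1 hx.2 (by linarith)) (by linarith))
    ⟨le_max_right _ _, max_le hb hM⟩ ⟨le_max_right _ _, max_le ha hM⟩
  refine h1.trans ?_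
  refine mul_le_mul_of_nonneg_left ?_ (mul_nonneg (by linarith) (Real.rpow_nonneg hM _))
  exact abs_max_sub_max_le_abs a b 0

lemma gp_one_of_eq {p a : ℝ} (hp : 1 ≤ p) (h : gp p a = 1) : a = 1 := by
  have h0 : 0 < a := by
    by_contra! hc
    rw [gp, max_eq_right hc, Real.zero_rpow (by linarith)] at h
    norm_num at h
  rw [gp, max_eq_left h0.le] at h
  rcases lt_trichotomy a 1 with h1 | h1 | h1
  · exact absurd h (Real.rpow_lt_one h0.le h1 (by linarith)).ne
  · exact h1
  · exact absurd h (Real.one_lt_rpow h1 (by linarith)).ne'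

lemma exists_bcf_bound {N : ℕ} {g : ℝ → ℝ} (hg : Continuous g) (f : Euc N →ᵇ ℝ) :
    ∃ C, ∀ x, ‖g (f x)‖ ≤ C := by
  obtain ⟨C, hC⟩ := (isCompact_closedBall (0:ℝ) ‖f‖).exists_bound_of_continuousOn hg.continuousOn
  exact ⟨C, fun x => hC _ (by simpa using f.norm_coe_le_norm x)⟩

/-- The superposition operator on bounded continuous functions. -/
def nem {N : ℕ} (g : ℝ → ℝ) (hg : Continuous g) (f : Euc N →ᵇ ℝ) : Euc N →ᵇ ℝ :=
  BoundedContinuousFunction.ofNormedAddCommGroup (fun x => g (f x)) (hg.comp f.continuous)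
    (exists_bcf_bound hg f).choose (exists_bcf_bound hg f).choose_spec

@[simp] lemma nem_apply {N : ℕ} {g : ℝ → ℝ} (hg : Continuous g) (f : Euc N →ᵇ ℝ) (x : Euc N) :
    nem g hg f x = g (f x) := rfl

lemma nem_continuous {N : ℕ} {g : ℝ → ℝ} (hg : Continuous g) :
    Continuous (nem (N := N) g hg) := by
  rw [Metric.continuous_iff]
  intro f ε hε
  have huc := (isCompact_closedBall (0:ℝ) (‖f‖ + 1)).uniformContinuousOn_of_continuous hg.continuousOn
  rw [Metric.uniformContinuousOn_iff] at huc
  obtain ⟨δ, hδ, hd⟩ := huc (ε / 2) (half_pos hε)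
  refine ⟨min δ 1, lt_min hδ one_pos, fun f' hf' => ?_⟩
  refine lt_of_le_of_lt ((BoundedContinuousFunction.dist_le (half_pos hε).le).2 fun x => ?_)
    (half_lt_self hε)
  have h1 : dist (f' x) (f x) < min δ 1 := (BoundedContinuousFunction.dist_coe_le_dist x).trans_lt hf'
  have h2 : |f x| ≤ ‖f‖ := f.norm_coe_le_norm x
  refine (hd _ ?_ _ ?_ (h1.trans_le (min_le_left _ _))).le
  · rw [mem_closedBall_zero_iff, Real.norm_eq_abs]
    have h3 : |f' x - f x| < 1 := h1.trans_le (min_le_right _ _)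
    calc |f' x| = |f x + (f' x - f x)| := by ring_nf
      _ ≤ |f x| + |f' x - f x| := abs_add_le _ _
      _ ≤ _ := by linarith
  · rw [mem_closedBall_zero_iff, Real.norm_eq_abs]; linarith

/-- The affine argument `α + λ u` of the nonlinearity. -/
def arg {N : ℕ} (lam α : ℝ) (u : Euc N →ᵇ ℝ) : Euc N →ᵇ ℝ :=
  BoundedContinuousFunction.const _ α + lam • u

@[simp] lemma arg_apply {N : ℕ} (lam α : ℝ) (u : Euc N →ᵇ ℝ) (x : Euc N) :
    arg lam α u x = α + lam * u x := rfl

lemma continuous_const_bcf {N : ℕ} :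
    Continuous fun α : ℝ => BoundedContinuousFunction.const (Euc N) α := by
  rw [Metric.continuous_iff]
  intro a ε hε
  refine ⟨ε / 2, half_pos hε, fun b hb => ?_⟩
  exact lt_of_le_of_lt ((BoundedContinuousFunction.dist_le (half_pos hε).le).2 fun x => hb.le)
    (half_lt_self hε)

lemma continuous_arg {N : ℕ} : Continuous fun q : ℝ × (Euc N →ᵇ ℝ) × ℝ => arg q.1 q.2.2 q.2.1 :=
  (continuous_const_bcf.comp (by fun_prop)).add (by fun_prop)

lemma integrableOn_bcf {N : ℕ} {Ω : Set (Euc N)} (hvol : volume Ω = 1) (f : Euc N →ᵇ ℝ) :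
    IntegrableOn f Ω :=
  Measure.integrableOn_of_bounded (M := ‖f‖) (by simp [hvol])
    f.continuous.aestronglyMeasurable (Eventually.of_forall fun x => f.norm_coe_le_norm x)

lemma measureReal_one {N : ℕ} {Ω : Set (Euc N)} (hvol : volume Ω = 1) : volume.real Ω = 1 := by
  simp [measureReal_def, hvol]

/-- Integration over `Ω` as a continuous linear form. -/
def intΩ {N : ℕ} (Ω : Set (Euc N)) (hvol : volume Ω = 1) : (Euc N →ᵇ ℝ) →L[ℝ] ℝ :=
  LinearMap.mkContinuous
    { toFun := fun f => ∫ x in Ω, f x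
      map_add' := fun f g => integral_add (integrableOn_bcf hvol f) (integrableOn_bcf hvol g)
      map_smul' := fun c f => integral_const_mul c _ } 1 fun f => by
    have := norm_setIntegral_le_of_norm_le_const (μ := volume) (s := Ω) (C := ‖f‖) (f := f)
      (by simp [hvol]) fun x _ => f.norm_coe_le_norm x
    rw [measureReal_one hvol] at this
    simpa using this

lemma intΩ_apply {N : ℕ} {Ω : Set (Euc N)} (hvol : volume Ω = 1) (f : Euc N →ᵇ ℝ) :
    intΩ Ω hvol f = ∫ x in Ω, f x := rfl

/-- The fixed point problem equivalent to `(P)_λ`. -/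
def FixP {N : ℕ} (Ω : Set (Euc N)) (G : (Euc N →ᵇ ℝ) →L[ℝ] (Euc N →ᵇ ℝ)) (p lam : ℝ) (hp : 1 ≤ p)
    (z : (Euc N →ᵇ ℝ) × ℝ) : Prop :=
  z.1 = G (nem (gp p) (gp_continuous (by linarith)) (arg lam z.2 z.1)) ∧
    ∫ x in Ω, nem (gp p) (gp_continuous (by linarith)) (arg lam z.2 z.1) x = 1

section
variable {N : ℕ} [NeZero N] {Ω : Set (Euc N)} {G : (Euc N →ᵇ ℝ) →L[ℝ] (Euc N →ᵇ ℝ)}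

/-- The right-hand side `[α + λ G h]₊^p` is Lipschitz, as interior regularity requires. -/
lemma IsGreen.nem_lip {N : ℕ} {Ω : Set (Euc N)} {G : (Euc N →ᵇ ℝ) →L[ℝ] (Euc N →ᵇ ℝ)}
    (hG : IsGreen Ω G) {p : ℝ} (hp : 1 ≤ p) (lam α : ℝ) (h : Euc N →ᵇ ℝ) :
    ∃ L, 0 ≤ L ∧ ∀ x x', |gp p (α + lam * G h x) - gp p (α + lam * G h x')| ≤ L * ‖x - x'‖ := by
  obtain ⟨L, hL0, hL⟩ := hG.lip
  set M := |α| + |lam| * ‖G h‖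
  have hM : 0 ≤ M := by positivity
  have hle : ∀ x, α + lam * G h x ≤ M := fun x => by
    have h1 : |lam * G h x| ≤ |lam| * ‖G h‖ := by
      rw [abs_mul]; exact mul_le_mul_of_nonneg_left ((G h).norm_coe_le_norm x) (abs_nonneg _)
    linarith [le_abs_self α, le_abs_self (lam * G h x)]
  have hc : 0 ≤ p * M ^ (p - 1) := mul_nonneg (by linarith) (Real.rpow_nonneg hM _)
  refine ⟨p * M ^ (p - 1) * (|lam| * (L * ‖h‖)), by positivity, fun x x' => ?_⟩
  refine (gp_lip hp hM (hle x) (hle x')).trans ?_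
  rw [mul_assoc (p * M ^ (p - 1))]
  refine mul_le_mul_of_nonneg_left ?_ hc
  rw [show α + lam * G h x - (α + lam * G h x') = lam * (G h x - G h x') by ring, abs_mul,
    mul_assoc]
  exact mul_le_mul_of_nonneg_left (hL h x x') (abs_nonneg _)

/-- Fixed points are classical solutions, by interior regularity. -/
lemma FixP.solP (hG : IsGreen Ω G) (ho : IsOpen Ω) (hb : Bornology.IsBounded Ω) {p lam : ℝ}
    {hp : 1 ≤ p} {z : (Euc N →ᵇ ℝ) × ℝ} (hz : FixP Ω G p lam hp z) : SolP Ω p lam z.2 z.1 := by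
  obtain ⟨u, α⟩ := z
  obtain ⟨h1, h2⟩ := hz
  simp only at h1 h2
  set h := nem (gp p) (gp_continuous (by linarith)) (arg lam α u) with hh
  obtain ⟨L, hL0, hL⟩ := hG.nem_lip hp lam α h
  rw [← h1] at hL
  have hz0 := hG.zero_off h
  have hds := hG.ds h
  rw [← h1] at hz0 hds
  obtain ⟨c2, cl⟩ := hds.classical ho (integrable_of_zero_off hb u.continuous hz0) u.continuous
    (fun x => u.norm_coe_le_norm x) h.continuous (fun x => h.norm_coe_le_norm x) hL0 hL
  refine ⟨u.continuous.continuousOn, c2, fun x hx => hz0 x ?_, cl, h2⟩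
  rw [ho.frontier_eq] at hx
  exact hx.2

/-- Extended by zero, a classical solution is a fixed point, by uniqueness for the Dirichlet
problem. -/
lemma exists_fixP (hG : IsGreen Ω G) (ho : IsOpen Ω) (hb : Bornology.IsBounded Ω) {p lam α : ℝ}
    (hp : 1 ≤ p) {ψ : Euc N → ℝ} (hs : SolP Ω p lam α ψ) :
    ∃ u, FixP Ω G p lam hp (u, α) ∧ ∀ x ∈ closure Ω, ψ x = u x := by
  obtain ⟨s1, s2, s3, s4, s5⟩ := hs
  have hc : Continuous (Ω.indicator ψ) := continuous_indicator s3 s1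
  have h0 : ∀ x ∉ Ω, Ω.indicator ψ x = 0 := fun x hx => indicator_of_notMem hx _
  obtain ⟨C, hC⟩ := bound_of_zero_off hb hc h0
  set u : Euc N →ᵇ ℝ := BoundedContinuousFunction.ofNormedAddCommGroup _ hc C hC with hu
  have hux : ∀ x ∈ Ω, u x = ψ x := fun x hx => indicator_of_mem hx _
  refine ⟨u, ⟨?_, ?_⟩, ?_⟩
  · ext x
    refine congrFun (hG.eq ho hb u.continuous h0 fun φ hφ => ?_) x
    have e1 : ∫ x, u x * lap φ x = ∫ x, ψ x * lap φ x := by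
      refine integral_congr_ae (Eventually.of_forall fun x => ?_)
      simp only
      by_cases hx : x ∈ Ω
      · rw [hux x hx]
      · have : lap φ x = 0 := by
          by_contra hne
          exact hx (hφ.2.2 (tsupport_lap_subset _ (subset_tsupport _ hne)))
        rw [this, mul_zero, mul_zero]
    rw [e1, green_open ho s2 hφ.c2 hφ.2.1 hφ.2.2, ← integral_neg]
    refine integral_congr_ae (Eventually.of_forall fun x => ?_)
    simp only
    by_cases hx : x ∈ Ω
    · have := s4 x hx
      rw [nem_apply, arg_apply, hux x hx, ← neg_mul]
      congr 1
      rw [← neg_eq_iff_eq_neg, this]; rfl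
    · rw [hφ.zero_off x hx]; simp
  · rw [← s5]
    refine setIntegral_congr_fun ho.measurableSet fun x hx => ?_
    simp only [nem_apply, arg_apply, hux x hx]; rfl
  · intro x hx
    by_cases hxΩ : x ∈ Ω
    · exact (hux x hxΩ).symm
    · rw [s3 x (by rw [ho.frontier_eq]; exact ⟨hx, hxΩ⟩)]
      exact (h0 x hxΩ).symm

lemma FixP.nonneg (hG : IsGreen Ω G) (ho : IsOpen Ω) (hb : Bornology.IsBounded Ω) {p lam : ℝ}
    {hp : 1 ≤ p} {z : (Euc N →ᵇ ℝ) × ℝ} (hz : FixP Ω G p lam hp z) (x : Euc N) : 0 ≤ z.1 x := by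
  rw [hz.1]
  exact hG.nonneg ho hb (fun x _ => gp_nonneg _ _) x

end

/-! ### A priori bounds and compactness of the solution set -/

/-- Subcriticality of `p` leaves room for `θ` strictly between `(N-2)/N` and `1/p`. -/
lemma exists_theta {N : ℕ} (hN : 2 ≤ N) {p : ℝ} (hp : 1 ≤ p)
    (hpN : 3 ≤ N → p < (N : ℝ) / ((N : ℝ) - 2)) :
    ∃ θ : ℝ, 0 ≤ θ ∧ θ ≤ 1 ∧ N * (1 - θ) < 2 ∧ p * θ < 1 := by
  have hN' : (2 : ℝ) ≤ N := by exact_mod_cast hN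
  have key : p * (((N : ℝ) - 2) / N) < 1 := by
    rw [← mul_div_assoc, div_lt_one (by linarith)]
    rcases hN.eq_or_lt with h | h
    · rw [← h]; norm_num
    · have h3 : (3 : ℝ) ≤ N := by exact_mod_cast h
      have := hpN h
      rwa [lt_div_iff₀ (by linarith)] at this
  set a := ((N : ℝ) - 2) / N with ha
  have ha0 : 0 ≤ a := div_nonneg (by linarith) (by linarith)
  have hNa : N * a = N - 2 := by rw [ha]; field_simp
  have hp0 : p ≠ 0 := by linarith
  have hp1 : p * (1 / p) = 1 := by field_simp
  have h1p : 1 / p ≤ 1 := by rw [div_le_one (by linarith)]; exact hp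
  have hap : a < 1 / p := by rw [lt_div_iff₀ (by linarith)]; linarith
  refine ⟨(a + 1 / p) / 2, by positivity, by linarith, ?_, by nlinarith⟩
  nlinarith

lemma exists_sublin {s : ℝ} (hs : s < 1) (A B : ℝ) :
    ∃ K0, 1 ≤ K0 ∧ ∀ K, K0 ≤ K → A + B * K ^ s < K := by
  have h1 : Tendsto (fun K : ℝ => A * K⁻¹ + B * K ^ (-(1 - s))) atTop (𝓝 (A * 0 + B * 0)) :=
    (tendsto_inv_atTop_zero.const_mul A).add
      ((tendsto_rpow_neg_atTop (by linarith)).const_mul B)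
  have h2 := (h1.eventually (gt_mem_nhds (show A * 0 + B * 0 < 1 by norm_num))).and (eventually_ge_atTop 1)
  obtain ⟨K0, hK0⟩ := h2.exists_forall_of_atTop
  refine ⟨max K0 1, le_max_right _ _, fun K hK => ?_⟩
  obtain ⟨h3, h4⟩ := hK0 K ((le_max_left _ _).trans hK)
  have hKp : 0 < K := by linarith
  have e : (A * K⁻¹ + B * K ^ (-(1 - s))) * K = A + B * K ^ s := by
    rw [add_mul, mul_assoc, inv_mul_cancel₀ hKp.ne', mul_assoc, ← Real.rpow_add_one hKp.ne']
    norm_num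
  rw [← e]
  nlinarith

lemma setIntegral_le_const {N : ℕ} {Ω : Set (Euc N)} (hvol : volume Ω = 1) {f : Euc N →ᵇ ℝ}
    {c : ℝ} (h : ∀ x, f x ≤ c) : ∫ x in Ω, f x ≤ c := by
  have := setIntegral_mono (integrableOn_bcf hvol f)
    (integrableOn_bcf hvol (BoundedContinuousFunction.const _ c)) h
  simpa [measureReal_one hvol] using this

lemma const_le_setIntegral {N : ℕ} {Ω : Set (Euc N)} (hvol : volume Ω = 1) {f : Euc N →ᵇ ℝ}
    {c : ℝ} (h : ∀ x, c ≤ f x) : c ≤ ∫ x in Ω, f x := by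
  have := setIntegral_mono (integrableOn_bcf hvol (BoundedContinuousFunction.const _ c))
    (integrableOn_bcf hvol f) h
  simpa [measureReal_one hvol] using this

lemma gp_one (p : ℝ) : gp p 1 = 1 := by simp [gp]

lemma gp_lt_one {p a : ℝ} (hp : 1 ≤ p) (h : a < 1) : gp p a < 1 := by
  rw [gp]
  exact Real.rpow_lt_one (le_max_right _ _) (max_lt h one_pos) (by linarith)

lemma one_lt_gp {p a : ℝ} (hp : 1 ≤ p) (h : 1 < a) : 1 < gp p a := by
  rw [gp]
  exact Real.one_lt_rpow (h.trans_le (le_max_left _ _)) (by linarith)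

section
variable {N : ℕ} {Ω : Set (Euc N)} {G : (Euc N →ᵇ ℝ) →L[ℝ] (Euc N →ᵇ ℝ)}

/-- If `α > 1` and `u ≥ 0`, the density exceeds `1` everywhere and its mass exceeds `1`. -/
lemma mass_alpha_le (hvol : volume Ω = 1) {p lam α : ℝ} (hp : 1 ≤ p) (hlam : 0 ≤ lam)
    {u : Euc N →ᵇ ℝ} (hu : ∀ x, 0 ≤ u x)
    (h1 : ∫ x in Ω, nem (gp p) (gp_continuous (by linarith)) (arg lam α u) x = 1) : α ≤ 1 := by
  by_contra! hc
  have := const_le_setIntegral hvol (f := nem (gp p) (gp_continuous (by linarith)) (arg lam α u))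
    (c := gp p α) fun x => gp_mono (by linarith) (by
      rw [arg_apply]; linarith [mul_nonneg hlam (hu x)])
  rw [h1] at this
  linarith [one_lt_gp hp hc]

/-- If `α + λ sup u < 1`, the density and hence its mass are below `1`. -/
lemma mass_le_alpha (hvol : volume Ω = 1) {p lam α M : ℝ} (hp : 1 ≤ p) (hlam : 0 ≤ lam)
    {u : Euc N →ᵇ ℝ} (hu : ∀ x, u x ≤ M)
    (h1 : ∫ x in Ω, nem (gp p) (gp_continuous (by linarith)) (arg lam α u) x = 1) :
    1 - lam * M ≤ α := by
  by_contra! hc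
  have := setIntegral_le_const hvol (f := nem (gp p) (gp_continuous (by linarith)) (arg lam α u))
    (c := gp p (α + lam * M)) fun x => gp_mono (by linarith) (by
      rw [arg_apply]; linarith [mul_le_mul_of_nonneg_left (hu x) hlam])
  rw [h1] at this
  linarith [gp_lt_one hp (show α + lam * M < 1 by linarith)]

/-- With `K` the supremum of the density, `IsGreen.bound` gives `u ≤ C K^θ`, while
`K ≤ (1 + λ sup u)^p`; as `pθ < 1`, this bounds `u`. -/
lemma fixP_apriori [NeZero N] (hG : IsGreen Ω G) (ho : IsOpen Ω) (hb : Bornology.IsBounded Ω)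
    (hvol : volume Ω = 1) {p θ : ℝ} (hp : 1 ≤ p) (hθ0 : 0 ≤ θ) (hθ1 : θ ≤ 1)
    (hθ : N * (1 - θ) < 2) (hpθ : p * θ < 1) {Lam : ℝ} (hLam : 0 ≤ Lam) :
    ∃ M, 0 ≤ M ∧ ∀ lam, 0 ≤ lam → lam ≤ Lam → ∀ z, FixP Ω G p lam hp z →
      ‖z.1‖ ≤ M ∧ z.2 ≤ 1 ∧ 1 - Lam * M ≤ z.2 := by
  obtain ⟨C, hC0, hC⟩ := hG.bound ho hb hθ0 hθ1 hθ
  obtain ⟨K0, hK0, hK⟩ := exists_sublin hpθ 1 (Lam * C)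
  refine ⟨C * K0 ^ (p * θ), mul_nonneg hC0 (Real.rpow_nonneg (by linarith) _),
    fun lam hl0 hl1 z hz => ?_⟩
  have hu := hz.nonneg hG ho hb
  obtain ⟨u, α⟩ := z
  obtain ⟨h1, h2⟩ := hz
  simp only at h1 h2 hu ⊢
  have hα := mass_alpha_le hvol hp hl0 hu h2
  set h := nem (gp p) (gp_continuous (by linarith)) (arg lam α u) with hh
  have hle : ∀ x, u x ≤ ‖u‖ := fun x => (le_abs_self _).trans (u.norm_coe_le_norm x)
  have harg : ∀ x, α + lam * u x ≤ 1 + Lam * ‖u‖ := fun x => by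
    linarith [mul_le_mul hl1 (hle x) (hu x) hLam]
  set Y := 1 + Lam * ‖u‖ with hY
  have hY1 : 1 ≤ Y := by have : 0 ≤ Lam * ‖u‖ := by positivity
                         linarith
  obtain ⟨L, hL0, hL⟩ := hG.nem_lip hp lam α h
  rw [← h1] at hL
  have hz0 := hG.zero_off h
  rw [← h1] at hz0
  have hgY : gp p Y = Y ^ p := by rw [gp, max_eq_left (by linarith)]
  have hb1 := hC h (Y ^ p) L (Real.one_le_rpow hY1 (by linarith)) hL0 hL
    (fun x => gp_nonneg _ _) (fun x => by
      rw [← hgY]; exact gp_mono (by linarith) (harg x))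
    (fun x hx => by
      rw [hh, nem_apply, arg_apply, hz0 x hx, mul_zero, add_zero, ← gp_one p]
      exact gp_mono (by linarith) hα) h2.le
  rw [← h1, ← Real.rpow_mul (by linarith)] at hb1
  have hYp : 0 ≤ Y ^ (p * θ) := Real.rpow_nonneg (by linarith) _
  have hM : ‖u‖ ≤ C * Y ^ (p * θ) :=
    (BoundedContinuousFunction.norm_le (by positivity)).2 fun x => by
      rw [Real.norm_eq_abs, abs_of_nonneg (hu x)]; exact hb1 x
  have hYK : Y ≤ K0 := by
    by_contra! hc
    have := hK Y hc.le
    have h3 := mul_le_mul_of_nonneg_left hM hLam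
    rw [← mul_assoc] at h3
    linarith
  have hM' : ‖u‖ ≤ C * K0 ^ (p * θ) := hM.trans (mul_le_mul_of_nonneg_left
    (Real.rpow_le_rpow (by linarith) hYK (by positivity)) hC0)
  refine ⟨hM', hα, ?_⟩
  have h4 := mass_le_alpha hvol hp hl0 hle h2
  have h5 := mul_le_mul hl1 hM' (norm_nonneg u) hLam
  linarith

lemma isClosed_fixP (hvol : volume Ω = 1) {p : ℝ} (hp : 1 ≤ p) :
    IsClosed {q : ℝ × (Euc N →ᵇ ℝ) × ℝ | FixP Ω G p q.1 hp q.2} := by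
  have hn : Continuous fun q : ℝ × (Euc N →ᵇ ℝ) × ℝ =>
      nem (gp p) (gp_continuous (by linarith)) (arg q.1 q.2.2 q.2.1) :=
    (nem_continuous _).comp continuous_arg
  refine IsClosed.inter (isClosed_eq (by fun_prop) (G.continuous.comp hn)) ?_
  exact isClosed_eq ((intΩ Ω hvol).continuous.comp hn) continuous_const

/-- The solution set over a bounded parameter interval is closed and, by the a priori bound and the
compactness of `G`, contained in a compact set. -/
lemma fixP_compact [NeZero N] (hG : IsGreen Ω G) (ho : IsOpen Ω) (hb : Bornology.IsBounded Ω)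
    (hvol : volume Ω = 1) {p θ : ℝ} (hp : 1 ≤ p) (hθ0 : 0 ≤ θ) (hθ1 : θ ≤ 1)
    (hθ : N * (1 - θ) < 2) (hpθ : p * θ < 1) {Lam : ℝ} (hLam : 0 ≤ Lam) :
    IsCompact {q : ℝ × (Euc N →ᵇ ℝ) × ℝ | q.1 ∈ Icc 0 Lam ∧ FixP Ω G p q.1 hp q.2} := by
  obtain ⟨M, hM0, hM⟩ := fixP_apriori hG ho hb hvol hp hθ0 hθ1 hθ hpθ hLam
  set R := gp p (1 + Lam * M) with hR
  obtain ⟨K, hKc, hK⟩ := (hG.compact hb).image_subset_compact_of_bounded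
    (Metric.isBounded_closedBall (x := (0 : Euc N →ᵇ ℝ)) (r := R))
  refine ((isCompact_Icc (a := 0) (b := Lam)).prod (hKc.prod (isCompact_Icc (a := 1 - Lam * M) (b := 1)))).of_isClosed_subset
    ?_ ?_
  · exact (isClosed_Icc.preimage continuous_fst).inter (isClosed_fixP hvol hp)
  · rintro ⟨lam, z⟩ ⟨hl, hz⟩
    simp only at hl hz
    obtain ⟨h1, h2, h3⟩ := hM lam hl.1 hl.2 z hz
    refine ⟨hl, ?_, h3, h2⟩
    have hu := hz.nonneg hG ho hb
    show z.1 ∈ K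
    rw [hz.1]
    refine hK (mem_image_of_mem _ ?_)
    rw [mem_closedBall_zero_iff, BoundedContinuousFunction.norm_le (gp_nonneg _ _)]
    intro x
    rw [nem_apply, Real.norm_eq_abs, abs_of_nonneg (gp_nonneg _ _)]
    refine gp_mono (by linarith) ?_
    rw [arg_apply]
    have := mul_le_mul hl.2 (((le_abs_self _).trans (z.1.norm_coe_le_norm x)).trans h1) (hu x) hLam
    linarith
end

/-! ### The stability inequality -/

lemma integrableOn_cont {N : ℕ} {Ω : Set (Euc N)} (hb : Bornology.IsBounded Ω) {F : Euc N → ℝ}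
    (hF : Continuous F) : IntegrableOn F Ω :=
  (hF.continuousOn.integrableOn_compact hb.isCompact_closure).mono_set subset_closure

lemma memLp_cont {N : ℕ} {Ω : Set (Euc N)} (hb : Bornology.IsBounded Ω) {F : Euc N → ℝ}
    (hF : Continuous F) : MemLp F 2 (volume.restrict Ω) :=
  (memLp_two_iff_integrable_sq hF.aestronglyMeasurable).2 (integrableOn_cont hb (hF.pow 2))

/-- The weight `ρ_λ^{1/q}` as a bounded continuous function. -/
def wt {N : ℕ} (p : ℝ) (hp : 1 ≤ p) (lam α : ℝ) (u : Euc N →ᵇ ℝ) : Euc N →ᵇ ℝ :=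
  nem (gp (p - 1)) (gp_continuous (by linarith)) (arg lam α u)

lemma wt_eq {N : ℕ} {p : ℝ} (hp : 1 ≤ p) (lam α : ℝ) (u : Euc N →ᵇ ℝ) (x : Euc N) :
    rhoq p lam α u x = wt p hp lam α u x := rfl

lemma wt_nonneg {N : ℕ} {p : ℝ} (hp : 1 ≤ p) (lam α : ℝ) (u : Euc N →ᵇ ℝ) (x : Euc N) :
    0 ≤ wt p hp lam α u x := gp_nonneg _ _

section
variable {N : ℕ} {Ω : Set (Euc N)}

/-- The weighted variance in expanded form. -/
lemma wdenom_eq (hb : Bornology.IsBounded Ω) {p : ℝ} (hp : 1 ≤ p) (lam α : ℝ) (u : Euc N →ᵇ ℝ)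
    (hm : 0 < ∫ x in Ω, wt p hp lam α u x) {φ : Euc N → ℝ} (hφ : Continuous φ) :
    wdenom Ω p lam α u φ = (∫ x in Ω, wt p hp lam α u x * φ x ^ 2) -
      (∫ x in Ω, wt p hp lam α u x * φ x) ^ 2 / ∫ x in Ω, wt p hp lam α u x := by
  have hr := (wt p hp lam α u).continuous
  simp only [wdenom, brk, avgl, wt_eq hp]
  set r := wt p hp lam α u
  set m := ∫ x in Ω, r x
  set a := ∫ x in Ω, r x * φ x
  have e : ∀ x, r x * (φ x - a / m) ^ 2 =
      r x * φ x ^ 2 + (-(2 * (a / m)) * (r x * φ x) + (a / m) ^ 2 * r x) := fun x => by ring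
  simp_rw [e]
  rw [integral_add (integrableOn_cont hb (by fun_prop)) (integrableOn_cont hb (by fun_prop)),
    integral_add (integrableOn_cont hb (by fun_prop)) (integrableOn_cont hb (by fun_prop)),
    integral_const_mul, integral_const_mul]
  change _ + (-(2 * (a / m)) * a + (a / m) ^ 2 * m) = _
  field_simp
  ring

lemma wdenom_nonneg {p : ℝ} (lam α : ℝ) (ψ φ : Euc N → ℝ) :
    0 ≤ wdenom Ω p lam α ψ φ :=
  integral_nonneg fun _ => mul_nonneg (Real.rpow_nonneg (le_max_right _ _) _) (sq_nonneg _)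

/-- The definition of `σ₁` as an inequality for test functions. The set of quotients is bounded below
by `-λp`, so the infimum is not a junk value. -/
lemma test_stab {p lam α : ℝ} {ψ φ : Euc N → ℝ} (hφ : TestFun Ω φ) :
    (sigma1 Ω p lam α ψ + lam * p) * wdenom Ω p lam α ψ φ ≤ Bf φ φ := by
  have hB : ∀ φ, TestFun Ω φ → ∫ x in Ω, ‖fderiv ℝ φ x‖ ^ 2 = Bf φ φ := fun φ hφ => by
    simp_rw [norm_sq_fderiv]
    refine setIntegral_eq_integral_of_forall_compl_eq_zero fun x hx => ?_
    exact dir_zero_of_notMem fun h => hx (hφ.2.2 h)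
  rcases (wdenom_nonneg (p := p) (Ω := Ω) lam α ψ φ).eq_or_lt with h | h
  · rw [← h, mul_zero]; exact Bf_self_nonneg φ
  · have h1 : sigma1 Ω p lam α ψ ≤ rayleigh Ω p lam α ψ φ := by
      refine csInf_le ⟨-(lam * p), ?_⟩ ⟨φ, hφ, h, rfl⟩
      rintro s ⟨φ', hφ', h', rfl⟩
      rw [rayleigh, le_div_iff₀ h', hB _ hφ']
      linarith [Bf_self_nonneg φ']
    rw [rayleigh, le_div_iff₀ h, hB _ hφ] at h1
    linarith

/-- The stability inequality on the range of `G`: the approximating test functions of `G h` converge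
in `L²` and their energies converge to `∫ h G h`. -/
lemma IsGreen.stab {G : (Euc N →ᵇ ℝ) →L[ℝ] (Euc N →ᵇ ℝ)} (hG : IsGreen Ω G) (ho : IsOpen Ω)
    (hb : Bornology.IsBounded Ω) {p : ℝ} (hp : 1 ≤ p) (lam α : ℝ) (u : Euc N →ᵇ ℝ)
    (hm : 0 < ∫ x in Ω, wt p hp lam α u x) (h : Euc N →ᵇ ℝ) :
    (sigma1 Ω p lam α u + lam * p) * wdenom Ω p lam α u (G h) ≤ ∫ x in Ω, h x * G h x := by
  obtain ⟨ζ, hζ⟩ := hG.weak h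
  have hE := hζ.energy hb ho h.continuous
  set r := wt p hp lam α u with hr
  have hrc := r.continuous
  have hGc := (G h).continuous
  have hζc : ∀ n, Continuous (ζ n) := fun n => (hζ.test n).continuous
  have hsub : ∀ n, ∫ x in Ω, (ζ n x - G h x) ^ 2 = ∫ x, (ζ n x - G h x) ^ 2 := fun n =>
    setIntegral_eq_integral_of_forall_compl_eq_zero fun x hx => by
      rw [(hζ.test n).zero_off x hx, hG.zero_off h x hx]; norm_num
  have hlim := hζ.lim
  simp_rw [← hsub] at hlim
  have hw : ∀ g : Euc N → ℝ, Continuous g → Tendsto (fun n => ∫ x in Ω, g x * ζ n x) atTop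
      (𝓝 (∫ x in Ω, g x * G h x)) := fun g hg =>
    tendsto_integral_mul (fun n => memLp_cont hb (hζc n)) (memLp_cont hb hg)
      (memLp_cont hb hGc) hlim
  have h1 : Tendsto (fun n => ∫ x in Ω, r x * (ζ n x - G h x) ^ 2) atTop (𝓝 0) := by
    refine squeeze_zero (fun n => integral_nonneg fun x =>
      mul_nonneg (wt_nonneg hp lam α u x) (sq_nonneg _)) (fun n => ?_)
      (by simpa using hlim.const_mul ‖r‖)
    rw [← integral_const_mul]
    refine setIntegral_mono (integrableOn_cont hb (by fun_prop))
      (integrableOn_cont hb (by fun_prop)) fun x => ?_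
    exact mul_le_mul_of_nonneg_right ((le_abs_self _).trans (r.norm_coe_le_norm x)) (sq_nonneg _)
  have h2 : Tendsto (fun n => ∫ x in Ω, r x * ζ n x ^ 2) atTop
      (𝓝 (∫ x in Ω, r x * G h x ^ 2)) := by
    have h3 := (h1.add ((hw (fun x => r x * G h x) (by fun_prop)).const_mul 2)).sub_const
      (∫ x in Ω, r x * G h x ^ 2)
    have e0 : 0 + 2 * (∫ x in Ω, r x * G h x * G h x) - (∫ x in Ω, r x * G h x ^ 2)
        = ∫ x in Ω, r x * G h x ^ 2 := by
      have : ∀ x, r x * G h x * G h x = r x * G h x ^ 2 := fun x => by ring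
      simp_rw [this]; ring
    rw [e0] at h3
    refine h3.congr fun n => ?_
    rw [← integral_const_mul,
      ← integral_add (integrableOn_cont hb (by fun_prop)) (integrableOn_cont hb (by fun_prop)),
      ← integral_sub (integrableOn_cont hb (by fun_prop)) (integrableOn_cont hb (by fun_prop))]
    exact integral_congr_ae (Eventually.of_forall fun x => by ring)
  have h4 : Tendsto (fun n => wdenom Ω p lam α u (ζ n)) atTop
      (𝓝 (wdenom Ω p lam α u (G h))) := by
    rw [wdenom_eq hb hp lam α u hm hGc]
    refine (h2.sub (((hw _ hrc).pow 2).div_const _)).congr fun n => ?_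
    rw [wdenom_eq hb hp lam α u hm (hζc n)]
  exact le_of_tendsto_of_tendsto' (h4.const_mul _) hE fun n => test_stab (hζ.test n)

/-- Poincaré's inequality for solutions of the Dirichlet problem. -/
lemma IsGreen.poincare [NeZero N] {G : (Euc N →ᵇ ℝ) →L[ℝ] (Euc N →ᵇ ℝ)} (hG : IsGreen Ω G)
    (ho : IsOpen Ω) (hb : Bornology.IsBounded Ω) :
    ∃ P, 0 < P ∧ ∀ h, ∫ x in Ω, G h x ^ 2 ≤ P * ∫ x in Ω, h x * G h x := by
  obtain ⟨P, hP, hPo⟩ := _root_.poincare hb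
  refine ⟨P, hP, fun h => ?_⟩
  obtain ⟨ζ, hζ⟩ := hG.weak h
  have hE := (hζ.energy hb ho h.continuous).const_mul P
  have hGc := (G h).continuous
  have hw := hζ.tendsto_mul hζ.memLp
  have e : ∫ x in Ω, G h x ^ 2 = ∫ x, G h x * G h x := by
    simp_rw [← sq]
    exact setIntegral_eq_integral_of_forall_compl_eq_zero fun x hx => by
      rw [hG.zero_off h x hx]; norm_num
  rw [e]
  have hw2 := (hw.const_mul 2).sub_const (∫ x, G h x * G h x)
  rw [two_mul, add_sub_cancel_right] at hw2
  refine le_of_tendsto_of_tendsto' hw2 hE fun n => ?_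
  refine le_trans ?_ (hPo _ (hζ.test n))
  have : ∫ x, (ζ n x - G h x) ^ 2 = (∫ x, ζ n x ^ 2) - 2 * (∫ x, G h x * ζ n x)
      + ∫ x, G h x * G h x := by
    have hi : Integrable fun x => ζ n x ^ 2 - 2 * (G h x * ζ n x) :=
      (hζ.test n).integrable_sq.sub (((hζ.test n).integrable_mul hGc).const_mul 2)
    rw [← integral_const_mul, ← integral_sub (hζ.test n).integrable_sq
      (((hζ.test n).integrable_mul hGc).const_mul 2), ← integral_add hi
      (integrable_mul_L2 hζ.memLp hζ.memLp)]
    exact integral_congr_ae (Eventually.of_forall fun x => by ring)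
  have h0 : 0 ≤ ∫ x, (ζ n x - G h x) ^ 2 := integral_nonneg fun x => sq_nonneg _
  linarith
end

/-! ### Linearization at a stable solution -/

lemma gp_hasDerivAt {p : ℝ} (hp : 1 < p) (t : ℝ) : HasDerivAt (gp p) (p * gp (p - 1) t) t := by
  refine hasDerivAt_of_hasDerivAt_of_ne' (x := 0) (g := fun t => p * gp (p - 1) t) (fun y hy => ?_)
    (gp_continuous (by linarith)).continuousAt
    ((gp_continuous (by linarith)).const_mul p).continuousAt t
  rcases lt_or_gt_of_ne hy with h | h
  · have e : gp p =ᶠ[𝓝 y] fun _ => 0 := by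
      filter_upwards [gt_mem_nhds h] with s hs
      rw [gp, max_eq_right hs.le, Real.zero_rpow (by linarith)]
    have e2 : p * gp (p - 1) y = 0 := by
      rw [gp, max_eq_right h.le, Real.zero_rpow (by linarith), mul_zero]
    simp only [e2]
    exact (hasDerivAt_const y (0 : ℝ)).congr_of_eventuallyEq e
  · have e : gp p =ᶠ[𝓝 y] fun s => s ^ p := by
      filter_upwards [lt_mem_nhds h] with s hs
      rw [gp, max_eq_left hs.le]
    simp only [gp, max_eq_left h.le]
    exact (Real.hasDerivAt_rpow_const (Or.inl h.ne')).congr_of_eventuallyEq e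

/-- The superposition operator of a `C¹` function is strictly differentiable. -/
lemma nem_hasStrictFDerivAt {N : ℕ} {g g' : ℝ → ℝ} (hg : Continuous g) (hg' : Continuous g')
    (hd : ∀ t, HasDerivAt g (g' t) t) (f : Euc N →ᵇ ℝ) :
    HasStrictFDerivAt (nem g hg) (ContinuousLinearMap.mul ℝ (Euc N →ᵇ ℝ) (nem g' hg' f)) f := by
  refine hasStrictFDerivAt_of_hasFDerivAt_of_continuousAt (f := nem g hg)
    (f' := fun f => ContinuousLinearMap.mul ℝ (Euc N →ᵇ ℝ) (nem g' hg' f))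
    (Eventually.of_forall fun f => ?_)
    ((ContinuousLinearMap.mul ℝ (Euc N →ᵇ ℝ)).continuous.comp (nem_continuous hg')).continuousAt
  rw [hasFDerivAt_iff_isLittleO, Asymptotics.isLittleO_iff]
  intro ε hε
  have huc := (isCompact_closedBall (0:ℝ) (‖f‖ + 1)).uniformContinuousOn_of_continuous
    hg'.continuousOn
  rw [Metric.uniformContinuousOn_iff] at huc
  obtain ⟨δ, hδ, hdel⟩ := huc ε hε
  filter_upwards [Metric.ball_mem_nhds f (lt_min hδ one_pos)] with k hk
  rw [BoundedContinuousFunction.norm_le (by positivity)]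
  intro x
  have h1 : |k x - f x| < min δ 1 := (BoundedContinuousFunction.dist_coe_le_dist x).trans_lt hk
  have h2 : |f x| ≤ ‖f‖ := f.norm_coe_le_norm x
  have hkf : |k x - f x| ≤ ‖k - f‖ := (k - f).norm_coe_le_norm x
  have key : ∀ t ∈ uIcc (f x) (k x), ‖g' t - g' (f x)‖ ≤ ε := fun t ht => by
    have h3 : |t - f x| ≤ |k x - f x| := abs_sub_left_of_mem_uIcc ht
    refine (hdel t ?_ _ ?_ (lt_of_le_of_lt h3 (h1.trans_le (min_le_left _ _)))).le
    · rw [mem_closedBall_zero_iff, Real.norm_eq_abs]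
      have h4 : |k x - f x| < 1 := h1.trans_le (min_le_right _ _)
      calc |t| = |f x + (t - f x)| := by ring_nf
        _ ≤ |f x| + |t - f x| := abs_add_le _ _
        _ ≤ _ := by linarith
    · rw [mem_closedBall_zero_iff, Real.norm_eq_abs]; linarith
  have hmv := (convex_uIcc (f x) (k x)).norm_image_sub_le_of_norm_hasDerivWithin_le
    (f := fun t => g t - g' (f x) * t) (f' := fun t => g' t - g' (f x)) (C := ε)
    (fun t _ => (((hd t).sub ((hasDerivAt_id t).const_mul (g' (f x)))).hasDerivWithinAt.congr_deriv
      (by simp)))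
    key left_mem_uIcc right_mem_uIcc
  calc _ = ‖g (k x) - g' (f x) * k x - (g (f x) - g' (f x) * f x)‖ := by
        congr 1
        change g (k x) - g (f x) - g' (f x) * (k x - f x) = _
        ring
    _ ≤ ε * ‖k x - f x‖ := hmv
    _ ≤ _ := mul_le_mul_of_nonneg_left hkf hε.le

lemma eqOn_zero_of_integral {N : ℕ} {Ω : Set (Euc N)} (ho : IsOpen Ω) (hb : Bornology.IsBounded Ω)
    {f : Euc N → ℝ} (hf : Continuous f) (h0 : ∀ x, 0 ≤ f x) (hi : ∫ x in Ω, f x ≤ 0) :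
    ∀ x ∈ Ω, f x = 0 := by
  have h1 : ∫ x in Ω, f x = 0 := le_antisymm hi (integral_nonneg h0)
  rw [integral_eq_zero_iff_of_nonneg h0 (integrableOn_cont hb hf)] at h1
  exact Measure.eqOn_open_of_ae_eq h1 ho hf.continuousOn continuousOn_const

lemma gp_eq_mul {p : ℝ} (hp : 1 ≤ p) (t : ℝ) : gp p t = max t 0 * gp (p - 1) t := by
  rcases le_or_gt t 0 with h | h
  · rw [gp, max_eq_right h, Real.zero_rpow (by linarith), zero_mul]
  · rw [gp, gp, max_eq_left h.le, mul_comm, ← Real.rpow_add_one h.ne']; ring_nf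

section
variable {N : ℕ} {Ω : Set (Euc N)} {G : (Euc N →ᵇ ℝ) →L[ℝ] (Euc N →ᵇ ℝ)}

/-- The total weight `m_λ` of a solution is positive, since the density has mass one. -/
lemma FixP.wt_pos (ho : IsOpen Ω) (hb : Bornology.IsBounded Ω) {p lam : ℝ}
    {hp : 1 ≤ p} {z : (Euc N →ᵇ ℝ) × ℝ} (hz : FixP Ω G p lam hp z) :
    0 < ∫ x in Ω, wt p hp lam z.2 z.1 x := by
  by_contra! hc
  have h1 := eqOn_zero_of_integral ho hb (wt p hp lam z.2 z.1).continuous (wt_nonneg hp _ _ _) hc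
  have h2 := hz.2
  rw [setIntegral_congr_fun (g := fun _ => (0 : ℝ)) ho.measurableSet fun x hx => by
    rw [nem_apply, gp_eq_mul hp]
    have := h1 x hx
    rw [wt, nem_apply] at this
    rw [this, mul_zero]] at h2
  simp at h2

/-- The kernel of the linearization is trivial at a strictly stable solution. -/
lemma lin_injective [NeZero N] (hG : IsGreen Ω G) (ho : IsOpen Ω) (hb : Bornology.IsBounded Ω)
    {p lam α : ℝ} (hp : 1 ≤ p) {u : Euc N →ᵇ ℝ}
    (hm : 0 < ∫ x in Ω, wt p hp lam α u x) (hσ : 0 < sigma1 Ω p lam α u)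
    {φ : Euc N →ᵇ ℝ} {β : ℝ} (h1 : φ = G ((p • wt p hp lam α u) * arg lam β φ))
    (h2 : ∫ x in Ω, ((p • wt p hp lam α u) * arg lam β φ) x = 0) : φ = 0 ∧ β = 0 := by
  have hS := hG.stab ho hb hp lam α u hm ((p • wt p hp lam α u) * arg lam β φ)
  obtain ⟨P, hP, hPo⟩ := hG.poincare ho hb
  have hPo := hPo ((p • wt p hp lam α u) * arg lam β φ)
  rw [← h1] at hS hPo
  have hw := wdenom_eq hb hp lam α u hm φ.continuous
  have hw0 := wdenom_nonneg (p := p) (Ω := Ω) lam α u φ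
  set r := wt p hp lam α u with hr
  have hrc := r.continuous
  have hφc := φ.continuous
  set m := ∫ x in Ω, r x with hmdef
  set a := ∫ x in Ω, r x * φ x with ha
  have e1 : ∀ x, ((p • r) * arg lam β φ) x = p * β * r x + p * lam * (r x * φ x) := fun x => by
    change p * r x * (β + lam * φ x) = _
    ring
  simp_rw [e1] at h2 hS hPo
  rw [integral_add (integrableOn_cont hb (by fun_prop)) (integrableOn_cont hb (by fun_prop)),
    integral_const_mul, integral_const_mul] at h2
  -- The mass condition forces `β = -λ⟨φ⟩`, which turns the energy of `φ` into `λ p` times its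
  -- weighted variance and contradicts stability unless that variance vanishes.
  have h3 : β * m + lam * a = 0 := by
    have : p * (β * m + lam * a) = 0 := by rw [← h2]; ring
    rcases mul_eq_zero.1 this with h | h
    · linarith
    · exact h
  have e2 : ∀ x, (p * β * r x + p * lam * (r x * φ x)) * φ x =
      p * β * (r x * φ x) + p * lam * (r x * φ x ^ 2) := fun x => by ring
  simp_rw [e2] at hS hPo
  rw [integral_add (integrableOn_cont hb (by fun_prop)) (integrableOn_cont hb (by fun_prop)),
    integral_const_mul, integral_const_mul] at hS hPo
  have hβ : β = -(lam * a / m) := by field_simp; linarith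
  have e3 : p * β * a + p * lam * (∫ x in Ω, r x * φ x ^ 2) =
      lam * p * wdenom Ω p lam α u φ := by rw [hw, hβ]; ring
  change _ ≤ p * β * a + _ at hS
  change _ ≤ P * (p * β * a + _) at hPo
  rw [e3] at hS hPo
  have h4 : wdenom Ω p lam α u φ = 0 := by nlinarith
  rw [h4, mul_zero, mul_zero] at hPo
  have h5 := eqOn_zero_of_integral ho hb (hφc.pow 2) (fun x => sq_nonneg _) hPo
  have h6 : ∀ x, φ x = 0 := fun x => by
    by_cases hx : x ∈ Ω
    · exact pow_eq_zero_iff (two_ne_zero) |>.1 (h5 x hx)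
    · rw [h1]; exact hG.zero_off _ x hx
  refine ⟨by ext x; exact h6 x, ?_⟩
  have : a = 0 := by rw [ha]; simp [h6]
  rw [hβ, this]; simp
end

/-! ### The local solution branch -/

section
variable {N : ℕ} {Ω : Set (Euc N)} {G : (Euc N →ᵇ ℝ) →L[ℝ] (Euc N →ᵇ ℝ)}

/-- The derivative of `(λ, u, α) ↦ α + λ u`. -/
def argD (q : ℝ × (Euc N →ᵇ ℝ) × ℝ) : ℝ × (Euc N →ᵇ ℝ) × ℝ →L[ℝ] (Euc N →ᵇ ℝ) :=
  ((ContinuousLinearMap.snd ℝ _ _).comp (ContinuousLinearMap.snd ℝ ℝ _)).smulRight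
      (BoundedContinuousFunction.const (Euc N) (1 : ℝ)) +
    (q.1 • ((ContinuousLinearMap.fst ℝ _ _).comp (ContinuousLinearMap.snd ℝ ℝ _)) +
      (ContinuousLinearMap.fst ℝ ℝ _).smulRight q.2.1)

lemma arg_hasStrictFDerivAt (q : ℝ × (Euc N →ᵇ ℝ) × ℝ) :
    HasStrictFDerivAt (fun q : ℝ × (Euc N →ᵇ ℝ) × ℝ => arg q.1 q.2.2 q.2.1) (argD q) q := by
  have e : (fun q : ℝ × (Euc N →ᵇ ℝ) × ℝ => arg q.1 q.2.2 q.2.1) = fun q =>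
      ((ContinuousLinearMap.snd ℝ _ _).comp (ContinuousLinearMap.snd ℝ ℝ _)).smulRight
      (BoundedContinuousFunction.const (Euc N) (1 : ℝ)) q + q.1 • q.2.1 := by
    funext q; ext x; simp
  rw [e]
  refine (ContinuousLinearMap.hasStrictFDerivAt _).add ?_
  exact (hasStrictFDerivAt_fst (p := q)).smul
    (((ContinuousLinearMap.fst ℝ (Euc N →ᵇ ℝ) ℝ).comp
      (ContinuousLinearMap.snd ℝ ℝ _)).hasStrictFDerivAt (x := q))

lemma argD_inr (q : ℝ × (Euc N →ᵇ ℝ) × ℝ) (v : (Euc N →ᵇ ℝ) × ℝ) :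
    argD q (0, v) = arg q.1 v.2 v.1 := by
  ext x; simp [argD]

/-- The local solution branch through a strictly stable solution. -/
lemma FixP.branch [NeZero N] (hG : IsGreen Ω G) (ho : IsOpen Ω) (hb : Bornology.IsBounded Ω)
    (hvol : volume Ω = 1) {p lam : ℝ} (hp1 : 1 < p) {hp : 1 ≤ p} {z : (Euc N →ᵇ ℝ) × ℝ}
    (hz : FixP Ω G p lam hp z) (hσ : 0 < sigma1 Ω p lam z.2 z.1) :
    ∃ b : ℝ → (Euc N →ᵇ ℝ) × ℝ, Tendsto b (𝓝 lam) (𝓝 z) ∧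
      (∀ᶠ l in 𝓝 lam, FixP Ω G p l hp (b l)) ∧
      ∀ᶠ v : ℝ × (Euc N →ᵇ ℝ) × ℝ in 𝓝 (lam, z), FixP Ω G p v.1 hp v.2 → b v.1 = v.2 := by
  set g := gp p
  have hgc : Continuous g := gp_continuous (by linarith)
  have hgc' : Continuous fun t => p * gp (p - 1) t := (gp_continuous (by linarith)).const_mul p
  set nl : ℝ × (Euc N →ᵇ ℝ) × ℝ → (Euc N →ᵇ ℝ) := fun q => nem g hgc (arg q.1 q.2.2 q.2.1)
  set F : ℝ × (Euc N →ᵇ ℝ) × ℝ → (Euc N →ᵇ ℝ) × ℝ := fun q =>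
    (q.2.1 - G (nl q), intΩ Ω hvol (nl q) - 1) with hF
  have hFix : ∀ q : ℝ × (Euc N →ᵇ ℝ) × ℝ, F q = 0 ↔ FixP Ω G p q.1 hp q.2 := fun q => by
    rw [hF, Prod.mk_eq_zero, sub_eq_zero, sub_eq_zero]; rfl
  set q0 : ℝ × (Euc N →ᵇ ℝ) × ℝ := (lam, z) with hq0
  set M := ContinuousLinearMap.mul ℝ (Euc N →ᵇ ℝ) (p • wt p hp lam z.2 z.1) with hM
  have hnl : HasStrictFDerivAt nl (M ∘L argD q0) q0 :=
    (nem_hasStrictFDerivAt hgc hgc' (gp_hasDerivAt hp1) (arg lam z.2 z.1)).comp q0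
      (arg_hasStrictFDerivAt q0)
  have hF' : HasStrictFDerivAt F ((((ContinuousLinearMap.fst ℝ (Euc N →ᵇ ℝ) ℝ).comp
      (ContinuousLinearMap.snd ℝ ℝ _)) - G ∘L (M ∘L argD q0)).prod
      (intΩ Ω hvol ∘L (M ∘L argD q0))) q0 := by
    refine HasStrictFDerivAt.prodMk (HasStrictFDerivAt.sub
      (((ContinuousLinearMap.fst ℝ (Euc N →ᵇ ℝ) ℝ).comp
        (ContinuousLinearMap.snd ℝ ℝ _)).hasStrictFDerivAt (x := q0)) (G.hasStrictFDerivAt.comp q0 hnl)) ?_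
    exact ((intΩ Ω hvol).hasStrictFDerivAt.comp q0 hnl).sub_const 1
  set B : (Euc N →ᵇ ℝ) × ℝ →L[ℝ] (Euc N →ᵇ ℝ) :=
    M ∘L argD q0 ∘L ContinuousLinearMap.inr ℝ ℝ ((Euc N →ᵇ ℝ) × ℝ) with hB
  -- Up to the variable `λ`, the derivative of `F` is `1 - K` with `K` compact.
  set K : (Euc N →ᵇ ℝ) × ℝ →L[ℝ] (Euc N →ᵇ ℝ) × ℝ :=
    (ContinuousLinearMap.inl ℝ _ _) ∘L (G ∘L B) + (ContinuousLinearMap.inr ℝ _ _) ∘L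
      (ContinuousLinearMap.snd ℝ _ _ - intΩ Ω hvol ∘L B) with hK
  have hBv : ∀ v, B v = (p • wt p hp lam z.2 z.1) * arg lam v.2 v.1 := fun v => by
    change M (argD q0 (0, v)) = _
    rw [argD_inr]; rfl
  have hKc : IsCompactOperator K := by
    have c1 : IsCompactOperator (ContinuousLinearMap.inl ℝ (Euc N →ᵇ ℝ) ℝ ∘ (G ∘ B)) :=
      ((hG.compact hb).comp_clm B).clm_comp _
    have c2 : IsCompactOperator (ContinuousLinearMap.inr ℝ (Euc N →ᵇ ℝ) ℝ ∘
        (ContinuousLinearMap.snd ℝ (Euc N →ᵇ ℝ) ℝ - intΩ Ω hvol ∘L B :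
          (Euc N →ᵇ ℝ) × ℝ →L[ℝ] ℝ)) :=
      (isCompactOperator_of_locallyCompactSpace_dom _).clm_comp _
    exact c1.add c2
  have hunit : IsUnit (1 - K) := by
    rcases hKc.hasEigenvalue_or_mem_resolventSet (μ := 1) one_ne_zero with h | h
    · exfalso
      obtain ⟨v, hv⟩ := h.exists_hasEigenvector
      have h1 := hv.apply_eq_smul
      rw [one_smul] at h1
      have h2 : (G (B v), v.2 - intΩ Ω hvol (B v)) = v := by
        refine Eq.trans ?_ h1
        change _ = (G (B v) + 0, 0 + (v.2 - intΩ Ω hvol (B v)))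
        rw [add_zero, zero_add]
      have h3 : v.1 = G (B v) := (congrArg Prod.fst h2).symm
      have h4 : intΩ Ω hvol (B v) = 0 := by
        have := congrArg Prod.snd h2
        simp only at this
        linarith
      rw [hBv] at h3 h4
      obtain ⟨h5, h6⟩ := lin_injective hG ho hb hp (hz.wt_pos ho hb) hσ h3 h4
      exact hv.2 (Prod.ext h5 h6)
    · simpa [resolventSet] using h
  have hinv : ((((ContinuousLinearMap.fst ℝ (Euc N →ᵇ ℝ) ℝ).comp
      (ContinuousLinearMap.snd ℝ ℝ _)) - G ∘L (M ∘L argD q0)).prod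
      (intΩ Ω hvol ∘L (M ∘L argD q0)) ∘L .inr ℝ ℝ ((Euc N →ᵇ ℝ) × ℝ)).IsInvertible := by
    obtain ⟨w, hw⟩ := hunit
    refine ⟨ContinuousLinearEquiv.ofUnit w, ?_⟩
    refine ContinuousLinearMap.ext fun v => ?_
    change (w : (Euc N →ᵇ ℝ) × ℝ →L[ℝ] (Euc N →ᵇ ℝ) × ℝ) v =
      (v.1 - G (B v), intΩ Ω hvol (B v))
    rw [hw]
    change v - (G (B v) + 0, 0 + (v.2 - intΩ Ω hvol (B v))) = _
    ext1 <;> simp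
  have hF0 : F q0 = 0 := (hFix q0).2 hz
  refine ⟨hF'.implicitFunctionOfProdDomain hinv, hF'.tendsto_implicitFunctionOfProdDomain hinv,
    ?_, ?_⟩
  · filter_upwards [hF'.eventually_apply_implicitFunctionOfProdDomain hinv] with l hl
    rw [hF0] at hl
    exact (hFix (l, _)).1 hl
  · filter_upwards [hF'.eventually_apply_eq_iff_implicitFunctionOfProdDomain hinv] with v hv hv2
    rw [hF0] at hv
    exact hv.1 ((hFix v).2 hv2)
end

/-! ### Continuation in the parameter -/

lemma exists_seq_frequently {ι : Type*} {l : Filter ι} [l.IsCountablyGenerated] {P : ι → Prop}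
    (h : ∃ᶠ n in l, P n) : ∃ x : ℕ → ι, Tendsto x atTop l ∧ ∀ n, P (x n) := by
  exact exists_seq_forall_of_frequently h

/-- Continuation principle: if the solution set is compact over `[0, Λ]` and every solution lies on
a locally unique branch, uniqueness at the parameter `0` propagates to `Λ`. -/
lemma continuation {Y : Type*} [MetricSpace Y] {S : ℝ → Y → Prop} {Lam : ℝ} (hLam : 0 ≤ Lam)
    (hc : IsCompact {q : ℝ × Y | q.1 ∈ Icc 0 Lam ∧ S q.1 q.2})
    (hbr : ∀ l ∈ Icc 0 Lam, ∀ z, S l z → ∃ b : ℝ → Y, Tendsto b (𝓝 l) (𝓝 z) ∧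
      (∀ᶠ l' in 𝓝 l, S l' (b l')) ∧ ∀ᶠ v : ℝ × Y in 𝓝 (l, z), S v.1 v.2 → b v.1 = v.2)
    (h0 : ∃! z, S 0 z) : ∃! z, S Lam z := by
  set s : Set ℝ := {l | ∃! z, S l z}
  have hcl : IsClosed (s ∩ Icc 0 Lam) := by
    refine IsSeqClosed.isClosed fun l l0 hl hlim => ?_
    have hl0 : l0 ∈ Icc 0 Lam := isClosed_Icc.mem_of_tendsto hlim (Eventually.of_forall fun n => (hl n).2)
    choose z hz hzu using fun n => (hl n).1
    obtain ⟨⟨l1, z1⟩, hq, φ, hφ, hconv⟩ := hc.tendsto_subseq (x := fun n => (l n, z n))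
      fun n => ⟨(hl n).2, hz n⟩
    have e1 : l1 = l0 := tendsto_nhds_unique ((continuous_fst.tendsto _).comp hconv)
      (hlim.comp hφ.tendsto_atTop)
    subst e1
    refine ⟨⟨z1, hq.2, fun z' hz' => ?_⟩, hl0⟩
    obtain ⟨b, hb1, hb2, -⟩ := hbr l1 hl0 z1 hq.2
    obtain ⟨b', hb1', hb2', -⟩ := hbr l1 hl0 z' hz'
    refine tendsto_nhds_unique_of_eventuallyEq (hb1'.comp hlim) (hb1.comp hlim) ?_
    filter_upwards [hlim.eventually hb2, hlim.eventually hb2'] with n h1 h2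
    exact (hzu n _ h2).trans (hzu n _ h1).symm
  refine hcl.Icc_subset_of_forall_mem_nhdsWithin h0 ?_ (right_mem_Icc.2 hLam)
  rintro x ⟨⟨z, hz, hzu⟩, hx⟩
  obtain ⟨b, hb1, hb2, hb3⟩ := hbr x ⟨hx.1, hx.2.le⟩ z hz
  by_contra hcon
  have hfr : ∃ᶠ l in 𝓝[>] x, (S l (b l) ∧ l ∈ Ioc x Lam) ∧ ¬ ∃! z, S l z := by
    refine Frequently.and_eventually (p := fun l => ¬ ∃! z, S l z) ?_ ?_ |>.mono fun l h => h.symm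
    · exact fun h => hcon (by filter_upwards [h] with l hl; exact not_not.1 hl)
    · exact (hb2.filter_mono nhdsWithin_le_nhds).and (Ioc_mem_nhdsGT hx.2)
  obtain ⟨l, hl, hP⟩ := exists_seq_frequently hfr
  have hl' : Tendsto l atTop (𝓝 x) := hl.mono_right nhdsWithin_le_nhds
  have hne : ∀ n, ∃ w, S (l n) w ∧ w ≠ b (l n) := fun n => by
    by_contra! hcc
    exact (hP n).2 ⟨b (l n), (hP n).1.1, hcc⟩
  choose w hw hwb using hne
  obtain ⟨⟨l1, z1⟩, hq, φ, hφ, hconv⟩ := hc.tendsto_subseq (x := fun n => (l n, w n))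
    fun n => ⟨⟨hx.1.trans (hP n).1.2.1.le, (hP n).1.2.2⟩, hw n⟩
  have e1 : l1 = x := tendsto_nhds_unique ((continuous_fst.tendsto _).comp hconv)
    (hl'.comp hφ.tendsto_atTop)
  subst e1
  have e2 : z1 = z := hzu _ hq.2
  subst e2
  obtain ⟨n, hn⟩ := (hconv.eventually hb3).exists
  exact hwb (φ n) (hn (hw _)).symm

section
variable {N : ℕ} {Ω : Set (Euc N)} {G : (Euc N →ᵇ ℝ) →L[ℝ] (Euc N →ᵇ ℝ)}

/-- For `λ = 0` the density is constant, hence equal to `1`. -/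
lemma fixP_zero (hvol : volume Ω = 1) {p : ℝ} (hp : 1 ≤ p) : ∃! z, FixP Ω G p 0 hp z := by
  have e : ∀ (α : ℝ) (u : Euc N →ᵇ ℝ), nem (gp p) (gp_continuous (by linarith)) (arg 0 α u) =
      BoundedContinuousFunction.const (Euc N) (gp p α) := fun α u => by
    ext x; simp
  refine ⟨(G (BoundedContinuousFunction.const _ 1), 1), ⟨?_, ?_⟩, ?_⟩
  · simp only [e, gp_one]
  · simp only [e, gp_one]
    simp [measureReal_one hvol]
  · rintro ⟨u, α⟩ ⟨h1, h2⟩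
    simp only [e] at h1 h2
    simp only [BoundedContinuousFunction.const_apply, setIntegral_const, measureReal_one hvol,
      one_smul] at h2
    have := gp_one_of_eq hp h2
    subst this
    rw [h1, gp_one]

/-- Unique solvability below the stability threshold for `p > 1`. -/
lemma exists_unique_gt_one [NeZero N] (hG : IsGreen Ω G) (ho : IsOpen Ω)
    (hb : Bornology.IsBounded Ω) (hvol : volume Ω = 1) {p θ : ℝ} (hp : 1 ≤ p) (hp1 : 1 < p)
    (hθ0 : 0 ≤ θ) (hθ1 : θ ≤ 1) (hθ : N * (1 - θ) < 2) (hpθ : p * θ < 1) {Lam : ℝ} (hLam : 0 ≤ Lam)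
    (hσ : ∀ lam α ψ, 0 ≤ lam → lam ≤ Lam → SolP Ω p lam α ψ → 0 < sigma1 Ω p lam α ψ) :
    ∃! z, FixP Ω G p Lam hp z :=
  continuation (S := fun l z => FixP Ω G p l hp z) hLam
    (fixP_compact hG ho hb hvol hp hθ0 hθ1 hθ hpθ hLam)
    (fun l hl _ hz => FixP.branch hG ho hb hvol hp1 hz (hσ l _ _ hl.1 hl.2 (hz.solP hG ho hb)))
    (fixP_zero hvol hp)
end

/-! ### The case `p = 1` -/

section
variable {N : ℕ} {Ω : Set (Euc N)} {G : (Euc N →ᵇ ℝ) →L[ℝ] (Euc N →ᵇ ℝ)}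

/-- The density `[α + λ u]₊` for `p = 1`. -/
def dens (lam α : ℝ) (u : Euc N →ᵇ ℝ) : Euc N →ᵇ ℝ :=
  nem (gp 1) (gp_continuous (by norm_num)) (arg lam α u)

lemma dens_apply (lam α : ℝ) (u : Euc N →ᵇ ℝ) (x : Euc N) :
    dens lam α u x = max (α + lam * u x) 0 := by
  simp [dens, gp]

lemma fixP_one {lam : ℝ} {hp : (1 : ℝ) ≤ 1} {z : (Euc N →ᵇ ℝ) × ℝ} :
    FixP Ω G 1 lam hp z ↔ z.1 = G (dens lam z.2 z.1) ∧ ∫ x in Ω, dens lam z.2 z.1 x = 1 := Iff.rfl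

/-- For `p = 1` the weight is identically `1`, and stability is a spectral gap `μ > λ`. -/
lemma stab_one (hG : IsGreen Ω G) (ho : IsOpen Ω) (hb : Bornology.IsBounded Ω)
    (hvol : volume Ω = 1) {lam α : ℝ} {u : Euc N →ᵇ ℝ} (hσ : 0 < sigma1 Ω 1 lam α u) :
    ∃ μ, lam < μ ∧ ∀ h, μ * ((∫ x in Ω, G h x ^ 2) - (∫ x in Ω, G h x) ^ 2) ≤
      ∫ x in Ω, h x * G h x := by
  have hw : ∀ x, wt 1 le_rfl lam α u x = 1 := fun x => by simp [wt, gp]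
  have hm : ∫ x in Ω, wt 1 le_rfl lam α u x = 1 := by simp [hw, measureReal_one hvol]
  refine ⟨sigma1 Ω 1 lam α u + lam * 1, by linarith, fun h => ?_⟩
  have h1 := hG.stab ho hb le_rfl lam α u (by rw [hm]; norm_num) h
  rw [wdenom_eq hb le_rfl lam α u (by rw [hm]; norm_num) (G h).continuous, hm] at h1
  simpa [hw] using h1

lemma pos_part_firm (a b : ℝ) : (max a 0 - max b 0) ^ 2 ≤ (max a 0 - max b 0) * (a - b) := by
  rcases le_total a 0 with ha | ha <;> rcases le_total b 0 with hb | hb <;>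
    simp only [max_eq_left, max_eq_right, ha, hb] <;> nlinarith

/-- If the spectral gap `μ` for functions modulo constants exceeds `λ`, the Picard map is an `L²` contraction. -/
lemma picard_contraction (hb : Bornology.IsBounded Ω)
    (hvol : volume Ω = 1) {μ lam : ℝ} (hl0 : 0 ≤ lam) (hl : lam < μ)
    (hμ : ∀ h, μ * ((∫ x in Ω, G h x ^ 2) - (∫ x in Ω, G h x) ^ 2) ≤ ∫ x in Ω, h x * G h x)
    {f₁ f₂ : Euc N →ᵇ ℝ} (hf₁ : ∫ x in Ω, f₁ x = 1) (hf₂ : ∫ x in Ω, f₂ x = 1) {α₁ α₂ : ℝ}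
    (hρ₁ : ∫ x in Ω, dens lam α₁ (G f₁) x = 1) (hρ₂ : ∫ x in Ω, dens lam α₂ (G f₂) x = 1) :
    ∫ x in Ω, (dens lam α₁ (G f₁) - dens lam α₂ (G f₂)) x ^ 2 ≤
      (lam / μ) ^ 2 * ∫ x in Ω, (f₁ - f₂) x ^ 2 := by
  have hμ0 : 0 < μ := hl0.trans_lt hl
  set d := dens lam α₁ (G f₁) - dens lam α₂ (G f₂) with hd
  set e := f₁ - f₂ with he
  have hw := hμ e
  set w := G e with hwd
  have hdc := d.continuous
  have hec := e.continuous
  have hwc := w.continuous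
  have hd0 : ∫ x in Ω, d x = 0 := by
    have := (intΩ Ω hvol).map_sub (dens lam α₁ (G f₁)) (dens lam α₂ (G f₂))
    simp only [intΩ_apply] at this
    rw [hd, this, hρ₁, hρ₂, sub_self]
  have he0 : ∫ x in Ω, e x = 0 := by
    have := (intΩ Ω hvol).map_sub f₁ f₂
    simp only [intΩ_apply] at this
    rw [he, this, hf₁, hf₂, sub_self]
  set a := ∫ x in Ω, w x with ha
  have I : ∀ {F : Euc N → ℝ}, Continuous F → IntegrableOn F Ω := fun hF => integrableOn_cont hb hF
  have hdv : ∫ x in Ω, d x * (w x - a) = ∫ x in Ω, d x * w x := by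
    simp_rw [mul_sub]
    rw [integral_sub (I (by fun_prop)) (I (by fun_prop)), integral_mul_const, hd0]; ring
  have hev : ∫ x in Ω, e x * (w x - a) = ∫ x in Ω, e x * w x := by
    simp_rw [mul_sub]
    rw [integral_sub (I (by fun_prop)) (I (by fun_prop)), integral_mul_const, he0]; ring
  have hV : ∫ x in Ω, (w x - a) ^ 2 = (∫ x in Ω, w x ^ 2) - a ^ 2 := by
    have : ∀ x, (w x - a) ^ 2 = w x ^ 2 - 2 * a * w x + a ^ 2 := fun x => by ring
    simp_rw [this]
    rw [integral_add (I (by fun_prop)) (I (by fun_prop)),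
      integral_sub (I (by fun_prop)) (I (by fun_prop)), integral_const_mul, ← ha]
    simp [measureReal_one hvol]; ring
  have hV0 : 0 ≤ ∫ x in Ω, (w x - a) ^ 2 := integral_nonneg fun x => sq_nonneg _
  have hE0 : 0 ≤ ∫ x in Ω, e x ^ 2 := integral_nonneg fun x => sq_nonneg _
  have hD0 : 0 ≤ ∫ x in Ω, d x ^ 2 := integral_nonneg fun x => sq_nonneg _
  -- The positive part is firmly nonexpansive, and `d` has mean zero, so the constants drop out.
  have hD : ∫ x in Ω, d x ^ 2 ≤ lam * ∫ x in Ω, d x * w x := by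
    have h1 : ∫ x in Ω, d x ^ 2 ≤ ∫ x in Ω, (lam * (d x * w x) + (α₁ - α₂) * d x) := by
      refine setIntegral_mono (I (by fun_prop)) (I (by fun_prop)) fun x => ?_
      have := pos_part_firm (α₁ + lam * G f₁ x) (α₂ + lam * G f₂ x)
      have e1 : d x = max (α₁ + lam * G f₁ x) 0 - max (α₂ + lam * G f₂ x) 0 := by
        rw [hd, BoundedContinuousFunction.sub_apply, dens_apply, dens_apply]
      have e2 : w x = G f₁ x - G f₂ x := by
        rw [hwd, he, map_sub, BoundedContinuousFunction.sub_apply]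
      simp only [← e1] at this
      rw [e2]
      linarith
    rwa [integral_add (I (by fun_prop)) (I (by fun_prop)), integral_const_mul, integral_const_mul,
      hd0, mul_zero, add_zero] at h1
  have c1 := integral_cs (μ := volume.restrict Ω) (f := d) (g := fun x => w x - a)
    (I (by fun_prop)) (I (by fun_prop)) (I (by fun_prop))
  have c2 := integral_cs (μ := volume.restrict Ω) (f := e) (g := fun x => w x - a)
    (I (by fun_prop)) (I (by fun_prop)) (I (by fun_prop))
  rw [hdv] at c1
  rw [hev] at c2
  rw [← hV] at hw
  set V := ∫ x in Ω, (w x - a) ^ 2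
  set D := ∫ x in Ω, d x ^ 2
  set E := ∫ x in Ω, e x ^ 2
  have hVE : μ ^ 2 * V ≤ E := by
    rcases hV0.eq_or_lt with h | h
    · rw [← h]; simpa using hE0
    · have := pow_le_pow_left₀ (by positivity) hw 2
      exact le_of_mul_le_mul_right (by nlinarith) h
  have hDV : D ≤ lam ^ 2 * V := by
    rcases hD0.eq_or_lt with h | h
    · rw [← h]; positivity
    · have := pow_le_pow_left₀ hD0 hD 2
      have h2 := mul_le_mul_of_nonneg_left c1 (sq_nonneg lam)
      exact le_of_mul_le_mul_right (by nlinarith) h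
  calc D ≤ lam ^ 2 * V := hDV
    _ = (lam / μ) ^ 2 * (μ ^ 2 * V) := by field_simp
    _ ≤ _ := by gcongr

/-- `G` is bounded in `L²(Ω)`. -/
lemma green_l2 [NeZero N] (hG : IsGreen Ω G) (ho : IsOpen Ω) (hb : Bornology.IsBounded Ω) :
    ∃ C, 0 ≤ C ∧ ∀ e, ∫ x in Ω, G e x ^ 2 ≤ C * ∫ x in Ω, e x ^ 2 := by
  obtain ⟨P, hP, hPo⟩ := hG.poincare ho hb
  refine ⟨P ^ 2, by positivity, fun e => ?_⟩
  have h1 := hPo e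
  have hec := e.continuous
  have hwc := (G e).continuous
  have I : ∀ {F : Euc N → ℝ}, Continuous F → IntegrableOn F Ω := fun hF => integrableOn_cont hb hF
  have c := integral_cs (μ := volume.restrict Ω) (f := e) (g := G e)
    (I (by fun_prop)) (I (by fun_prop)) (I (by fun_prop))
  have hW0 : 0 ≤ ∫ x in Ω, G e x ^ 2 := integral_nonneg fun x => sq_nonneg _
  have hE0 : 0 ≤ ∫ x in Ω, e x ^ 2 := integral_nonneg fun x => sq_nonneg _
  set W := ∫ x in Ω, G e x ^ 2
  rcases hW0.eq_or_lt with h | h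
  · rw [← h]; positivity
  · have := pow_le_pow_left₀ hW0 h1 2
    have h2 := mul_le_mul_of_nonneg_left c (sq_nonneg P)
    exact le_of_mul_le_mul_right (by nlinarith) h

/-- Uniqueness from the contraction property of the Picard map. -/
lemma fixP_unique_one [NeZero N] (hG : IsGreen Ω G) (ho : IsOpen Ω) (hb : Bornology.IsBounded Ω)
    (hvol : volume Ω = 1) {μ lam : ℝ} (hl0 : 0 ≤ lam) (hl : lam < μ)
    (hμ : ∀ h, μ * ((∫ x in Ω, G h x ^ 2) - (∫ x in Ω, G h x) ^ 2) ≤ ∫ x in Ω, h x * G h x)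
    {hp : (1 : ℝ) ≤ 1} {z₁ z₂ : (Euc N →ᵇ ℝ) × ℝ} (h₁ : FixP Ω G 1 lam hp z₁)
    (h₂ : FixP Ω G 1 lam hp z₂) : z₁ = z₂ := by
  obtain ⟨u₁, α₁⟩ := z₁
  obtain ⟨u₂, α₂⟩ := z₂
  rw [fixP_one] at h₁ h₂
  obtain ⟨e1, i1⟩ := h₁
  obtain ⟨e2, i2⟩ := h₂
  simp only at e1 e2 i1 i2
  have h := picard_contraction hb hvol hl0 hl hμ i1 i2 (by rwa [← e1]) (by rwa [← e2])
  rw [← e1, ← e2] at h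
  have hμ0 : 0 < μ := hl0.trans_lt hl
  have hk : (lam / μ) ^ 2 < 1 := pow_lt_one₀ (by positivity) ((div_lt_one hμ0).2 hl) two_ne_zero
  have hD : ∫ x in Ω, (dens lam α₁ u₁ - dens lam α₂ u₂) x ^ 2 ≤ 0 := by
    by_contra! hc
    nlinarith
  obtain ⟨C, hC0, hC⟩ := green_l2 hG ho hb
  have hU := hC (dens lam α₁ u₁ - dens lam α₂ u₂)
  rw [map_sub, ← e1, ← e2] at hU
  have hu0 := eqOn_zero_of_integral ho hb ((u₁ - u₂).continuous.pow 2) (fun x => sq_nonneg _)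
    (hU.trans (mul_nonpos_of_nonneg_of_nonpos hC0 hD))
  have hu : u₁ = u₂ := by
    ext x
    by_cases hx : x ∈ Ω
    · have := pow_eq_zero_iff two_ne_zero |>.1 (hu0 x hx)
      exact sub_eq_zero.1 this
    · rw [e1, e2, hG.zero_off _ x hx, hG.zero_off _ x hx]
  subst hu
  have hρ := eqOn_zero_of_integral ho hb ((dens lam α₁ u₁ - dens lam α₂ u₁).continuous.pow 2)
    (fun x => sq_nonneg _) hD
  by_cases hα : α₁ = α₂
  · rw [hα]
  exfalso
  rw [setIntegral_congr_fun (g := fun _ => (0 : ℝ)) ho.measurableSet fun x hx => ?_] at i1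
  · simp at i1
  have h3 := sub_eq_zero.1 (pow_eq_zero_iff two_ne_zero |>.1 (hρ x hx))
  rw [dens_apply, dens_apply] at h3
  rw [dens_apply]
  rcases max_choice (α₁ + lam * u₁ x) 0 with h4 | h4
  · rcases max_choice (α₂ + lam * u₁ x) 0 with h5 | h5
    · rw [h4, h5] at h3
      exact absurd (by linarith) hα
    · rw [h3, h5]
  · exact h4

/-- The mass constraint can be met by a choice of `α`, by the intermediate value theorem. -/
lemma exists_mass (hvol : volume Ω = 1) {lam : ℝ} (hl0 : 0 ≤ lam) {u : Euc N →ᵇ ℝ}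
    (hu : ∀ x, 0 ≤ u x) : ∃ α, ∫ x in Ω, dens lam α u x = 1 := by
  have hc : Continuous fun α => ∫ x in Ω, dens lam α u x := by
    have hn : Continuous fun α : ℝ => dens lam α u :=
      (nem_continuous _).comp (continuous_arg.comp (by fun_prop : Continuous fun α : ℝ => (lam, u, α)))
    exact (intΩ Ω hvol).continuous.comp hn
  have h1 : 1 ≤ ∫ x in Ω, dens lam 1 u x := const_le_setIntegral hvol fun x => by
    rw [dens_apply]; exact le_max_of_le_left (by linarith [mul_nonneg hl0 (hu x)])
  have h2 : ∫ x in Ω, dens lam (1 - lam * ‖u‖) u x ≤ 1 := setIntegral_le_const hvol fun x => by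
    rw [dens_apply]
    have := mul_le_mul_of_nonneg_left ((le_abs_self _).trans (u.norm_coe_le_norm x)) hl0
    exact max_le (by linarith) zero_le_one
  exact mem_range_of_exists_le_of_exists_ge hc ⟨_, h2⟩ ⟨_, h1⟩

/-- The set of densities preserved by the Picard iteration. -/
def PicardInv (Ω : Set (Euc N)) (K : ℝ) (f : Euc N →ᵇ ℝ) : Prop :=
  (∃ L, 0 ≤ L ∧ ∀ x x', |f x - f x'| ≤ L * ‖x - x'‖) ∧ (∀ x, 0 ≤ f x) ∧ (∀ x, f x ≤ K) ∧
    (∀ x ∉ Ω, f x ≤ 1) ∧ ∫ x in Ω, f x = 1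

/-- The Picard iterates stay in a bounded set, so that their images under `G` subconverge uniformly;
consecutive iterates approach each other in `L²` by contraction, and the limit is a fixed point. -/
lemma exists_one [NeZero N] (hG : IsGreen Ω G) (ho : IsOpen Ω) (hb : Bornology.IsBounded Ω)
    (hvol : volume Ω = 1) {θ : ℝ} (hθ0 : 0 ≤ θ) (hθ1 : θ < 1) (hθ : N * (1 - θ) < 2)
    {μ lam : ℝ} (hl0 : 0 ≤ lam) (hl : lam < μ)
    (hμ : ∀ h, μ * ((∫ x in Ω, G h x ^ 2) - (∫ x in Ω, G h x) ^ 2) ≤ ∫ x in Ω, h x * G h x)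
    (hp : (1 : ℝ) ≤ 1) : ∃ z, FixP Ω G 1 lam hp z := by
  obtain ⟨C, hC0, hC⟩ := hG.bound ho hb hθ0 hθ1.le hθ
  obtain ⟨K, hK1, hKK⟩ := exists_sublin hθ1 1 (lam * C)
  have hK := hKK K le_rfl
  set M := C * K ^ θ with hM
  have hM0 : 0 ≤ M := by positivity
  have step : ∀ f, PicardInv Ω K f → ∃ α, α ∈ Icc (1 - lam * M) 1 ∧ PicardInv Ω K (dens lam α (G f)) := by
    rintro f ⟨⟨L, hL0, hL⟩, h0, hfK, hf1, hi⟩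
    have hu0 : ∀ x, 0 ≤ G f x := hG.nonneg ho hb fun x _ => h0 x
    have huM : ∀ x, G f x ≤ M := hC f K L hK1 hL0 hL h0 hfK hf1 hi.le
    obtain ⟨α, hα⟩ := exists_mass hvol hl0 hu0
    have hα1 : α ≤ 1 := mass_alpha_le hvol le_rfl hl0 hu0 hα
    refine ⟨α, ⟨mass_le_alpha hvol le_rfl hl0 huM hα, hα1⟩, hG.nem_lip le_rfl lam α f,
      fun x => gp_nonneg _ _, fun x => ?_, fun x hx => ?_, hα⟩
    · rw [dens_apply]
      have := mul_le_mul_of_nonneg_left (huM x) hl0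
      exact max_le (by linarith) (by linarith)
    · rw [dens_apply, hG.zero_off _ x hx, mul_zero, add_zero]
      exact max_le hα1 zero_le_one
  choose! A hA hAI using step
  obtain ⟨F, hF0, hFs⟩ : ∃ F : ℕ → (Euc N →ᵇ ℝ), F 0 = BoundedContinuousFunction.const _ 1 ∧
      ∀ n, F (n + 1) = dens lam (A (F n)) (G (F n)) :=
    ⟨fun n => (fun f => dens lam (A f) (G f))^[n] (BoundedContinuousFunction.const _ 1), rfl,
      fun n => Function.iterate_succ_apply' _ _ _⟩
  have hFI : ∀ n, PicardInv Ω K (F n) := by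
    intro n
    induction n with
    | zero =>
      rw [hF0]
      exact ⟨⟨0, le_rfl, fun x x' => by simp⟩, fun x => by simp, fun x => by simpa,
        fun x _ => by simp, by simp [measureReal_one hvol]⟩
    | succ n ih => rw [hFs]; exact hAI _ ih
  have hμ0 : 0 < μ := hl0.trans_lt hl
  have hk : (lam / μ) ^ 2 < 1 := pow_lt_one₀ (by positivity) ((div_lt_one hμ0).2 hl) two_ne_zero
  set D : ℕ → ℝ := fun n => ∫ x in Ω, (F (n + 1) - F n) x ^ 2 with hD
  have hD0 : ∀ n, 0 ≤ D n := fun n => integral_nonneg fun x => sq_nonneg _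
  have hDs : ∀ n, D (n + 1) ≤ (lam / μ) ^ 2 * D n := fun n => by
    have := picard_contraction hb hvol hl0 hl hμ (hFI (n + 1)).2.2.2.2 (hFI n).2.2.2.2
      (hAI _ (hFI (n + 1))).2.2.2.2 (hAI _ (hFI n)).2.2.2.2
    rwa [← hFs, ← hFs] at this
  have hDn : ∀ n, D n ≤ ((lam / μ) ^ 2) ^ n * D 0 := fun n => by
    induction n with
    | zero => simp
    | succ n ih =>
      rw [pow_succ', mul_assoc]
      exact (hDs n).trans (mul_le_mul_of_nonneg_left ih (sq_nonneg _))
  have hDlim : Tendsto D atTop (𝓝 0) := by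
    refine squeeze_zero hD0 hDn ?_
    simpa using (tendsto_pow_atTop_nhds_zero_of_lt_one (sq_nonneg _) hk).mul_const (D 0)
  have hcpt : IsCompact (closure (G '' Metric.closedBall 0 K) ×ˢ Icc (1 - lam * M) 1) :=
    ((hG.compact hb).isCompact_closure_image_closedBall K).prod isCompact_Icc
  have hnorm : ∀ n, ‖F n‖ ≤ K := fun n =>
    (BoundedContinuousFunction.norm_le (by linarith)).2 fun x => by
      rw [Real.norm_eq_abs, abs_of_nonneg ((hFI n).2.1 x)]; exact (hFI n).2.2.1 x
  obtain ⟨⟨u, α⟩, -, φ, hφ, hconv⟩ := hcpt.tendsto_subseq (x := fun n => (G (F n), A (F n)))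
    fun n => ⟨subset_closure ⟨F n, by simpa using hnorm n, rfl⟩, hA _ (hFI n)⟩
  have hu : Tendsto (fun n => G (F (φ n))) atTop (𝓝 u) := (continuous_fst.tendsto _).comp hconv
  have hcd : Continuous fun q : (Euc N →ᵇ ℝ) × ℝ => dens lam q.2 q.1 :=
    (nem_continuous _).comp (continuous_arg.comp
      (by fun_prop : Continuous fun q : (Euc N →ᵇ ℝ) × ℝ => (lam, q.1, q.2)))
  have hρ : Tendsto (fun n => F (φ n + 1)) atTop (𝓝 (dens lam α u)) := by
    refine ((hcd.tendsto (u, α)).comp hconv).congr fun n => ?_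
    rw [hFs]; rfl
  have hmass : ∫ x in Ω, dens lam α u x = 1 := by
    have h1 := ((intΩ Ω hvol).continuous.tendsto _).comp hρ
    have h2 : (intΩ Ω hvol) ∘ (fun n => F (φ n + 1)) = fun _ => (1 : ℝ) := by
      ext n; simp only [Function.comp_apply, intΩ_apply]; exact (hFI _).2.2.2.2
    rw [h2, intΩ_apply] at h1
    exact tendsto_nhds_unique h1 tendsto_const_nhds |>.trans rfl
  obtain ⟨C', hC'0, hC'⟩ := green_l2 hG ho hb
  have hlim1 : Tendsto (fun n => ∫ x in Ω, G (F (φ n + 1) - F (φ n)) x ^ 2) atTop (𝓝 0) := by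
    refine squeeze_zero (fun n => integral_nonneg fun x => sq_nonneg _)
      (fun n => hC' (F (φ n + 1) - F (φ n))) ?_
    have h := (hDlim.comp hφ.tendsto_atTop).const_mul C'
    rwa [mul_zero] at h
  have hlim2 : Tendsto (fun n => ∫ x in Ω, G (F (φ n + 1) - F (φ n)) x ^ 2) atTop
      (𝓝 (∫ x in Ω, (G (dens lam α u) - u) x ^ 2)) := by
    have h1 : Tendsto (fun n => G (F (φ n + 1) - F (φ n))) atTop (𝓝 (G (dens lam α u) - u)) := by
      simp_rw [map_sub]
      exact ((G.continuous.tendsto _).comp hρ).sub hu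
    have h2 := ((intΩ Ω hvol).continuous.tendsto _).comp (h1.mul h1)
    refine (h2.congr fun n => ?_).trans_eq ?_
    · simp [intΩ_apply, sq]
    · simp [intΩ_apply, sq]
  have hz := eqOn_zero_of_integral ho hb ((G (dens lam α u) - u).continuous.pow 2)
    (fun x => sq_nonneg _) (tendsto_nhds_unique hlim2 hlim1).le
  refine ⟨(u, α), fixP_one.2 ⟨?_, hmass⟩⟩
  ext x
  by_cases hx : x ∈ Ω
  · exact (sub_eq_zero.1 (pow_eq_zero_iff two_ne_zero |>.1 (hz x hx))).symm
  · simp only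
    rw [hG.zero_off _ x hx]
    have h1 : Tendsto (fun n => G (F (φ n)) x) atTop (𝓝 (u x)) :=
      ((continuous_eval_const x).tendsto u).comp hu
    simp_rw [hG.zero_off _ x hx] at h1
    exact tendsto_nhds_unique h1 tendsto_const_nhds

/-- Unique solvability below the stability threshold for `p = 1`: the spectral gap at a solution for
`λ` gives solutions for all slightly larger parameters. -/
lemma exists_unique_one [NeZero N] (hG : IsGreen Ω G) (ho : IsOpen Ω)
    (hb : Bornology.IsBounded Ω) (hvol : volume Ω = 1) {θ : ℝ} (hp : (1 : ℝ) ≤ 1)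
    (hθ0 : 0 ≤ θ) (hθ1 : θ < 1) (hθ : N * (1 - θ) < 2) {Lam : ℝ} (hLam : 0 ≤ Lam)
    (hσ : ∀ lam α ψ, 0 ≤ lam → lam ≤ Lam → SolP Ω 1 lam α ψ → 0 < sigma1 Ω 1 lam α ψ) :
    ∃! z, FixP Ω G 1 Lam hp z := by
  set s : Set ℝ := {l | ∃ z, FixP Ω G 1 l hp z}
  have hgap : ∀ l ∈ s, 0 ≤ l → l ≤ Lam → ∃ μ, l < μ ∧
      ∀ h, μ * ((∫ x in Ω, G h x ^ 2) - (∫ x in Ω, G h x) ^ 2) ≤ ∫ x in Ω, h x * G h x := by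
    rintro l ⟨z, hz⟩ h0 h1
    exact stab_one hG ho hb hvol (hσ l _ _ h0 h1 (hz.solP hG ho hb))
  have hcl : IsClosed (s ∩ Icc 0 Lam) := by
    have h := ((fixP_compact hG ho hb hvol hp hθ0 hθ1.le hθ (by linarith) hLam).image
      continuous_fst).isClosed
    convert h using 1
    ext l
    constructor
    · rintro ⟨⟨z, hz⟩, hl⟩
      exact ⟨(l, z), ⟨hl, hz⟩, rfl⟩
    · rintro ⟨q, ⟨hl, hz⟩, rfl⟩
      exact ⟨⟨q.2, hz⟩, hl⟩
  have hmem : Lam ∈ s := by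
    refine hcl.Icc_subset_of_forall_mem_nhdsWithin (fixP_zero hvol hp).exists ?_
      (right_mem_Icc.2 hLam)
    rintro x ⟨hxs, hx⟩
    obtain ⟨μ, hxμ, hμ⟩ := hgap x hxs hx.1 hx.2.le
    filter_upwards [Ioo_mem_nhdsGT hxμ] with l hl
    exact exists_one hG ho hb hvol hθ0 hθ1 hθ (hx.1.trans hl.1.le) hl.2 hμ hp
  obtain ⟨μ, hμl, hμ⟩ := hgap Lam hmem hLam le_rfl
  obtain ⟨z, hz⟩ := hmem
  exact ⟨z, hz, fun z' hz' => fixP_unique_one hG ho hb hvol hLam hμl hμ hz' hz⟩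
end

/-! ### Existence and uniqueness -/

/-- For every `λ ∈ [0, λ*(Ω,p))` the problem `(P)_λ` admits exactly one
classical solution: a solution exists, and any two solutions coincide (the functions
agreeing on `closure Ω`). -/
theorem existence_and_uniqueness_below_lamStar
    {N : ℕ} (hN : 2 ≤ N) (Ω : Set (Euc N)) (hΩ : IsC3Domain Ω) (hvol : volume Ω = 1)
    (p : ℝ) (hp : 1 ≤ p) (hpN : 3 ≤ N → p < (N : ℝ) / ((N : ℝ) - 2))
    (lam : ℝ) (hlam0 : 0 ≤ lam) (hlam : lam < lamStar Ω p) :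
    (∃ α : ℝ, ∃ ψ : Euc N → ℝ, SolP Ω p lam α ψ) ∧
      ∀ (α₁ α₂ : ℝ) (ψ₁ ψ₂ : Euc N → ℝ), SolP Ω p lam α₁ ψ₁ → SolP Ω p lam α₂ ψ₂ →
        α₁ = α₂ ∧ ∀ x ∈ closure Ω, ψ₁ x = ψ₂ x := by
  have : NeZero N := ⟨by omega⟩
  have ho := hΩ.1
  have hb := hΩ.2.2.1
  -- The supremum defining `lamStar` is over a nonempty set, as `sSup ∅ = 0 ≤ lam`.
  have hσ : ∀ l α ψ, 0 ≤ l → l ≤ lam → SolP Ω p l α ψ → 0 < sigma1 Ω p l α ψ := by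
    rw [lamStar] at hlam
    have hne : {lb : ℝ | 0 < lb ∧ ∀ lam α ψ, 0 ≤ lam → lam < lb → SolP Ω p lam α ψ →
        0 < sigma1 Ω p lam α ψ}.Nonempty := by
      by_contra hc
      rw [Set.not_nonempty_iff_eq_empty.1 hc, Real.sSup_empty] at hlam
      linarith
    obtain ⟨lb, hlb, hlt⟩ := exists_lt_of_lt_csSup hne hlam
    exact fun l α ψ h0 h1 hs => hlb.2 l α ψ h0 (h1.trans_lt hlt) hs
  obtain ⟨G, hG⟩ := exists_green hΩ
  obtain ⟨θ, hθ0, hθ1, hθ, hpθ⟩ := exists_theta hN hp hpN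
  have huniq : ∃! z, FixP Ω G p lam hp z := by
    rcases hp.eq_or_lt with rfl | hp1
    · exact exists_unique_one hG ho hb hvol hp hθ0 (by linarith) hθ hlam0 hσ
    · exact exists_unique_gt_one hG ho hb hvol hp hp1 hθ0 hθ1 hθ hpθ hlam0 hσ
  obtain ⟨z, hz, hzu⟩ := huniq
  refine ⟨⟨z.2, z.1, FixP.solP hG ho hb hz⟩, fun α₁ α₂ ψ₁ ψ₂ h₁ h₂ => ?_⟩
  obtain ⟨u₁, hu₁, hψ₁⟩ := exists_fixP hG ho hb hp h₁
  obtain ⟨u₂, hu₂, hψ₂⟩ := exists_fixP hG ho hb hp h₂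
  obtain ⟨rfl, rfl⟩ := Prod.mk.inj ((hzu _ hu₁).trans (hzu _ hu₂).symm)
  exact ⟨rfl, fun x hx => (hψ₁ x hx).trans (hψ₂ x hx).symm⟩

end
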